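/- arXiv:2404.09295 — 3 statements merged into one kernel-verified Lean document; each statement's English description precedes it below -/
import Mathlib

section
/- For every ε > 0 there exists a constant C = C(ε) such that the following holds. Let p be a prime, let a, b be integers with p ∤ ab, let K, M, N ≥ 1 be real numbers, and let U ≥ 1 be a real number. Then the number of 8-tuples of positive integers (k, k̃, m, m̃, n, ñ, u, ũ) with k, k̃ ≤ K, m, m̃ ≤ M, n, ñ ≤ N, U < u, ũ ≤ 2U, satisfying the congruence (a·k + b·m·n)·ñ·ũ ≡ (a·k̃ + b·m̃·ñ)·n·u (mod p) with (a·k + b·m·n)·ñ·ũ ≢ 0 (mod p), is at most C · p^ε · K·M·U·(K + N)·(1 + (|a|·K + |b|·M·N)·U·N/p). -/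
open Finset

lemma div_bound (δ : ℝ) (hδ : 0 < δ) : ∃ C : ℝ, 1 ≤ C ∧ ∀ n : ℕ, n ≠ 0 →
    (#n.divisors : ℝ) ≤ C * (n : ℝ) ^ δ := by
  obtain ⟨P0, hP0⟩ := exists_nat_ge ((2 : ℝ) ^ (1 / δ))
  have hl2 : 0 < Real.log 2 := Real.log_pos (by norm_num)
  set C0 : ℝ := max 1 (1 / (δ * Real.log 2)) with hC0
  have hC1 : 1 ≤ C0 := le_max_left _ _
  have hC2 : 1 ≤ C0 * (δ * Real.log 2) := by
    have : 1 / (δ * Real.log 2) ≤ C0 := le_max_right _ _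
    rwa [div_le_iff₀ (by positivity)] at this
  refine ⟨C0 ^ P0, one_le_pow₀ hC1, fun n hn => ?_⟩
  have key : ∀ q ∈ n.primeFactors, ((n.factorization q + 1 : ℕ) : ℝ) ≤
      (if q < P0 then C0 else 1) * ((q : ℝ) ^ (n.factorization q)) ^ δ := by
    intro q hq
    have hqp := Nat.prime_of_mem_primeFactors hq
    have hq2 : (2 : ℝ) ≤ q := by exact_mod_cast hqp.two_le
    set e := n.factorization q
    split_ifs with h
    · have h1 : ((2 : ℝ) ^ e) ^ δ ≤ ((q : ℝ) ^ e) ^ δ := by gcongr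
      have h2 : ((2 : ℝ) ^ e) ^ δ = Real.exp (e * δ * Real.log 2) := by
        rw [← Real.rpow_natCast, ← Real.rpow_mul (by norm_num), Real.rpow_def_of_pos (by norm_num)]
        ring_nf
      have h3 := Real.add_one_le_exp (e * δ * Real.log 2)
      have h4 : ((e + 1 : ℕ) : ℝ) ≤ C0 * (e * δ * Real.log 2 + 1) := by
        push_cast
        have : (e : ℝ) * 1 ≤ e * (C0 * (δ * Real.log 2)) := by gcongr
        nlinarith
      refine h4.trans ?_
      have : e * δ * Real.log 2 + 1 ≤ ((q : ℝ) ^ e) ^ δ := by linarith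
      gcongr
    · have h0 : (2 : ℝ) ≤ (q : ℝ) ^ δ := by
        have : (2 : ℝ) ^ (1 / δ) ≤ q := hP0.trans (by exact_mod_cast not_lt.mp h)
        have h5 : ((2 : ℝ) ^ (1 / δ)) ^ δ ≤ (q : ℝ) ^ δ := by gcongr
        rwa [← Real.rpow_mul (by norm_num), one_div_mul_cancel hδ.ne', Real.rpow_one] at h5
      have h1 : ((q : ℝ) ^ e) ^ δ = ((q : ℝ) ^ δ) ^ e := by
        rw [← Real.rpow_natCast, ← Real.rpow_natCast, ← Real.rpow_mul (by positivity),
          ← Real.rpow_mul (by positivity), mul_comm]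
      rw [one_mul, h1]
      calc ((e + 1 : ℕ) : ℝ) ≤ ((2 ^ e : ℕ) : ℝ) := by
            exact_mod_cast Nat.lt_two_pow_self
        _ = (2 : ℝ) ^ e := by push_cast; rfl
        _ ≤ _ := by gcongr
  rw [Nat.card_divisors hn]
  have hn2 : (n : ℝ) ^ δ = ∏ q ∈ n.primeFactors, ((q : ℝ) ^ (n.factorization q)) ^ δ := by
    rw [Real.finsetProd_rpow _ _ (fun i _ => by positivity)]
    congr 1
    conv_lhs => rw [← Nat.prod_factorization_pow_eq_self hn]
    rw [Finsupp.prod]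
    push_cast
    rfl
  rw [hn2]
  push_cast
  calc ∏ x ∈ n.primeFactors, ((n.factorization x : ℝ) + 1)
      ≤ ∏ q ∈ n.primeFactors, ((if q < P0 then C0 else 1) * ((q : ℝ) ^ (n.factorization q)) ^ δ) := by
        refine Finset.prod_le_prod (fun _ _ => by positivity) (fun q hq => ?_)
        have := key q hq
        push_cast at this
        exact this
    _ = (∏ q ∈ n.primeFactors, (if q < P0 then C0 else 1)) * _ := Finset.prod_mul_distrib
    _ ≤ _ := by
        gcongr
        rw [Finset.prod_ite, Finset.prod_const, Finset.prod_const_one, mul_one]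
        refine pow_le_pow_right₀ hC1 ?_
        calc _ ≤ #(Finset.range P0) := card_le_card (fun x hx => by simp at hx ⊢; exact hx.2)
          _ = P0 := by simp

lemma class_count {τ : Type*} (F : Finset τ) (g : τ → ℕ) (A B d : ℕ) (hd : 0 < d) (hAB : A ≤ B)
    (hg : ∀ x ∈ F, g x ∈ Ioc A B) (hinj : Set.InjOn g F)
    (hmod : ∀ x ∈ F, ∀ y ∈ F, g x ≡ g y [MOD d]) :
    (#F : ℝ) ≤ ((B : ℝ) - A) / d + 1 := by
  rcases F.eq_empty_or_nonempty with rfl | ⟨x0, hx0⟩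
  · simp only [card_empty, Nat.cast_zero]
    have : (0 : ℝ) ≤ (B : ℝ) - A := by
      rw [sub_nonneg]; exact_mod_cast hAB
    positivity
  have h1 : #F ≤ #{x ∈ Ioc A B | x ≡ g x0 [MOD d]} := by
    refine card_le_card_of_injOn g (fun x hx => ?_) hinj
    simp only [coe_filter, Set.mem_ofPred_eq]
    exact ⟨hg x hx, hmod x hx x0 hx0⟩
  have h2 := Nat.Ioc_filter_modEq_card A B hd (g x0)
  have h3 : ((#F : ℕ) : ℝ) ≤ (#{x ∈ Ioc A B | x ≡ g x0 [MOD d]} : ℕ) := by exact_mod_cast h1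
  refine h3.trans ?_
  have hAB' : (A : ℝ) ≤ B := by exact_mod_cast hAB
  have hd' : (0 : ℝ) < d := by exact_mod_cast hd
  have h4 : ((#{x ∈ Ioc A B | x ≡ g x0 [MOD d]} : ℤ) : ℚ) ≤ ((B : ℚ) - A) / d + 1 := by
    rw [h2]
    have hAB'' : (A : ℚ) ≤ B := by exact_mod_cast hAB
    have hd'' : (0 : ℚ) < d := by exact_mod_cast hd
    push_cast
    refine max_le ?_ ?_
    · have := Int.floor_le (((B : ℚ) - g x0) / d)
      have := Int.lt_floor_add_one (((A : ℚ) - g x0) / d)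
      have e : ((B : ℚ) - A) / d = (B - g x0) / d - (A - g x0) / d := by ring
      rw [e]
      linarith
    · have : 0 ≤ ((B : ℚ) - A) / d := div_nonneg (by linarith) hd''.le
      linarith
  have h5 : (((#{x ∈ Ioc A B | x ≡ g x0 [MOD d]} : ℤ) : ℚ) : ℝ) ≤ ((((B : ℚ) - A) / d + 1 : ℚ) : ℝ) := by
    exact_mod_cast h4
  push_cast at h5
  exact h5

lemma gcd_sum (a N : ℕ) (ha : a ≠ 0) :
    ∑ n ∈ Icc 1 N, ((Nat.gcd a n : ℝ) / n) ≤ #a.divisors * (1 + Real.log N) := by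
  have h1 : ∀ n ∈ Icc 1 N, ((Nat.gcd a n : ℝ) / n) ≤
      ∑ d ∈ a.divisors, if d ∣ n then (d : ℝ) / n else 0 := by
    intro n hn
    have : (Nat.gcd a n : ℝ) / n = if (Nat.gcd a n) ∣ n then ((Nat.gcd a n : ℕ) : ℝ) / n else 0 := by
      rw [if_pos (Nat.gcd_dvd_right a n)]
    rw [this]
    refine Finset.single_le_sum (f := fun d : ℕ => if d ∣ n then (d : ℝ) / n else 0) (fun i _ => ?_) ?_
    · split_ifs <;> positivity
    · simp [ha, Nat.gcd_dvd_left]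
  refine (Finset.sum_le_sum h1).trans ?_
  rw [Finset.sum_comm, ← nsmul_eq_mul]
  refine Finset.sum_le_card_nsmul _ _ _ (fun d hd => ?_)
  have hd0 : 0 < d := Nat.pos_of_mem_divisors hd
  have h2 : ∑ n ∈ Icc 1 N, (if d ∣ n then (d : ℝ) / n else 0) ≤ ∑ j ∈ Icc 1 N, ((j : ℝ))⁻¹ := by
    rw [← Finset.sum_filter]
    have h3 : ∑ n ∈ Icc 1 N with d ∣ n, (d : ℝ) / n =
        ∑ j ∈ ({n ∈ Icc 1 N | d ∣ n}).image (fun n => n / d), ((j : ℝ))⁻¹ := by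
      rw [Finset.sum_image]
      · refine Finset.sum_congr rfl (fun n hn => ?_)
        obtain ⟨-, e, rfl⟩ := by simpa using hn
        have : (d : ℝ) ≠ 0 := by exact_mod_cast hd0.ne'
        rw [Nat.mul_div_cancel_left _ hd0]
        push_cast
        rw [← div_div, div_self this, one_div]
      · intro x hx y hy hxy
        have hx2 := (mem_filter.mp hx).2
        have hy2 := (mem_filter.mp hy).2
        exact Nat.div_left_inj hx2 hy2 |>.mp hxy
    rw [h3]
    refine Finset.sum_le_sum_of_subset_of_nonneg ?_ (fun _ _ _ => by positivity)
    intro j hj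
    simp only [mem_image, mem_filter, mem_Icc] at hj ⊢
    obtain ⟨n, ⟨⟨h1, h2⟩, e, rfl⟩, rfl⟩ := hj
    rw [Nat.mul_div_cancel_left _ hd0]
    constructor
    · rcases Nat.eq_zero_or_pos e with rfl | h
      · simp at h1
      · exact h
    · nlinarith
  refine h2.trans ?_
  have := harmonic_le_one_add_log N
  rw [harmonic_eq_sum_Icc] at this
  push_cast at this
  exact this

open Classical in
lemma fiber_le {α β : Type*} (s : Finset α) (t : Finset β) (f : α → β)
    (hf : ∀ x ∈ s, f x ∈ t) (c : β → ℝ)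
    (hc : ∀ y ∈ t, ∀ F : Finset α, F ⊆ s → (∀ x ∈ F, f x = y) → (#F : ℝ) ≤ c y) :
    (#s : ℝ) ≤ ∑ y ∈ t, c y := by
  rw [card_eq_sum_card_fiberwise (f := f) (t := t) (fun x hx => hf x hx)]
  push_cast
  exact Finset.sum_le_sum (fun y hy => hc y hy _ (filter_subset _ _) (fun x hx => (mem_filter.mp hx).2))

open Classical in
noncomputable def Sol (p : ℕ) (a b : ℤ) (k0 m0 n0 u1 u2 : ℕ) :
    Finset (ℕ × ℕ × ℕ × ℕ × ℕ × ℕ × ℕ × ℕ) :=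
  (Icc 1 k0 ×ˢ Icc 1 k0 ×ˢ Icc 1 m0 ×ˢ Icc 1 m0 ×ˢ Icc 1 n0 ×ˢ Icc 1 n0 ×ˢ Ioc u1 u2 ×ˢ Ioc u1 u2).filter
    fun (k, k', m, m', n, n', u, u') =>
      ((a * k + b * m * n) * n' * u' ≡ (a * k' + b * m' * n') * n * u [ZMOD (p : ℤ)]) ∧
              ¬ ((a * k + b * m * n) * n' * u' ≡ 0 [ZMOD (p : ℤ)])

open Classical in
lemma sum_eq (p : ℕ) (a b : ℤ) (k0 m0 n0 u1 u2 : ℕ) :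
    (∑ k ∈ Icc 1 k0, ∑ k' ∈ Icc 1 k0, ∑ m ∈ Icc 1 m0, ∑ m' ∈ Icc 1 m0,
        ∑ n ∈ Icc 1 n0, ∑ n' ∈ Icc 1 n0,
        ∑ u ∈ Ioc u1 u2, ∑ u' ∈ Ioc u1 u2,
          if ((a * k + b * m * n) * n' * u' ≡ (a * k' + b * m' * n') * n * u [ZMOD (p : ℤ)]) ∧
              ¬ ((a * k + b * m * n) * n' * u' ≡ 0 [ZMOD (p : ℤ)]) then (1 : ℝ)
          else 0) = (#(Sol p a b k0 m0 n0 u1 u2) : ℝ) := by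
  rw [Sol, card_filter]
  push_cast
  simp only [sum_product]

lemma mem_Sol {p : ℕ} {a b : ℤ} {k0 m0 n0 u1 u2 : ℕ} {k k' m m' n n' u u' : ℕ} :
    (k, k', m, m', n, n', u, u') ∈ Sol p a b k0 m0 n0 u1 u2 ↔
    ((1 ≤ k ∧ k ≤ k0) ∧ (1 ≤ k' ∧ k' ≤ k0) ∧ (1 ≤ m ∧ m ≤ m0) ∧ (1 ≤ m' ∧ m' ≤ m0) ∧
     (1 ≤ n ∧ n ≤ n0) ∧ (1 ≤ n' ∧ n' ≤ n0) ∧ (u1 < u ∧ u ≤ u2) ∧ (u1 < u' ∧ u' ≤ u2)) ∧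
    (p : ℤ) ∣ (a * k' + b * m' * n') * n * u - (a * k + b * m * n) * n' * u' ∧
      ¬ (p : ℤ) ∣ (a * k + b * m * n) * n' * u' := by
  simp only [Sol, mem_filter, mem_product, mem_Icc, mem_Ioc, Int.modEq_iff_dvd]
  rw [zero_sub, dvd_neg]

lemma cancel {p : ℕ} (hp : p.Prime) {c : ℤ} (hc : ¬ (p : ℤ) ∣ c) {x y : ℕ}
    (h : (p : ℤ) ∣ c * ((x : ℤ) - y)) : x ≡ y [MOD p] := by
  have := ((Nat.prime_iff_prime_int.mp hp).dvd_mul.mp h).resolve_left hc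
  exact (Nat.modEq_iff_dvd.mpr (by simpa using this)).symm

lemma cop {p : ℕ} {a b : ℤ} {k k' m m' n n' u u' : ℤ} 
    (h1 : (p : ℤ) ∣ (a * k' + b * m' * n') * n * u - (a * k + b * m * n) * n' * u')
    (h2 : ¬ (p : ℤ) ∣ (a * k + b * m * n) * n' * u') :
    ¬ (p : ℤ) ∣ n ∧ ¬ (p : ℤ) ∣ n' ∧ ¬ (p : ℤ) ∣ u ∧ ¬ (p : ℤ) ∣ u' ∧ 
     ¬ (p : ℤ) ∣ (a * k + b * m * n) := by
  have h3 : ¬ (p : ℤ) ∣ (a * k' + b * m' * n') * n * u := fun h => h2 ((dvd_sub_right h).mp h1)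
  refine ⟨fun h => h3 ?_, fun h => h2 ?_, fun h => h3 ?_, fun h => h2 ?_, fun h => h2 ?_⟩
  · exact Dvd.dvd.mul_right (Dvd.dvd.mul_left h _) _
  · exact Dvd.dvd.mul_right (Dvd.dvd.mul_left h _) _
  · exact Dvd.dvd.mul_left h _
  · exact Dvd.dvd.mul_left h _
  · exact Dvd.dvd.mul_right (Dvd.dvd.mul_right h _) _

lemma nd_mul {p : ℕ} (hp : p.Prime) {x y : ℤ} (hx : ¬ (p : ℤ) ∣ x) (hy : ¬ (p : ℤ) ∣ y) :
    ¬ (p : ℤ) ∣ x * y := fun h => ((Nat.prime_iff_prime_int.mp hp).dvd_mul.mp h).elim hx hy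

lemma triv_k (p : ℕ) (hp : p.Prime) (a b : ℤ) (ha : ¬ (p : ℤ) ∣ a) (k0 m0 n0 u1 u2 : ℕ) :
    (#(Sol p a b k0 m0 n0 u1 u2) : ℝ) ≤ (k0 * m0 * m0 * n0 * n0 * (u2 - u1 : ℕ) * (u2 - u1 : ℕ)) *
      ((k0 : ℝ) / p + 1) := by
  refine (fiber_le (Sol p a b k0 m0 n0 u1 u2)
    (Icc 1 k0 ×ˢ Icc 1 m0 ×ˢ Icc 1 m0 ×ˢ Icc 1 n0 ×ˢ Icc 1 n0 ×ˢ Ioc u1 u2 ×ˢ Ioc u1 u2)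
    (fun (_, k', m, m', n, n', u, u') => (k', m, m', n, n', u, u')) ?_ (fun _ => (k0 : ℝ) / p + 1) ?_).trans ?_
  · rintro ⟨k, k', m, m', n, n', u, u'⟩ hx
    rw [mem_Sol] at hx
    simp only [mem_product, mem_Icc, mem_Ioc]
    tauto
  · rintro ⟨k', m, m', n, n', u, u'⟩ - F hF hFy
    refine (class_count _ (fun x => x.1) 0 k0 p hp.pos (Nat.zero_le _) ?_ ?_ ?_).trans ?_
    rotate_left 3
    · simp
    · rintro ⟨k, k', m, m', n, n', u, u'⟩ hx
      have hx := mem_Sol.mp (hF hx)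
      simp only [mem_Ioc]
      omega
    · rintro ⟨x1, x2, x3, x4, x5, x6, x7, x8⟩ hx ⟨y1, y2, y3, y4, y5, y6, y7, y8⟩ hy h
      have hx := hFy _ hx
      have hy := hFy _ hy
      simp only [Prod.mk.injEq] at hx hy h ⊢
      omega
    · rintro ⟨x1, x2, x3, x4, x5, x6, x7, x8⟩ hx ⟨y1, y2, y3, y4, y5, y6, y7, y8⟩ hy
      have hx1 := hF hx
      have hx := hFy _ hx
      have hy1 := hF hy
      have hy := hFy _ hy
      simp only [Prod.mk.injEq] at hx hy ⊢
      obtain ⟨rfl, rfl, rfl, rfl, rfl, rfl, rfl⟩ := hx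
      obtain ⟨rfl, rfl, rfl, rfl, rfl, rfl, rfl⟩ := hy
      obtain ⟨-, hx1, hx2⟩ := mem_Sol.mp hx1
      obtain ⟨-, hy1, hy2⟩ := mem_Sol.mp hy1
      obtain ⟨c1, c2, c3, c4, c5⟩ := cop hx1 hx2
      refine cancel hp (c := a * y6 * y8) (nd_mul hp (nd_mul hp ha c2) c4) ?_
      have := dvd_sub hy1 hx1
      ring_nf at this ⊢
      exact this
  · rw [sum_const, nsmul_eq_mul]
    simp only [card_product, Nat.card_Icc, Nat.card_Ioc]
    refine le_of_eq ?_
    push_cast [Nat.add_sub_cancel]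
    ring

lemma triv_m (p : ℕ) (hp : p.Prime) (a b : ℤ) (hb : ¬ (p : ℤ) ∣ b) (k0 m0 n0 u1 u2 : ℕ) :
    (#(Sol p a b k0 m0 n0 u1 u2) : ℝ) ≤ (k0 * k0 * m0 * n0 * n0 * (u2 - u1 : ℕ) * (u2 - u1 : ℕ)) *
      ((m0 : ℝ) / p + 1) := by
  refine (fiber_le (Sol p a b k0 m0 n0 u1 u2)
    (Icc 1 k0 ×ˢ Icc 1 k0 ×ˢ Icc 1 m0 ×ˢ Icc 1 n0 ×ˢ Icc 1 n0 ×ˢ Ioc u1 u2 ×ˢ Ioc u1 u2)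
    (fun (k, k', _, m', n, n', u, u') => (k, k', m', n, n', u, u')) ?_ (fun _ => (m0 : ℝ) / p + 1) ?_).trans ?_
  · rintro ⟨k, k', m, m', n, n', u, u'⟩ hx
    rw [mem_Sol] at hx
    simp only [mem_product, mem_Icc, mem_Ioc]
    tauto
  · rintro ⟨k, k', m', n, n', u, u'⟩ - F hF hFy
    refine (class_count _ (fun x => x.2.2.1) 0 m0 p hp.pos (Nat.zero_le _) ?_ ?_ ?_).trans ?_
    rotate_left 3
    · simp
    · rintro ⟨k, k', m, m', n, n', u, u'⟩ hx
      have hx := mem_Sol.mp (hF hx)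
      simp only [mem_Ioc]
      omega
    · rintro ⟨x1, x2, x3, x4, x5, x6, x7, x8⟩ hx ⟨y1, y2, y3, y4, y5, y6, y7, y8⟩ hy h
      have hx := hFy _ hx
      have hy := hFy _ hy
      simp only [Prod.mk.injEq] at hx hy h ⊢
      omega
    · rintro ⟨x1, x2, x3, x4, x5, x6, x7, x8⟩ hx ⟨y1, y2, y3, y4, y5, y6, y7, y8⟩ hy
      have hx1 := hF hx
      have hx := hFy _ hx
      have hy1 := hF hy
      have hy := hFy _ hy
      simp only [Prod.mk.injEq] at hx hy ⊢
      obtain ⟨rfl, rfl, rfl, rfl, rfl, rfl, rfl⟩ := hx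
      obtain ⟨rfl, rfl, rfl, rfl, rfl, rfl, rfl⟩ := hy
      obtain ⟨-, hx1, hx2⟩ := mem_Sol.mp hx1
      obtain ⟨-, hy1, hy2⟩ := mem_Sol.mp hy1
      obtain ⟨c1, c2, c3, c4, c5⟩ := cop hx1 hx2
      refine cancel hp (c := b * y5 * y6 * y8) (nd_mul hp (nd_mul hp (nd_mul hp hb c1) c2) c4) ?_
      have := dvd_sub hy1 hx1
      ring_nf at this ⊢
      exact this
  · rw [sum_const, nsmul_eq_mul]
    simp only [card_product, Nat.card_Icc, Nat.card_Ioc]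
    refine le_of_eq ?_
    push_cast [Nat.add_sub_cancel]
    ring

lemma triv_u (p : ℕ) (hp : p.Prime) (a b : ℤ) (k0 m0 n0 u1 u2 : ℕ) (hu : u1 ≤ u2) :
    (#(Sol p a b k0 m0 n0 u1 u2) : ℝ) ≤ (k0 * k0 * m0 * m0 * n0 * n0 * (u2 - u1 : ℕ)) *
      (((u2 : ℝ) - u1) / p + 1) := by
  refine (fiber_le (Sol p a b k0 m0 n0 u1 u2)
    (Icc 1 k0 ×ˢ Icc 1 k0 ×ˢ Icc 1 m0 ×ˢ Icc 1 m0 ×ˢ Icc 1 n0 ×ˢ Icc 1 n0 ×ˢ Ioc u1 u2)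
    (fun (k, k', m, m', n, n', u, _) => (k, k', m, m', n, n', u)) ?_ (fun _ => ((u2 : ℝ) - u1) / p + 1) ?_).trans ?_
  · rintro ⟨k, k', m, m', n, n', u, u'⟩ hx
    rw [mem_Sol] at hx
    simp only [mem_product, mem_Icc, mem_Ioc]
    tauto
  · rintro ⟨k, k', m, m', n, n', u⟩ - F hF hFy
    refine (class_count _ (fun x => x.2.2.2.2.2.2.2) u1 u2 p hp.pos hu ?_ ?_ ?_).trans ?_
    rotate_left 3
    · simp
    · rintro ⟨k, k', m, m', n, n', u, u'⟩ hx
      have hx := mem_Sol.mp (hF hx)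
      simp only [mem_Ioc]
      omega
    · rintro ⟨x1, x2, x3, x4, x5, x6, x7, x8⟩ hx ⟨y1, y2, y3, y4, y5, y6, y7, y8⟩ hy h
      have hx := hFy _ hx
      have hy := hFy _ hy
      simp only [Prod.mk.injEq] at hx hy h ⊢
      omega
    · rintro ⟨x1, x2, x3, x4, x5, x6, x7, x8⟩ hx ⟨y1, y2, y3, y4, y5, y6, y7, y8⟩ hy
      have hx1 := hF hx
      have hx := hFy _ hx
      have hy1 := hF hy
      have hy := hFy _ hy
      simp only [Prod.mk.injEq] at hx hy ⊢
      obtain ⟨rfl, rfl, rfl, rfl, rfl, rfl, rfl⟩ := hx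
      obtain ⟨rfl, rfl, rfl, rfl, rfl, rfl, rfl⟩ := hy
      obtain ⟨-, hx1, hx2⟩ := mem_Sol.mp hx1
      obtain ⟨-, hy1, hy2⟩ := mem_Sol.mp hy1
      obtain ⟨c1, c2, c3, c4, c5⟩ := cop hx1 hx2
      refine cancel hp (c := (a * y1 + b * y3 * y5) * y6) (nd_mul hp c5 c2) ?_
      have := dvd_sub hy1 hx1
      ring_nf at this ⊢
      exact this
  · rw [sum_const, nsmul_eq_mul]
    simp only [card_product, Nat.card_Icc, Nat.card_Ioc]
    refine le_of_eq ?_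
    push_cast [Nat.add_sub_cancel]
    ring

lemma triv_n (p : ℕ) (hp : p.Prime) (a b : ℤ) (ha : ¬ (p : ℤ) ∣ a) (k0 m0 n0 u1 u2 : ℕ) (hk : k0 < p) :
    (#(Sol p a b k0 m0 n0 u1 u2) : ℝ) ≤ (k0 * k0 * m0 * m0 * n0 * (u2 - u1 : ℕ) * (u2 - u1 : ℕ)) *
      ((n0 : ℝ) / p + 1) := by
  refine (fiber_le (Sol p a b k0 m0 n0 u1 u2)
    (Icc 1 k0 ×ˢ Icc 1 k0 ×ˢ Icc 1 m0 ×ˢ Icc 1 m0 ×ˢ Icc 1 n0 ×ˢ Ioc u1 u2 ×ˢ Ioc u1 u2)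
    (fun (k, k', m, m', n, _, u, u') => (k, k', m, m', n, u, u')) ?_ (fun _ => (n0 : ℝ) / p + 1) ?_).trans ?_
  · rintro ⟨k, k', m, m', n, n', u, u'⟩ hx
    rw [mem_Sol] at hx
    simp only [mem_product, mem_Icc, mem_Ioc]
    tauto
  · rintro ⟨k, k', m, m', n, u, u'⟩ - F hF hFy
    refine (class_count _ (fun x => x.2.2.2.2.2.1) 0 n0 p hp.pos (Nat.zero_le _) ?_ ?_ ?_).trans ?_
    rotate_left 3
    · simp
    · rintro ⟨k, k', m, m', n, n', u, u'⟩ hx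
      have hx := mem_Sol.mp (hF hx)
      simp only [mem_Ioc]
      omega
    · rintro ⟨x1, x2, x3, x4, x5, x6, x7, x8⟩ hx ⟨y1, y2, y3, y4, y5, y6, y7, y8⟩ hy h
      have hx := hFy _ hx
      have hy := hFy _ hy
      simp only [Prod.mk.injEq] at hx hy h ⊢
      omega
    · rintro ⟨x1, x2, x3, x4, x5, x6, x7, x8⟩ hx ⟨y1, y2, y3, y4, y5, y6, y7, y8⟩ hy
      have hx1 := hF hx
      have hx := hFy _ hx
      have hy1 := hF hy
      have hy := hFy _ hy
      simp only [Prod.mk.injEq] at hx hy ⊢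
      obtain ⟨rfl, rfl, rfl, rfl, rfl, rfl, rfl⟩ := hx
      obtain ⟨rfl, rfl, rfl, rfl, rfl, rfl, rfl⟩ := hy
      obtain ⟨hb, hx1, hx2⟩ := mem_Sol.mp hx1
      obtain ⟨-, hy1, hy2⟩ := mem_Sol.mp hy1
      obtain ⟨c1, c2, c3, c4, c5⟩ := cop hx1 hx2
      have ck : ¬ (p : ℤ) ∣ (y2 : ℤ) := by
        rw [Int.natCast_dvd_natCast]
        exact Nat.not_dvd_of_pos_of_lt (by omega) (by omega)
      refine cancel hp (c := (a * y1 + b * y3 * y5) * y8 - b * y4 * y5 * y7) ?_ ?_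
      · intro h
        refine nd_mul hp (nd_mul hp (nd_mul hp ha ck) c1) c3 ?_
        have := dvd_add hx1 (Dvd.dvd.mul_left h (x6 : ℤ))
        ring_nf at this ⊢
        exact this
      · have := dvd_sub hy1 hx1
        ring_nf at this ⊢
        exact this
  · rw [sum_const, nsmul_eq_mul]
    simp only [card_product, Nat.card_Icc, Nat.card_Ioc]
    refine le_of_eq ?_
    push_cast [Nat.add_sub_cancel]
    ring

lemma lam_bound {a b : ℤ} {k0 m0 n0 u2 X : ℕ}
    (hX : (a.natAbs * k0 + b.natAbs * m0 * n0) * n0 * u2 ≤ X) {k m n n' u' : ℕ}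
    (hk : k ≤ k0) (hm : m ≤ m0) (hn : n ≤ n0) (hn' : n' ≤ n0) (hu' : u' ≤ u2) :
    |(a * k + b * m * n) * n' * u'| ≤ (X : ℤ) ∧ |a * k * n' * u'| ≤ (X : ℤ) := by
  have h1 : (a.natAbs * k + b.natAbs * m * n) * n' * u' ≤ X := le_trans (by gcongr) hX
  have h2 : (a.natAbs * k) * n' * u' ≤ X := le_trans (by gcongr; omega) h1
  constructor
  · calc |(a * k + b * m * n) * n' * u'| = |a * k + b * m * n| * n' * u' := by
          rw [abs_mul, abs_mul, Nat.abs_cast, Nat.abs_cast]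
      _ ≤ (|a * k| + |b * m * n|) * n' * u' := by gcongr; exact abs_add_le _ _
      _ = (|a| * k + |b| * m * n) * n' * u' := by
          rw [abs_mul, abs_mul, abs_mul, Nat.abs_cast, Nat.abs_cast, Nat.abs_cast]
      _ = (((a.natAbs * k + b.natAbs * m * n) * n' * u' : ℕ) : ℤ) := by
          push_cast; rfl
      _ ≤ X := by exact_mod_cast h1
  · calc |a * k * n' * u'| = |a| * k * n' * u' := by
          rw [abs_mul, abs_mul, abs_mul, Nat.abs_cast, Nat.abs_cast, Nat.abs_cast]
      _ = (((a.natAbs * k) * n' * u' : ℕ) : ℤ) := by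
          push_cast; rfl
      _ ≤ X := by exact_mod_cast h2

lemma main_count (p : ℕ) (hp : p.Prime) (a b : ℤ) (ha : ¬ (p : ℤ) ∣ a) (hb : b ≠ 0)
    (k0 m0 n0 u1 u2 X : ℕ) (hk0 : k0 < p)
    (hX : (a.natAbs * k0 + b.natAbs * m0 * n0) * n0 * u2 ≤ X) (D : ℝ) (hD0 : 0 ≤ D)
    (hD : ∀ z : ℕ, z ≠ 0 → z ≤ 3 * X → (#z.divisors : ℝ) ≤ D) :
    (#(Sol p a b k0 m0 n0 u1 u2) : ℝ) ≤ k0 * m0 * (u2 - u1 : ℕ) * (4 * X / p + 1) * (D * D) *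
      ∑ n' ∈ Icc 1 n0, ((k0 : ℝ) * ((Nat.gcd a.natAbs n' : ℝ) / n') + 1) := by
  set T : ℤ := ((2 * X / p : ℕ) : ℤ) with hT
  have hpz : (0 : ℤ) < p := by exact_mod_cast hp.pos
  set c : ℕ → ℝ := fun n' => (k0 : ℝ) * ((Nat.gcd a.natAbs n' : ℝ) / n') + 1 with hc
  refine (fiber_le (Sol p a b k0 m0 n0 u1 u2)
    (Icc 1 k0 ×ˢ Icc 1 m0 ×ˢ Ioc u1 u2 ×ˢ Icc (-T) T ×ˢ Icc 1 n0)
    (fun (k, k', m, m', n, n', u, u') => (k, m, u',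
      ((a * k' + b * m' * n') * n * u - (a * k + b * m * n) * n' * u') / (p : ℤ), n'))
      ?_ (fun y => D * D * c y.2.2.2.2) ?_).trans ?_
  · rintro ⟨k, k', m, m', n, n', u, u'⟩ hx
    rw [mem_Sol] at hx
    obtain ⟨⟨h1, h2, h3, h4, h5, h6, h7, h8⟩, ⟨t, ht⟩, -⟩ := hx
    simp only [mem_product, mem_Icc, mem_Ioc]
    refine ⟨h1, h3, h8, ?_, h6⟩
    rw [ht, Int.mul_ediv_cancel_left _ hpz.ne', ← abs_le, Int.abs_eq_natAbs, hT, Nat.cast_le,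
      Nat.le_div_iff_mul_le hp.pos]
    have e1 := (lam_bound hX h1.2 h3.2 h5.2 h6.2 h8.2).1
    have e2 := (lam_bound hX h2.2 h4.2 h6.2 h5.2 h7.2).1
    have e3 := abs_sub ((a * k' + b * m' * n') * n * u) ((a * k + b * m * n) * n' * u')
    rw [ht, abs_mul, Nat.abs_cast] at e3
    zify
    linarith
  · rintro ⟨k, m, u', t, n'⟩ hy F hF hFy
    simp only [mem_product, mem_Icc, mem_Ioc] at hy
    obtain ⟨hk, hm, hu', ht, hn'⟩ := hy
    have hc0 : 0 ≤ c n' := by positivity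
    rcases F.eq_empty_or_nonempty with rfl | ⟨⟨x1, x2, x3, x4, x5, x6, x7, x8⟩, hx0⟩
    · simp only [card_empty, Nat.cast_zero]; positivity
    have htX : |(p : ℤ) * t| ≤ 2 * X := by
      rw [← abs_le, hT] at ht
      rw [abs_mul, Nat.abs_cast]
      calc (p : ℤ) * |t| ≤ p * ((2 * X / p : ℕ) : ℤ) := by gcongr
        _ = ((p * (2 * X / p) : ℕ) : ℤ) := by push_cast; rfl
        _ ≤ ((2 * X : ℕ) : ℤ) := by exact_mod_cast Nat.mul_div_le _ _
        _ = 2 * X := by push_cast; rfl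
    -- characterization of the members of F
    have hmem : ∀ x1 x2 x3 x4 x5 x6 x7 x8 : ℕ, (x1, x2, x3, x4, x5, x6, x7, x8) ∈ F →
        x1 = k ∧ x3 = m ∧ x8 = u' ∧ x6 = n' ∧ (1 ≤ x2 ∧ x2 ≤ k0) ∧ (1 ≤ x5 ∧ x5 ≤ n0) ∧ u1 < x7 ∧
        (a * x2 + b * x4 * n') * x5 * x7 = (a * k + b * m * x5) * n' * u' + p * t ∧
        ¬ (p : ℤ) ∣ (a * k + b * m * x5) * n' * u' := by
      intro x1 x2 x3 x4 x5 x6 x7 x8 hx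
      obtain ⟨⟨h1, h2, h3, h4, h5, h6, h7, h8⟩, h9, h10⟩ := mem_Sol.mp (hF hx)
      have := hFy _ hx
      simp only [Prod.mk.injEq] at this
      obtain ⟨rfl, rfl, rfl, rfl, rfl⟩ := this
      refine ⟨rfl, rfl, rfl, rfl, h2, h5, h7.1, ?_, h10⟩
      rw [Int.mul_ediv_cancel' h9]
      ring
    have hne : a * k * n' * u' + p * t ≠ 0 := by
      obtain ⟨-, -, -, -, -, -, -, e, h10⟩ := hmem _ _ _ _ _ _ _ _ hx0
      have hpk : ¬ (p : ℤ) ∣ (k : ℤ) := by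
        rw [Int.natCast_dvd_natCast]
        exact Nat.not_dvd_of_pos_of_lt (by omega) (by omega)
      have hpn : ¬ (p : ℤ) ∣ (n' : ℤ) := fun h => h10 (Dvd.dvd.mul_right (Dvd.dvd.mul_left h _) _)
      have hpu : ¬ (p : ℤ) ∣ (u' : ℤ) := fun h => h10 (Dvd.dvd.mul_left h _)
      intro h
      refine nd_mul hp (nd_mul hp (nd_mul hp ha hpk) hpn) hpu ⟨-t, ?_⟩
      linarith
    have hle : (a * k * n' * u' + p * t).natAbs ≤ 3 * X := by
      have e := (lam_bound hX hk.2 hm.2 hn'.2 hn'.2 hu'.2).2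
      have := abs_add_le (a * k * n' * u') (p * t)
      zify
      linarith
    refine (fiber_le F (a * k * n' * u' + p * t).natAbs.divisors
      (fun (_, _, _, _, n, _, _, _) => n) ?_ (fun _ => D * c n') ?_).trans ?_
    · rintro ⟨x1, x2, x3, x4, x5, x6, x7, x8⟩ hx
      obtain ⟨-, -, -, -, -, -, -, e, -⟩ := hmem _ _ _ _ _ _ _ _ hx
      refine Nat.mem_divisors.mpr ⟨?_, by simpa using hne⟩
      rw [← Int.natCast_dvd]
      exact ⟨(a * x2 + b * x4 * n') * x7 - b * m * n' * u', by linear_combination -e⟩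
    · rintro n - G hG hGy
      rcases G.eq_empty_or_nonempty with rfl | ⟨⟨y1, y2, y3, y4, y5, y6, y7, y8⟩, hy0⟩
      · simp only [card_empty, Nat.cast_zero]; positivity
      have hyn := hGy _ hy0
      simp only at hyn
      subst hyn
      obtain ⟨-, -, -, -, -, hy5, -, e, h10⟩ := hmem _ _ _ _ _ _ _ _ (hG hy0)
      have hne2 : (a * k + b * m * y5) * n' * u' + p * t ≠ 0 := by
        intro h
        exact h10 ⟨-t, by linarith⟩
      have hle2 : ((a * k + b * m * y5) * n' * u' + p * t).natAbs ≤ 3 * X := by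
        have e := (lam_bound hX hk.2 hm.2 hy5.2 hn'.2 hu'.2).1
        have := abs_add_le ((a * k + b * m * y5) * n' * u') (p * t)
        zify
        linarith
      refine (fiber_le G ((a * k + b * m * y5) * n' * u' + p * t).natAbs.divisors
        (fun (_, _, _, _, _, _, u, _) => u) ?_ (fun _ => c n') ?_).trans ?_
      · rintro ⟨x1, x2, x3, x4, x5, x6, x7, x8⟩ hx
        obtain ⟨-, -, -, -, -, -, -, e', -⟩ := hmem _ _ _ _ _ _ _ _ (hG hx)
        have hx5 := hGy _ hx
        simp only at hx5
        subst hx5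
        refine Nat.mem_divisors.mpr ⟨?_, by simpa using hne2⟩
        rw [← Int.natCast_dvd]
        exact ⟨(a * x2 + b * x4 * n') * x5, by linear_combination -e'⟩
      · rintro u - H hH hHy
        have hmemH : ∀ x1 x2 x3 x4 x5 x6 x7 x8 : ℕ, (x1, x2, x3, x4, x5, x6, x7, x8) ∈ H →
          x1 = k ∧ x3 = m ∧ x8 = u' ∧ x6 = n' ∧ x5 = y5 ∧ x7 = u ∧ (1 ≤ x2 ∧ x2 ≤ k0) ∧ 0 < u ∧
          (a * x2 + b * x4 * n') * y5 * u = (a * k + b * m * y5) * n' * u' + p * t := by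
          intro x1 x2 x3 x4 x5 x6 x7 x8 hx
          obtain ⟨h1, h2, h3, h4, h5, h6, h7, h8, h9⟩ := hmem _ _ _ _ _ _ _ _ (hG (hH hx))
          have e1 := hGy _ (hH hx)
          have e2 := hHy _ hx
          simp only at e1 e2
          subst e1 e2
          exact ⟨h1, h2, h3, h4, rfl, rfl, h5, by omega, h8⟩
        have hpair : ∀ (x2 x4 z2 z4 : ℕ), 0 < u → 
            (a * x2 + b * x4 * n') * y5 * u = (a * k + b * m * y5) * n' * u' + p * t →
            (a * z2 + b * z4 * n') * y5 * u = (a * k + b * m * y5) * n' * u' + p * t →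
            a * x2 + b * x4 * n' = a * z2 + b * z4 * n' := by
          intro x2 x4 z2 z4 hu h1 h2
          have hu0 : (u : ℤ) ≠ 0 := by exact_mod_cast hu.ne'
          have hy0 : (y5 : ℤ) ≠ 0 := by
            have : y5 ≠ 0 := by omega
            exact_mod_cast this
          exact mul_right_cancel₀ hy0 (mul_right_cancel₀ hu0 (h1.trans h2.symm))
        have hn'0 : (n' : ℤ) ≠ 0 := by
          have : n' ≠ 0 := by omega
          exact_mod_cast this
        have hgd : Nat.gcd n' a.natAbs ∣ n' := Nat.gcd_dvd_left _ _
        have hgpos : 0 < Nat.gcd n' a.natAbs := Nat.gcd_pos_of_pos_left _ (by omega)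
        refine (class_count H (fun x => x.2.1) 0 k0 (n' / Nat.gcd n' a.natAbs)
          (Nat.div_pos (Nat.le_of_dvd (by omega) hgd) hgpos) (Nat.zero_le _) ?_ ?_ ?_).trans ?_
        · rintro ⟨x1, x2, x3, x4, x5, x6, x7, x8⟩ hx
          have := hmemH _ _ _ _ _ _ _ _ hx
          simp only [mem_Ioc]
          omega
        · rintro ⟨x1, x2, x3, x4, x5, x6, x7, x8⟩ hx ⟨z1, z2, z3, z4, z5, z6, z7, z8⟩ hz h
          obtain ⟨rfl, rfl, rfl, rfl, rfl, rfl, h5, hu0, h8⟩ := hmemH _ _ _ _ _ _ _ _ hx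
          obtain ⟨rfl, rfl, rfl, rfl, rfl, rfl, h5', -, h8'⟩ := hmemH _ _ _ _ _ _ _ _ hz
          simp only at h
          subst h
          have := hpair _ _ _ _ hu0 h8 h8'
          have h9 : b * x4 * z6 = b * z4 * z6 := by linarith
          have h10 : (x4 : ℤ) = z4 := mul_left_cancel₀ hb (mul_right_cancel₀ hn'0 h9)
          have h11 : x4 = z4 := by exact_mod_cast h10
          rw [h11]
        · rintro ⟨x1, x2, x3, x4, x5, x6, x7, x8⟩ hx ⟨z1, z2, z3, z4, z5, z6, z7, z8⟩ hz
          obtain ⟨rfl, rfl, rfl, rfl, rfl, rfl, h5, hu0, h8⟩ := hmemH _ _ _ _ _ _ _ _ hx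
          obtain ⟨rfl, rfl, rfl, rfl, rfl, rfl, h5', -, h8'⟩ := hmemH _ _ _ _ _ _ _ _ hz
          have := hpair _ _ _ _ hu0 h8 h8'
          refine Nat.ModEq.cancel_left_div_gcd (by omega) (?_ : a.natAbs * x2 ≡ a.natAbs * z2 [MOD z6])
          rw [Nat.modEq_iff_dvd]
          push_cast
          rw [← mul_sub]
          have h12 : (z6 : ℤ) ∣ a * ((z2 : ℤ) - x2) := ⟨b * (x4 - z4), by linear_combination -this⟩
          rw [← Int.dvd_natAbs, Int.natAbs_mul] at h12 ⊢
          simpa using h12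
        · rw [hc]
          simp only
          rw [Nat.cast_div hgd (by exact_mod_cast hgpos.ne'), Nat.gcd_comm]
          push_cast
          rw [sub_zero, div_div_eq_mul_div, mul_div_assoc]
      · rw [sum_const, nsmul_eq_mul]
        gcongr
        exact hD _ (by simpa using hne2) hle2
    · rw [sum_const, nsmul_eq_mul, mul_assoc D D]
      gcongr
      exact hD _ (by simpa using hne) hle
  · simp only [sum_product]
    simp only [← mul_sum, sum_const, nsmul_eq_mul, Nat.card_Icc, Nat.card_Ioc, Int.card_Icc]
    have hS : 0 ≤ ∑ n' ∈ Icc 1 n0, c n' := sum_nonneg (fun i _ => by positivity)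
    have hTc : (((T + 1 - -T).toNat : ℕ) : ℝ) ≤ 4 * X / p + 1 := by
      have e1 : (T + 1 - -T).toNat = 2 * (2 * X / p) + 1 := by omega
      rw [e1]
      have := @Nat.cast_div_le ℝ _ _ _ (2 * X) p
      push_cast at this ⊢
      have e2 : (4 : ℝ) * X / p = 2 * (2 * X / p) := by ring
      rw [e2]
      linarith
    calc _ = k0 * m0 * (u2 - u1 : ℕ) * (((T + 1 - -T).toNat : ℕ) : ℝ) * (D * D) *
        ∑ n' ∈ Icc 1 n0, c n' := by
          push_cast [Nat.add_sub_cancel]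
          ring
      _ ≤ _ := by gcongr

lemma reduced (ε : ℝ) (hε : 0 < ε) :
    ∃ C : ℝ, 8 ≤ C ∧ ∀ (p : ℕ), p.Prime →
      ∀ (a b : ℤ), ¬ ((p : ℤ) ∣ a) → ¬ ((p : ℤ) ∣ b) → a.natAbs ≤ p → b.natAbs ≤ p →
      ∀ (K M N U : ℝ), 1 ≤ K → 1 ≤ M → 1 ≤ N → 1 ≤ U → K < p → M < p → N < p → U < p →
      (#(Sol p a b ⌊K⌋₊ ⌊M⌋₊ ⌊N⌋₊ ⌊U⌋₊ ⌊2 * U⌋₊) : ℝ) ≤ 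
        C * (p : ℝ) ^ ε * (K * M * U * (K + N) *
          (1 + (|(a : ℝ)| * K + |(b : ℝ)| * M * N) * U * N / (p : ℝ))) := by
  set δ := ε / 20 with hδe
  have hδ : 0 < δ := by positivity
  obtain ⟨C, hC1, hC⟩ := div_bound δ hδ
  refine ⟨16 * C ^ 3 * (1 + 1 / δ), ?_, ?_⟩
  · have h1 : 1 ≤ C ^ 3 := one_le_pow₀ hC1
    have h2 : 0 < 1 / δ := by positivity
    nlinarith
  intro p hp a b ha hb hap hbp K M N U hK hM hN hU hKp hMp hNp hUp
  have hp0 : (0 : ℝ) < p := by exact_mod_cast hp.pos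
  have hp1 : (1 : ℝ) ≤ p := by exact_mod_cast hp.one_lt.le
  have hb0 : b ≠ 0 := by rintro rfl; simp at hb
  have ha0 : a ≠ 0 := by rintro rfl; simp at ha
  have hk0 : (⌊K⌋₊ : ℝ) ≤ K := Nat.floor_le (by linarith)
  have hm0 : (⌊M⌋₊ : ℝ) ≤ M := Nat.floor_le (by linarith)
  have hn0 : (⌊N⌋₊ : ℝ) ≤ N := Nat.floor_le (by linarith)
  have hu0 : (⌊2 * U⌋₊ : ℝ) ≤ 2 * U := Nat.floor_le (by linarith)
  have hn1 : 1 ≤ ⌊N⌋₊ := Nat.one_le_floor_iff _ |>.mpr hN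
  have hkp : ⌊K⌋₊ < p := by exact_mod_cast hk0.trans_lt hKp
  have hmp : ⌊M⌋₊ < p := by exact_mod_cast hm0.trans_lt hMp
  have hnp : ⌊N⌋₊ < p := by exact_mod_cast hn0.trans_lt hNp
  have hup : ⌊2 * U⌋₊ ≤ 2 * p := by
    have : (⌊2 * U⌋₊ : ℝ) ≤ 2 * p := by linarith
    exact_mod_cast this
  have hud : ((⌊2 * U⌋₊ - ⌊U⌋₊ : ℕ) : ℝ) ≤ 2 * U := by
    have : ((⌊2 * U⌋₊ - ⌊U⌋₊ : ℕ) : ℝ) ≤ (⌊2 * U⌋₊ : ℝ) := by exact_mod_cast Nat.sub_le _ _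
    linarith
  set k0 := ⌊K⌋₊
  set m0 := ⌊M⌋₊
  set n0 := ⌊N⌋₊
  set u1 := ⌊U⌋₊
  set u2 := ⌊2 * U⌋₊
  set X : ℕ := (a.natAbs * k0 + b.natAbs * m0 * n0) * n0 * u2 with hX
  set Y : ℝ := (|(a : ℝ)| * K + |(b : ℝ)| * M * N) * U * N with hY
  have hXY : (X : ℝ) ≤ 2 * Y := by
    rw [hX, hY]
    push_cast
    rw [Nat.cast_natAbs, Nat.cast_natAbs]
    push_cast
    calc (|(a : ℝ)| * k0 + |(b : ℝ)| * m0 * n0) * n0 * u2 ≤ (|(a : ℝ)| * K + |(b : ℝ)| * M * N) * N * (2 * U) := by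
          gcongr
      _ = _ := by ring
  have h3X : 3 * X ≤ p ^ 9 := by
    have h1 : X ≤ (p * p + p * p * p) * p * (2 * p) := by
      rw [hX]
      gcongr
    have h2 : 2 ^ 4 ≤ p ^ 4 := Nat.pow_le_pow_left hp.two_le 4
    calc 3 * X ≤ 3 * ((p * p * p + p * p * p) * p * (2 * p)) := by
          refine Nat.mul_le_mul_left _ (h1.trans ?_)
          gcongr
          exact Nat.le_mul_of_pos_left p hp.pos
      _ = p ^ 5 * 12 := by ring
      _ ≤ p ^ 5 * p ^ 4 := by gcongr; omega
      _ = p ^ 9 := by ring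
  have hpow : ∀ j : ℕ, ((p : ℝ) ^ j) ^ δ = ((p : ℝ) ^ δ) ^ j := fun j => by
    rw [← Real.rpow_natCast, ← Real.rpow_natCast, ← Real.rpow_mul (by positivity),
          ← Real.rpow_mul (by positivity), mul_comm]
  set q : ℝ := (p : ℝ) ^ δ with hq
  have hq1 : 1 ≤ q := Real.one_le_rpow hp1 hδ.le
  have hpe : (p : ℝ) ^ ε = q ^ 20 := by
    rw [hq, ← Real.rpow_natCast, ← Real.rpow_mul (by positivity)]
    congr 1
    rw [hδe]; push_cast; ring
  have hD : ∀ z : ℕ, z ≠ 0 → z ≤ 3 * X → (#z.divisors : ℝ) ≤ C * q ^ 9 := by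
    intro z hz hzX
    refine (hC z hz).trans ?_
    rw [← hpow]
    have : (z : ℝ) ≤ (p : ℝ) ^ 9 := by exact_mod_cast hzX.trans h3X
    gcongr
  have hmain := main_count p hp a b ha hb0 k0 m0 n0 u1 u2 X hkp le_rfl (C * q ^ 9) (by positivity) hD
  have hdiva : (#a.natAbs.divisors : ℝ) ≤ C * q := by
    refine (hC _ (by simpa using ha0)).trans ?_
    have : (a.natAbs : ℝ) ≤ p := by exact_mod_cast hap
    rw [hq]
    gcongr
  have hlog : 1 + Real.log n0 ≤ (1 + 1 / δ) * q := by
    have h1 : Real.log n0 ≤ Real.log p := by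
      apply Real.log_le_log
      · exact_mod_cast hn1
      · exact_mod_cast hnp.le
    have h2 := Real.log_le_rpow_div hp0.le hδ
    have h3 : (1 + 1 / δ) * q = q + (p : ℝ) ^ δ / δ := by rw [← hq]; ring
    rw [h3]
    linarith
  have hlog0 : 0 ≤ Real.log n0 := Real.log_natCast_nonneg _
  have hE1 : 1 ≤ C * q * ((1 + 1 / δ) * q) := by
    have : (1 : ℝ) ≤ 1 + 1 / δ := by
      have : 0 < 1 / δ := by positivity
      linarith
    exact one_le_mul_of_one_le_of_one_le (one_le_mul_of_one_le_of_one_le hC1 hq1)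
      (one_le_mul_of_one_le_of_one_le this hq1)
  have hsum : ∑ n' ∈ Icc 1 n0, ((k0 : ℝ) * ((Nat.gcd a.natAbs n' : ℝ) / n') + 1) ≤
      (K + N) * (C * q * ((1 + 1 / δ) * q)) := by
    rw [sum_add_distrib, ← mul_sum]
    have h1 := gcd_sum a.natAbs n0 (by simpa using ha0)
    have h2 : ∑ n ∈ Icc 1 n0, ((Nat.gcd a.natAbs n : ℝ) / n) ≤ C * q * ((1 + 1 / δ) * q) := by
      refine h1.trans ?_
      gcongr
    have h3 : (k0 : ℝ) * ∑ n ∈ Icc 1 n0, ((Nat.gcd a.natAbs n : ℝ) / n) ≤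
        K * (C * q * ((1 + 1 / δ) * q)) := by gcongr
    have h4 : N * 1 ≤ N * (C * q * ((1 + 1 / δ) * q)) := by gcongr
    simp only [sum_const, Nat.card_Icc, nsmul_eq_mul, Nat.add_sub_cancel, mul_one]
    linarith
  have hYp : 0 ≤ Y / p := by positivity
  have hT : 4 * (X : ℝ) / p + 1 ≤ 8 * (1 + Y / p) := by
    have : 4 * (X : ℝ) / p ≤ 4 * (2 * Y) / p := by gcongr
    have e : 4 * (2 * Y) / p = 8 * (Y / p) := by ring
    linarith
  refine hmain.trans ?_
  have hS0 : 0 ≤ ∑ n' ∈ Icc 1 n0, ((k0 : ℝ) * ((Nat.gcd a.natAbs n' : ℝ) / n') + 1) :=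
    sum_nonneg (fun i _ => by positivity)
  calc _ ≤ K * M * (2 * U) * (8 * (1 + Y / p)) * (C * q ^ 9 * (C * q ^ 9)) *
        ((K + N) * (C * q * ((1 + 1 / δ) * q))) := by gcongr
    _ = _ := by rw [hpe]; ring

lemma triv_fin (ε : ℝ) (hε : 0 < ε) (p : ℕ) (hp : p.Prime) (a b : ℤ) (ha : ¬ ((p : ℤ) ∣ a))
    (hb : ¬ ((p : ℤ) ∣ b)) (K M N U : ℝ) (hK : 1 ≤ K) (hM : 1 ≤ M) (hN : 1 ≤ N) (hU : 1 ≤ U)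
    (h : ¬ (K < p ∧ M < p ∧ N < p ∧ U < p)) (C : ℝ) (hC : 8 ≤ C) :
    (#(Sol p a b ⌊K⌋₊ ⌊M⌋₊ ⌊N⌋₊ ⌊U⌋₊ ⌊2 * U⌋₊) : ℝ) ≤ 
        C * (p : ℝ) ^ ε * (K * M * U * (K + N) *
          (1 + (|(a : ℝ)| * K + |(b : ℝ)| * M * N) * U * N / (p : ℝ))) := by
  have hp0 : (0 : ℝ) < p := by exact_mod_cast hp.pos
  have hp1 : (1 : ℝ) ≤ p := by exact_mod_cast hp.one_lt.le
  have hb0 : b ≠ 0 := by rintro rfl; simp at hb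
  have ha0 : a ≠ 0 := by rintro rfl; simp at ha
  have hk0 : (⌊K⌋₊ : ℝ) ≤ K := Nat.floor_le (by linarith)
  have hm0 : (⌊M⌋₊ : ℝ) ≤ M := Nat.floor_le (by linarith)
  have hn0 : (⌊N⌋₊ : ℝ) ≤ N := Nat.floor_le (by linarith)
  have hu0 : (⌊2 * U⌋₊ : ℝ) ≤ 2 * U := Nat.floor_le (by linarith)
  have hud : ((⌊2 * U⌋₊ - ⌊U⌋₊ : ℕ) : ℝ) ≤ 2 * U := by
    have : ((⌊2 * U⌋₊ - ⌊U⌋₊ : ℕ) : ℝ) ≤ (⌊2 * U⌋₊ : ℝ) := by exact_mod_cast Nat.sub_le _ _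
    linarith
  have huu : ⌊U⌋₊ ≤ ⌊2 * U⌋₊ := Nat.floor_le_floor (by linarith)
  have hcl : ∀ Z : ℝ, (p : ℝ) ≤ Z → ∀ z : ℝ, z ≤ Z → z / p + 1 ≤ 2 * (Z / p) := by
    intro Z hZ z hz
    have h1 : 1 ≤ Z / p := (one_le_div hp0).mpr hZ
    have h2 : z / p ≤ Z / p := by gcongr
    linarith
  have key : (#(Sol p a b ⌊K⌋₊ ⌊M⌋₊ ⌊N⌋₊ ⌊U⌋₊ ⌊2 * U⌋₊) : ℝ) ≤ 8 * (K * M * U * (K * (M * N * U * N / p))) := by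
    by_cases h1 : K < p
    · by_cases h2 : M < p
      · by_cases h3 : N < p
        · have h4 : (p : ℝ) ≤ U := by
            by_contra h4
            exact h ⟨h1, h2, h3, not_le.mp h4⟩
          refine (triv_u p hp a b _ _ _ _ _ huu).trans ?_
          have e1 : (1 : ℝ) ≤ U / p := (one_le_div hp0).mpr h4
          have e2 : ((⌊2 * U⌋₊ : ℝ) - ⌊U⌋₊) ≤ 2 * U := by
            have : (0 : ℝ) ≤ (⌊U⌋₊ : ℝ) := by positivity
            linarith
          have e3 : ((⌊2 * U⌋₊ : ℝ) - ⌊U⌋₊) / p ≤ 2 * U / p := by gcongr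
          have e4 : 2 * U / p = 2 * (U / p) := by ring
          have e5 : ((⌊2 * U⌋₊ : ℝ) - ⌊U⌋₊) / p + 1 ≤ 4 * (U / p) := by linarith
          calc _ ≤ K * K * M * M * N * N * (2 * U) * (4 * (U / p)) := by
                refine mul_le_mul (by gcongr) e5 ?_ (by positivity)
                have : (⌊U⌋₊ : ℝ) ≤ ⌊2 * U⌋₊ := by exact_mod_cast huu
                have : 0 ≤ ((⌊2 * U⌋₊ : ℝ) - ⌊U⌋₊) / p := div_nonneg (by linarith) hp0.le
                linarith
            _ = _ := by ring
        · have hkp : ⌊K⌋₊ < p := by exact_mod_cast hk0.trans_lt h1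
          refine (triv_n p hp a b ha _ _ _ _ _ hkp).trans ?_
          have e5 := hcl N (not_lt.mp h3) _ hn0
          calc _ ≤ K * K * M * M * N * (2 * U) * (2 * U) * (2 * (N / p)) := by gcongr
            _ = _ := by ring
      · refine (triv_m p hp a b hb _ _ _ _ _).trans ?_
        have e5 := hcl M (not_lt.mp h2) _ hm0
        calc _ ≤ K * K * M * N * N * (2 * U) * (2 * U) * (2 * (M / p)) := by gcongr
          _ = _ := by ring
    · refine (triv_k p hp a b ha _ _ _ _ _).trans ?_
      have e5 := hcl K (not_lt.mp h1) _ hk0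
      calc _ ≤ K * M * M * N * N * (2 * U) * (2 * U) * (2 * (K / p)) := by gcongr
        _ = _ := by ring
  refine key.trans ?_
  have hq1 : 1 ≤ (p : ℝ) ^ ε := Real.one_le_rpow hp1 hε.le
  have hb1 : 1 ≤ |(b : ℝ)| := by exact_mod_cast Int.one_le_abs hb0
  have h8 : (8 : ℝ) ≤ C * (p : ℝ) ^ ε := by nlinarith
  have hMN : M * N * U * N / p ≤ 1 + (|(a : ℝ)| * K + |(b : ℝ)| * M * N) * U * N / (p : ℝ) := by
    have e1 : M * N ≤ |(a : ℝ)| * K + |(b : ℝ)| * M * N := by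
      have : 0 ≤ |(a : ℝ)| * K := by positivity
      have : 1 * (M * N) ≤ |(b : ℝ)| * (M * N) := by gcongr
      linarith
    have : M * N * U * N / p ≤ (|(a : ℝ)| * K + |(b : ℝ)| * M * N) * U * N / (p : ℝ) := by gcongr
    linarith
  have hKN : K ≤ K + N := by linarith
  calc 8 * (K * M * U * (K * (M * N * U * N / p))) 
      ≤ C * (p : ℝ) ^ ε * (K * M * U * ((K + N) *
          (1 + (|(a : ℝ)| * K + |(b : ℝ)| * M * N) * U * N / (p : ℝ)))) := by gcongr
    _ = _ := by ring

lemma Sol_congr (p : ℕ) (a b a' b' : ℤ) (h1 : a ≡ a' [ZMOD p]) (h2 : b ≡ b' [ZMOD p])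
    (k0 m0 n0 u1 u2 : ℕ) : Sol p a b k0 m0 n0 u1 u2 = Sol p a' b' k0 m0 n0 u1 u2 := by
  unfold Sol
  refine filter_congr ?_
  rintro ⟨k, k', m, m', n, n', u, u'⟩ -
  have e : ∀ k m n n' u' : ℤ, (a * k + b * m * n) * n' * u' ≡ (a' * k + b' * m * n) * n' * u' [ZMOD p] :=
    fun k m n n' u' => by gcongr
  have e1 := e k m n n' u'
  have e2 := e k' m' n' n u
  simp only
  constructor
  · rintro ⟨h3, h4⟩
    exact ⟨e1.symm.trans (h3.trans e2), fun h => h4 (e1.trans h)⟩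
  · rintro ⟨h3, h4⟩
    exact ⟨e1.trans (h3.trans e2.symm), fun h => h4 (e1.symm.trans h)⟩

lemma red (p : ℕ) (hp : p.Prime) (a : ℤ) (ha : ¬ (p : ℤ) ∣ a) : ∃ a' : ℤ, a ≡ a' [ZMOD p] ∧
    a'.natAbs ≤ p ∧ a'.natAbs ≤ a.natAbs ∧ ¬ (p : ℤ) ∣ a' := by
  have hm : a ≡ a.tmod p [ZMOD p] := by
    rw [Int.modEq_iff_dvd]
    exact ⟨-(a.tdiv p), by have := Int.mul_tdiv_add_tmod a p; linarith⟩
  refine ⟨a.tmod p, hm, ?_, ?_, fun h => ha ?_⟩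
  · rw [Int.natAbs_tmod]
    exact (Nat.mod_lt _ (by simpa using hp.pos)).le
  · rw [Int.natAbs_tmod]
    exact Nat.mod_le _ _
  · exact (Int.ModEq.dvd_iff hm).mpr h

open Classical in
/-- Lemma 4.1 (the counting bound for `ℐ₂` in the proof of Theorem 2.1). -/
theorem counting_I2 (ε : ℝ) (hε : 0 < ε) :
    ∃ C : ℝ, 0 < C ∧ ∀ (p : ℕ), p.Prime →
      ∀ (a b : ℤ), ¬ ((p : ℤ) ∣ a * b) →
      ∀ (K M N U : ℝ), 1 ≤ K → 1 ≤ M → 1 ≤ N → 1 ≤ U →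
      (∑ k ∈ Icc 1 ⌊K⌋₊, ∑ k' ∈ Icc 1 ⌊K⌋₊, ∑ m ∈ Icc 1 ⌊M⌋₊, ∑ m' ∈ Icc 1 ⌊M⌋₊,
        ∑ n ∈ Icc 1 ⌊N⌋₊, ∑ n' ∈ Icc 1 ⌊N⌋₊,
        ∑ u ∈ Ioc ⌊U⌋₊ ⌊2 * U⌋₊, ∑ u' ∈ Ioc ⌊U⌋₊ ⌊2 * U⌋₊,
          if ((a * k + b * m * n) * n' * u' ≡ (a * k' + b * m' * n') * n * u [ZMOD (p : ℤ)]) ∧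
              ¬ ((a * k + b * m * n) * n' * u' ≡ 0 [ZMOD (p : ℤ)]) then (1 : ℝ)
          else 0) ≤
        C * (p : ℝ) ^ ε * (K * M * U * (K + N) *
          (1 + ((|a| : ℝ) * K + (|b| : ℝ) * M * N) * U * N / (p : ℝ))) := by
  obtain ⟨C, hC8, hC⟩ := reduced ε hε
  refine ⟨C, by linarith, ?_⟩
  intro p hp a b hab K M N U hK hM hN hU
  have ha : ¬ (p : ℤ) ∣ a := fun h => hab (Dvd.dvd.mul_right h _)
  have hb : ¬ (p : ℤ) ∣ b := fun h => hab (Dvd.dvd.mul_left h _)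
  rw [sum_eq]
  by_cases h : K < p ∧ M < p ∧ N < p ∧ U < p
  · obtain ⟨a', ha1, ha2, ha3, ha4⟩ := red p hp a ha
    obtain ⟨b', hb1, hb2, hb3, hb4⟩ := red p hp b hb
    rw [Sol_congr p a b a' b' ha1 hb1]
    refine (hC p hp a' b' ha4 hb4 ha2 hb2 K M N U hK hM hN hU h.1 h.2.1 h.2.2.1 h.2.2.2).trans ?_
    have e1 : |(a' : ℝ)| ≤ |(a : ℝ)| := by
      rw [← Int.cast_abs, ← Int.cast_abs, Int.abs_eq_natAbs, Int.abs_eq_natAbs]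
      exact_mod_cast ha3
    have e2 : |(b' : ℝ)| ≤ |(b : ℝ)| := by
      rw [← Int.cast_abs, ← Int.cast_abs, Int.abs_eq_natAbs, Int.abs_eq_natAbs]
      exact_mod_cast hb3
    have hC0 : 0 ≤ C := by linarith
    gcongr
  · exact triv_fin ε hε p hp a b ha hb K M N U hK hM hN hU h C hC8
end

section
/- For every ε > 0 there exists a constant C = C(ε) such that the following holds. Let p be a prime, let a, b be integers with p ∤ ab, let K, M, N ≥ 1 be real numbers, and let U ≥ 1 be a real number. Then the number of 10-tuples (k, k̃, m₁, m̃₁, m₂, m̃₂, n, ñ, u, ũ) with k, k̃ positive integers at most K, m₁, m̃₁, m₂, m̃₂ positive integers at most M with m₁ ≠ m₂ and m̃₁ ≠ m̃₂, n, ñ integers with |n|, |ñ| ≤ 2N, and u, ũ positive integers with U < u, ũ ≤ 2U, satisfying both congruences (a·k + b·m₁·n)·m̃₁·ũ ≡ (a·k̃ + b·m̃₁·ñ)·m₁·u ≢ 0 (mod p) and (a·k + b·m₂·n)·m̃₂·ũ ≡ (a·k̃ + b·m̃₂·ñ)·m₂·u ≢ 0 (mod p), is at most C · p^ε · K·N·U·(K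 + M²)·(1 + (|a|·K + 2|b|·M·N)·M·U/p)². -/
open Finset

theorem dvb_aux (δ : ℝ) (hδ : 0 < δ) : ∃ c : ℝ, 1 ≤ c ∧ ∀ (v : ℕ) (q : ℝ), 2 ≤ q →
    ((v : ℝ) + 1) ≤ c * (q ^ δ) ^ v := by
  have h1 : (1:ℝ) < 2 ^ δ := Real.one_lt_rpow (by norm_num) hδ
  set x : ℝ := 2 ^ δ - 1 with hx
  have hx0 : 0 < x := by linarith
  refine ⟨1 + 1 / x, by have : 0 < 1 / x := by positivity
                        linarith, ?_⟩
  intro v q hq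
  have h2 : (2:ℝ) ^ δ ≤ q ^ δ := Real.rpow_le_rpow (by norm_num) hq hδ.le
  have h3 : 1 + (v:ℝ) * x ≤ (1 + x) ^ v := one_add_mul_le_pow (by linarith) v
  have h4 : (1 + x) ^ v ≤ (q ^ δ) ^ v := by
    apply pow_le_pow_left₀ (by linarith)
    linarith
  have h5 : (v:ℝ) + 1 ≤ (1 + 1 / x) * (1 + (v:ℝ) * x) := by
    have : (1 + 1 / x) * (1 + (v:ℝ) * x) = 1 + v + v * x + 1 / x := by field_simp; ring
    rw [this]
    have : 0 ≤ (v:ℝ) * x := by positivity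
    have : 0 < 1 / x := by positivity
    linarith
  have : 0 < 1 / x := by positivity
  calc (v:ℝ) + 1 ≤ (1 + 1 / x) * (1 + (v:ℝ) * x) := h5
    _ ≤ _ := by
      apply mul_le_mul_of_nonneg_left (h3.trans h4); linarith

theorem dvb (δ : ℝ) (hδ : 0 < δ) : ∃ C : ℝ, 1 ≤ C ∧ ∀ n : ℕ, n ≠ 0 →
    (n.divisors.card : ℝ) ≤ C * (n : ℝ) ^ δ := by
  obtain ⟨c, hc, hcv⟩ := dvb_aux δ hδ
  obtain ⟨R, hR⟩ := exists_nat_ge ((2:ℝ) ^ (1 / δ))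
  refine ⟨c ^ R, one_le_pow₀ hc, ?_⟩
  intro n hn
  rw [Nat.card_divisors hn]
  have hn2 : (n : ℝ) ^ δ = ∏ q ∈ n.primeFactors, ((q:ℝ) ^ δ) ^ (n.factorization q) := by
    conv_lhs => rw [← Nat.prod_factorization_pow_eq_self hn]
    rw [Finsupp.prod, Nat.support_factorization]
    push_cast
    rw [← Real.finsetProd_rpow _ _ (fun i _ => by positivity)]
    refine Finset.prod_congr rfl fun q _ => ?_
    rw [← Real.rpow_natCast, ← Real.rpow_natCast, ← Real.rpow_mul (by positivity),
      ← Real.rpow_mul (by positivity), mul_comm]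
  rw [hn2]
  push_cast
  have key : ∀ q ∈ n.primeFactors, ((n.factorization q : ℝ) + 1) ≤
      (if q < R then c else 1) * ((q:ℝ) ^ δ) ^ (n.factorization q) := by
    intro q hq
    have hq2 : (2:ℝ) ≤ q := by exact_mod_cast (Nat.prime_of_mem_primeFactors hq).two_le
    split_ifs with h
    · exact hcv _ _ hq2
    · push Not at h
      have h1 : (2:ℝ) ^ (1 / δ) ≤ q := hR.trans (by exact_mod_cast h)
      have h2 : (2:ℝ) ≤ (q:ℝ) ^ δ := by
        calc (2:ℝ) = ((2:ℝ) ^ (1 / δ)) ^ δ := by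
              rw [← Real.rpow_mul (by norm_num), one_div, inv_mul_cancel₀ hδ.ne', Real.rpow_one]
          _ ≤ _ := Real.rpow_le_rpow (by positivity) h1 hδ.le
      rw [one_mul]
      calc ((n.factorization q : ℝ) + 1) ≤ (2:ℝ) ^ (n.factorization q) := by
            exact_mod_cast Nat.lt_two_pow_self
        _ ≤ _ := pow_le_pow_left₀ (by norm_num) h2 _
  refine (Finset.prod_le_prod (fun i _ => by positivity) key).trans ?_
  rw [Finset.prod_mul_distrib]
  apply mul_le_mul_of_nonneg_right _ (Finset.prod_nonneg fun i _ => by positivity)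
  rw [Finset.prod_ite, Finset.prod_const, Finset.prod_const_one, mul_one]
  apply pow_le_pow_right₀ hc
  calc _ ≤ (range R).card := Finset.card_le_card (by intro x; simp)
    _ = R := card_range R

theorem card_class (S : Finset ℤ) (p : ℕ) (hp : 0 < p) (x y : ℤ) (hxy : x ≤ y)
    (h : ∀ s ∈ S, x ≤ s ∧ s ≤ y) (hc : ∀ s ∈ S, ∀ t ∈ S, (p:ℤ) ∣ s - t) :
    (S.card : ℝ) ≤ ((y - x : ℤ) : ℝ) / p + 1 := by
  have hp' : (0:ℝ) < p := by exact_mod_cast hp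
  have hpz : (0:ℤ) < p := by exact_mod_cast hp
  have h0 : (0:ℝ) ≤ ((y - x : ℤ) : ℝ) := by exact_mod_cast sub_nonneg.2 hxy
  rcases S.eq_empty_or_nonempty with rfl | hne
  · simp only [card_empty, Nat.cast_zero]; positivity
  set m := S.min' hne
  have hm : m ∈ S := S.min'_mem hne
  have hc1 : S.card ≤ (Icc (0:ℤ) ((y - x) / p)).card := by
    apply Finset.card_le_card_of_injOn (fun s => (s - m) / p)
    · intro s hs
      have hs : s ∈ S := hs
      have h1 : m ≤ s := S.min'_le s hs
      simp only [coe_Icc, Set.mem_Icc]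
      exact ⟨Int.ediv_nonneg (by linarith) hpz.le,
        Int.ediv_le_ediv hpz (by linarith [(h s hs).2, (h m hm).1])⟩
    · intro s hs t ht hst
      obtain ⟨i, hi⟩ := hc s hs m hm
      obtain ⟨j, hj⟩ := hc t ht m hm
      simp only [hi, hj, Int.mul_ediv_cancel_left _ hpz.ne'] at hst
      subst hst; linarith
  rw [Int.card_Icc] at hc1
  have h3 : (S.card : ℤ) ≤ (y - x) / p + 1 := by
    have : 0 ≤ (y - x) / (p:ℤ) := Int.ediv_nonneg (by linarith) hpz.le
    omega
  have h4 : ((S.card : ℤ) : ℝ) ≤ (((y - x) / p : ℤ) : ℝ) + 1 := by exact_mod_cast h3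
  have h5 : (((y - x) / (p:ℤ) : ℤ) : ℝ) ≤ ((y - x : ℤ) : ℝ) / p := by
    rw [le_div_iff₀ hp']
    exact_mod_cast Int.ediv_mul_le _ hpz.ne'
  push_cast at h4 h5 ⊢
  linarith

abbrev Tup := ℕ × ℕ × ℕ × ℕ × ℕ × ℕ × ℤ × ℤ × ℕ × ℕ

/-- one congruence pair -/
def Cg (p : ℕ) (a b : ℤ) (k k' m m' : ℕ) (n n' : ℤ) (u u' : ℕ) : Prop :=
  ((a * k + b * m * n) * m' * u' ≡ (a * k' + b * m' * n') * m * u [ZMOD (p : ℤ)]) ∧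
    ¬ ((a * k + b * m * n) * m' * u' ≡ 0 [ZMOD (p : ℤ)])

open Classical in
noncomputable def TT (p : ℕ) (a b : ℤ) (Kn Mn : ℕ) (Nn : ℤ) (U1 U2 : ℕ) : Finset Tup :=
  (Icc 1 Kn ×ˢ Icc 1 Kn ×ˢ Icc 1 Mn ×ˢ Icc 1 Mn ×ˢ Icc 1 Mn ×ˢ Icc 1 Mn ×ˢ
    Icc (-Nn) Nn ×ˢ Icc (-Nn) Nn ×ˢ Ioc U1 U2 ×ˢ Ioc U1 U2).filter
  (fun t => match t with
    | (k, k', m₁, m₁', m₂, m₂', n, n', u, u') =>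
      m₁ ≠ m₂ ∧ m₁' ≠ m₂' ∧
              ((a * k + b * m₁ * n) * m₁' * u' ≡ (a * k' + b * m₁' * n') * m₁ * u
                [ZMOD (p : ℤ)]) ∧
              ¬ ((a * k + b * m₁ * n) * m₁' * u' ≡ 0 [ZMOD (p : ℤ)]) ∧
              ((a * k + b * m₂ * n) * m₂' * u' ≡ (a * k' + b * m₂' * n') * m₂ * u
                [ZMOD (p : ℤ)]) ∧
              ¬ ((a * k + b * m₂ * n) * m₂' * u' ≡ 0 [ZMOD (p : ℤ)]))

theorem mem_TT {p : ℕ} {a b : ℤ} {Kn Mn : ℕ} {Nn : ℤ} {U1 U2 : ℕ}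
    {k k' m₁ m₁' m₂ m₂' : ℕ} {n n' : ℤ} {u u' : ℕ} :
    (k, k', m₁, m₁', m₂, m₂', n, n', u, u') ∈ TT p a b Kn Mn Nn U1 U2 ↔
      (((1 ≤ k ∧ k ≤ Kn) ∧ (1 ≤ k' ∧ k' ≤ Kn) ∧ (1 ≤ m₁ ∧ m₁ ≤ Mn) ∧ (1 ≤ m₁' ∧ m₁' ≤ Mn) ∧
      (1 ≤ m₂ ∧ m₂ ≤ Mn) ∧ (1 ≤ m₂' ∧ m₂' ≤ Mn) ∧ (-Nn ≤ n ∧ n ≤ Nn) ∧ (-Nn ≤ n' ∧ n' ≤ Nn) ∧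
      (U1 < u ∧ u ≤ U2) ∧ (U1 < u' ∧ u' ≤ U2)) ∧
      m₁ ≠ m₂ ∧ m₁' ≠ m₂' ∧ Cg p a b k k' m₁ m₁' n n' u u' ∧ Cg p a b k k' m₂ m₂' n n' u u') := by
  simp only [TT, mem_filter, mem_product, mem_Icc, mem_Ioc, Cg, and_assoc]

open Classical in
theorem sum_TT (p : ℕ) (a b : ℤ) (Kn Mn : ℕ) (Nn : ℤ) (U1 U2 : ℕ) :
    (∑ k ∈ Icc 1 Kn, ∑ k' ∈ Icc 1 Kn,
        ∑ m₁ ∈ Icc 1 Mn, ∑ m₁' ∈ Icc 1 Mn, ∑ m₂ ∈ Icc 1 Mn, ∑ m₂' ∈ Icc 1 Mn,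
        ∑ n ∈ Finset.Icc (-Nn) Nn,
        ∑ n' ∈ Finset.Icc (-Nn) Nn,
        ∑ u ∈ Ioc U1 U2, ∑ u' ∈ Ioc U1 U2,
          if m₁ ≠ m₂ ∧ m₁' ≠ m₂' ∧
              ((a * k + b * m₁ * n) * m₁' * u' ≡ (a * k' + b * m₁' * n') * m₁ * u
                [ZMOD (p : ℤ)]) ∧
              ¬ ((a * k + b * m₁ * n) * m₁' * u' ≡ 0 [ZMOD (p : ℤ)]) ∧
              ((a * k + b * m₂ * n) * m₂' * u' ≡ (a * k' + b * m₂' * n') * m₂ * u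
                [ZMOD (p : ℤ)]) ∧
              ¬ ((a * k + b * m₂ * n) * m₂' * u' ≡ 0 [ZMOD (p : ℤ)]) then (1 : ℝ)
          else 0) = ((TT p a b Kn Mn Nn U1 U2).card : ℝ) := by
  symm
  rw [TT, Finset.card_filter, Nat.cast_sum]
  iterate 9
    rw [Finset.sum_product]
    refine Finset.sum_congr rfl fun _ _ => ?_
  refine Finset.sum_congr rfl fun _ _ => ?_
  rw [Nat.cast_ite, Nat.cast_one, Nat.cast_zero]

/-- consequences of a congruence pair -/
theorem Cg.ndvd {p : ℕ} {a b : ℤ} {k k' m m' : ℕ} {n n' : ℤ} {u u' : ℕ}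
    (h : Cg p a b k k' m m' n n' u u') :
    (p : ℤ) ∣ (a * k + b * m * n) * m' * u' - (a * k' + b * m' * n') * m * u ∧
    ¬ (p : ℤ) ∣ m ∧ ¬ (p : ℤ) ∣ m' ∧ ¬ (p : ℤ) ∣ u ∧ ¬ (p : ℤ) ∣ u' := by
  obtain ⟨h1, h2⟩ := h
  have h3 : (p : ℤ) ∣ (a * k + b * m * n) * m' * u' - (a * k' + b * m' * n') * m * u :=
    h1.symm.dvd
  rw [Int.modEq_zero_iff_dvd] at h2
  have h4 : ¬ (p : ℤ) ∣ (a * k' + b * m' * n') * m * u := fun h => h2 (by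
    have := dvd_add h3 h; simpa using this)
  refine ⟨h3, fun h => h4 ?_, fun h => h2 ?_, fun h => h4 ?_, fun h => h2 ?_⟩
  · exact Dvd.dvd.mul_right (Dvd.dvd.mul_left h _) _
  · exact Dvd.dvd.mul_right (Dvd.dvd.mul_left h _) _
  · exact Dvd.dvd.mul_left h _
  · exact Dvd.dvd.mul_left h _

theorem Cg.diff {p : ℕ} (hp : p.Prime) {a b : ℤ} {k k' k'' m m' : ℕ} {n n' n'' : ℤ} {u u' : ℕ}
    (h : Cg p a b k k' m m' n n' u u') (h' : Cg p a b k k'' m m' n n'' u u') :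
    (p : ℤ) ∣ a * ((k' : ℤ) - k'') + b * m' * (n' - n'') := by
  have hpp : Prime (p : ℤ) := Nat.prime_iff_prime_int.1 hp
  obtain ⟨h1, h2, -, h3, -⟩ := h.ndvd
  obtain ⟨h1', -⟩ := h'.ndvd
  have h4 : (p : ℤ) ∣ (a * ((k' : ℤ) - k'') + b * m' * (n' - n'')) * (m * u) := by
    have := dvd_sub h1' h1
    exact this.trans (dvd_of_eq (by ring))
  rcases hpp.dvd_or_dvd h4 with h | h
  · exact h
  · exact absurd (hpp.dvd_or_dvd h) (by tauto)

theorem triv_bound (p : ℕ) (a b : ℤ) (Kn Mn : ℕ) (Nn : ℤ) (U1 U2 : ℕ) :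
    (TT p a b Kn Mn Nn U1 U2).card ≤
      Kn ^ 2 * Mn ^ 4 * (Icc (-Nn) Nn).card ^ 2 * (Ioc U1 U2).card ^ 2 := by
  refine (Finset.card_filter_le _ _).trans (le_of_eq ?_)
  simp only [Finset.card_product, Nat.card_Icc, Nat.add_sub_cancel]
  ring

/-- large `K`, `N` : saving in `n'` -/
theorem save1 (p : ℕ) (hp : p.Prime) (a b : ℤ) (hab : ¬ (p : ℤ) ∣ a * b)
    (Kn Mn : ℕ) (Nn : ℤ) (hN : 0 ≤ Nn) (U1 U2 : ℕ) :
    ((TT p a b Kn Mn Nn U1 U2).card : ℝ) ≤ ((2 * Nn : ℤ) / p + 1) *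
      (Kn ^ 2 * Mn ^ 4 * (Icc (-Nn) Nn).card * (Ioc U1 U2).card ^ 2) := by
  classical
  have hpp : Prime (p : ℤ) := Nat.prime_iff_prime_int.1 hp
  set B := Icc 1 Kn ×ˢ Icc 1 Kn ×ˢ Icc 1 Mn ×ˢ Icc 1 Mn ×ˢ Icc 1 Mn ×ˢ Icc 1 Mn ×ˢ
    Icc (-Nn) Nn ×ˢ Ioc U1 U2 ×ˢ Ioc U1 U2 with hB
  let f : Tup → ℕ × ℕ × ℕ × ℕ × ℕ × ℕ × ℤ × ℕ × ℕ := fun t => match t with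
    | (k, k', m₁, m₁', m₂, m₂', n, _, u, u') => (k, k', m₁, m₁', m₂, m₂', n, u, u')
  have h1 : (TT p a b Kn Mn Nn U1 U2).card ≤ ⌊((2 * Nn : ℤ) / p + 1 : ℝ)⌋₊ * B.card := by
    apply Finset.card_le_mul_card_image_of_maps_to (f := f)
    · rintro ⟨k, k', m₁, m₁', m₂, m₂', n, n', u, u'⟩ ht
      rw [mem_TT] at ht
      simp only [f, hB, mem_product, mem_Icc, mem_Ioc]
      tauto
    · rintro ⟨k, k', m₁, m₁', m₂, m₂', n, u, u'⟩ -
      apply Nat.le_floor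
      have := card_class (((TT p a b Kn Mn Nn U1 U2).filter
        (fun t => f t = (k, k', m₁, m₁', m₂, m₂', n, u, u'))).image
          (fun t => t.2.2.2.2.2.2.2.1)) p hp.pos (-Nn) Nn (by linarith) ?_ ?_
      · rw [Finset.card_image_of_injOn] at this
        · refine this.trans (le_of_eq ?_)
          push_cast; ring
        · rintro ⟨k1, k1', n₁, n₁', n₂, n₂', i, i', v, v'⟩ ht ⟨l1, l1', o₁, o₁', o₂, o₂', j, j', w, w'⟩ hs hst
          simp only [coe_filter, Set.mem_ofPred_eq, f] at ht hs
          simp only at hst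
          grind
      · intro s hs
        simp only [mem_image, mem_filter] at hs
        obtain ⟨⟨k1, k1', n₁, n₁', n₂, n₂', i, i', v, v'⟩, ⟨ht, -⟩, rfl⟩ := hs
        rw [mem_TT] at ht
        simp only
        tauto
      · intro s hs t ht
        simp only [mem_image, mem_filter] at hs ht
        obtain ⟨⟨k1, k1', n₁, n₁', n₂, n₂', i, i', v, v'⟩, ⟨hs, hs1⟩, rfl⟩ := hs
        obtain ⟨⟨l1, l1', o₁, o₁', o₂, o₂', j, j', w, w'⟩, ⟨ht, ht1⟩, rfl⟩ := ht
        simp only [f, Prod.mk.injEq] at hs1 ht1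
        obtain ⟨rfl, rfl, rfl, rfl, rfl, rfl, rfl, rfl, rfl⟩ := hs1
        obtain ⟨rfl, rfl, rfl, rfl, rfl, rfl, rfl, rfl, rfl⟩ := ht1
        rw [mem_TT] at hs ht
        obtain ⟨-, -, -, hs, -⟩ := hs
        obtain ⟨-, -, -, ht, -⟩ := ht
        have hd := Cg.diff hp hs ht
        rw [sub_self, mul_zero, zero_add] at hd
        rcases hpp.dvd_or_dvd hd with h | h
        · rcases hpp.dvd_or_dvd h with h | h
          · exact absurd (Dvd.dvd.mul_left h a) hab
          · exact absurd h hs.ndvd.2.2.1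
        · exact h
  have h2 : ((TT p a b Kn Mn Nn U1 U2).card : ℝ) ≤ (⌊((2 * Nn : ℤ) / p + 1 : ℝ)⌋₊ : ℝ) * B.card := by
    exact_mod_cast h1
  have h3 : (B.card : ℝ) = (Kn ^ 2 * Mn ^ 4 * (Icc (-Nn) Nn).card * (Ioc U1 U2).card ^ 2) := by
    simp only [hB, Finset.card_product, Nat.card_Icc, Nat.add_sub_cancel]
    push_cast; ring
  rw [h3] at h2
  refine h2.trans (mul_le_mul_of_nonneg_right (Nat.floor_le ?_) (by positivity))
  have : (0:ℝ) ≤ ((2 * Nn : ℤ) : ℝ) := by exact_mod_cast (by linarith)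
  positivity

/-- large `K`, `N`, small `M` : saving in `k'` and `n'` -/
theorem save2 (p : ℕ) (hp : p.Prime) (a b : ℤ) (hab : ¬ (p : ℤ) ∣ a * b)
    (Kn Mn : ℕ) (hK : 1 ≤ Kn) (hM : Mn < p) (Nn : ℤ) (hN : 0 ≤ Nn) (U1 U2 : ℕ) :
    ((TT p a b Kn Mn Nn U1 U2).card : ℝ) ≤ (((2 * Nn : ℤ) / p + 1) * ((Kn : ℝ) / p + 1)) *
      (Kn * Mn ^ 4 * (Icc (-Nn) Nn).card * (Ioc U1 U2).card ^ 2) := by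
  classical
  have hpp : Prime (p : ℤ) := Nat.prime_iff_prime_int.1 hp
  set B := Icc 1 Kn ×ˢ Icc 1 Mn ×ˢ Icc 1 Mn ×ˢ Icc 1 Mn ×ˢ Icc 1 Mn ×ˢ
    Icc (-Nn) Nn ×ˢ Ioc U1 U2 ×ˢ Ioc U1 U2 with hB
  have hN' : (0:ℝ) ≤ ((2 * Nn : ℤ) : ℝ) := by exact_mod_cast (by linarith)
  let f : Tup → ℕ × ℕ × ℕ × ℕ × ℕ × ℤ × ℕ × ℕ := fun t => match t with
    | (k, _, m₁, m₁', m₂, m₂', n, _, u, u') => (k, m₁, m₁', m₂, m₂', n, u, u')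
  have h1 : (TT p a b Kn Mn Nn U1 U2).card ≤
      ⌊(((2 * Nn : ℤ) / p + 1) * ((Kn : ℝ) / p + 1) : ℝ)⌋₊ * B.card := by
    apply Finset.card_le_mul_card_image_of_maps_to (f := f)
    · rintro ⟨k, k', m₁, m₁', m₂, m₂', n, n', u, u'⟩ ht
      rw [mem_TT] at ht
      simp only [f, hB, mem_product, mem_Icc, mem_Ioc]
      tauto
    · rintro ⟨k, m₁, m₁', m₂, m₂', n, u, u'⟩ -
      apply Nat.le_floor
      set F := ((TT p a b Kn Mn Nn U1 U2).filter
        (fun t => f t = (k, m₁, m₁', m₂, m₂', n, u, u'))) with hF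
      have hmain : ∀ s ∈ F, ∀ t ∈ F, (p : ℤ) ∣ s.2.2.2.2.2.2.2.1 - t.2.2.2.2.2.2.2.1 ∧
          (p : ℤ) ∣ (s.2.1 : ℤ) - t.2.1 := by
        rintro ⟨k1, k1', n₁, n₁', n₂, n₂', i, i', v, v'⟩ hs ⟨l1, l1', o₁, o₁', o₂, o₂', j, j', w, w'⟩ ht
        simp only [hF, mem_filter] at hs ht
        obtain ⟨hs, hs1⟩ := hs
        obtain ⟨ht, ht1⟩ := ht
        simp only [f, Prod.mk.injEq] at hs1 ht1
        obtain ⟨rfl, rfl, rfl, rfl, rfl, rfl, rfl, rfl⟩ := hs1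
        obtain ⟨rfl, rfl, rfl, rfl, rfl, rfl, rfl, rfl⟩ := ht1
        rw [mem_TT] at hs ht
        obtain ⟨hr, -, hne, hs, hs'⟩ := hs
        obtain ⟨-, -, -, ht, ht'⟩ := ht
        have hd := Cg.diff hp hs ht
        have hd' := Cg.diff hp hs' ht'
        have h5 : (p : ℤ) ∣ b * ((l1 : ℤ) * 0 + ((o₁' : ℤ) - o₂')) * (i' - j') := by
          have := dvd_sub hd hd'
          exact this.trans (dvd_of_eq (by ring))
        have h6 : (p : ℤ) ∣ i' - j' := by
          rcases hpp.dvd_or_dvd h5 with h | h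
          · rcases hpp.dvd_or_dvd h with h | h
            · exact absurd (Dvd.dvd.mul_left h a) hab
            · exfalso
              rw [mul_zero, zero_add] at h
              have h7 := Int.eq_zero_of_abs_lt_dvd h (by rw [abs_lt]; constructor <;> omega)
              omega
          · exact h
        refine ⟨h6, ?_⟩
        have h8 : (p : ℤ) ∣ a * ((k1' : ℤ) - l1') := by
          have := dvd_sub hd (Dvd.dvd.mul_left h6 (b * o₁'))
          exact this.trans (dvd_of_eq (by ring))
        rcases hpp.dvd_or_dvd h8 with h | h
        · exact absurd (Dvd.dvd.mul_right h b) hab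
        · exact h
      have c1 := card_class (F.image (fun t => t.2.2.2.2.2.2.2.1)) p hp.pos (-Nn) Nn
        (by linarith) ?_ ?_
      have c2 := card_class (F.image (fun t => (t.2.1 : ℤ))) p hp.pos 0 Kn (by positivity) ?_ ?_
      · have c3 : F.card ≤ ((F.image (fun t => t.2.2.2.2.2.2.2.1)) ×ˢ
            (F.image (fun t => (t.2.1 : ℤ)))).card := by
          apply Finset.card_le_card_of_injOn (fun t => (t.2.2.2.2.2.2.2.1, (t.2.1 : ℤ)))
          · intro t ht
            have ht : t ∈ F := ht
            simp only [coe_product, Set.mem_prod]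
            exact ⟨mem_image_of_mem _ ht, mem_image_of_mem _ ht⟩
          · rintro ⟨k1, k1', n₁, n₁', n₂, n₂', i, i', v, v'⟩ ht ⟨l1, l1', o₁, o₁', o₂, o₂', j, j', w, w'⟩ hs hst
            simp only [hF, coe_filter, Set.mem_ofPred_eq, f] at ht hs
            simp only [Prod.mk.injEq, Nat.cast_inj] at hst
            grind
        rw [Finset.card_product] at c3
        have c4 : (F.card : ℝ) ≤ ((F.image (fun t => t.2.2.2.2.2.2.2.1)).card : ℝ) *
            ((F.image (fun t => (t.2.1 : ℤ))).card : ℝ) := by exact_mod_cast c3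
        refine c4.trans (mul_le_mul ?_ ?_ (by positivity) (by positivity))
        · refine c1.trans (le_of_eq ?_)
          push_cast; ring
        · refine c2.trans (le_of_eq ?_)
          push_cast; ring
      · intro s hs
        simp only [mem_image, hF, mem_filter] at hs
        obtain ⟨⟨k1, k1', n₁, n₁', n₂, n₂', i, i', v, v'⟩, ⟨ht, -⟩, rfl⟩ := hs
        rw [mem_TT] at ht
        simp only
        omega
      · intro s hs t ht
        simp only [mem_image] at hs ht
        obtain ⟨s, hs, rfl⟩ := hs
        obtain ⟨t, ht, rfl⟩ := ht
        exact (hmain s hs t ht).2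
      · intro s hs
        simp only [mem_image, hF, mem_filter] at hs
        obtain ⟨⟨k1, k1', n₁, n₁', n₂, n₂', i, i', v, v'⟩, ⟨ht, -⟩, rfl⟩ := hs
        rw [mem_TT] at ht
        simp only
        omega
      · intro s hs t ht
        simp only [mem_image] at hs ht
        obtain ⟨s, hs, rfl⟩ := hs
        obtain ⟨t, ht, rfl⟩ := ht
        exact (hmain s hs t ht).1
  have h2 : ((TT p a b Kn Mn Nn U1 U2).card : ℝ) ≤
      (⌊(((2 * Nn : ℤ) / p + 1) * ((Kn : ℝ) / p + 1) : ℝ)⌋₊ : ℝ) * B.card := by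
    exact_mod_cast h1
  have h3 : (B.card : ℝ) = (Kn * Mn ^ 4 * (Icc (-Nn) Nn).card * (Ioc U1 U2).card ^ 2) := by
    simp only [hB, Finset.card_product, Nat.card_Icc, Nat.add_sub_cancel]
    push_cast; ring
  rw [h3] at h2
  exact h2.trans (mul_le_mul_of_nonneg_right (Nat.floor_le (by positivity)) (by positivity))

noncomputable def Pset (p Kn Mn : ℕ) (L Y : ℤ) : Finset (ℤ × ℕ) :=
  ((Icc (-L) L) ×ˢ Icc 1 Mn).filter
    (fun q => (q.2 : ℤ) ∣ Y - p * q.1 ∧ (Y = p * q.1 → p ≤ Kn))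

theorem pset_card (p Kn Mn D W : ℕ) (hp : 0 < p) (L Y : ℤ) (hL : 0 ≤ L)
    (hD : ∀ n : ℕ, n ≠ 0 → n ≤ W → n.divisors.card ≤ D) (hY : |Y| + p * L ≤ W) :
    (Pset p Kn Mn L Y).card ≤ D * (2 * L + 1).toNat + (if p ≤ Kn then Mn else 0) := by
  classical
  rw [← Finset.card_filter_add_card_filter_not (s := Pset p Kn Mn L Y)
    (fun q => Y ≠ p * q.1)]
  apply add_le_add
  · have h := Finset.card_le_mul_card_image_of_maps_to
      (s := (Pset p Kn Mn L Y).filter (fun q => Y ≠ p * q.1)) (t := Icc (-L) L)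
      (f := fun q => q.1) ?_ D ?_
    · have e : L + 1 - -L = 2 * L + 1 := by ring
      rw [Int.card_Icc, e] at h
      exact h
    · intro q hq
      simp only [Pset, mem_filter, mem_product] at hq
      exact hq.1.1.1
    · intro l hl
      by_cases hY0 : Y = p * l
      · convert Nat.zero_le D
        rw [Finset.card_eq_zero, Finset.filter_eq_empty_iff]
        intro q hq h
        simp only [mem_filter] at hq
        subst h
        exact hq.2 hY0
      · refine le_trans ?_ (hD (Y - p * l).natAbs (by omega) ?_)
        · apply Finset.card_le_card_of_injOn (fun q => q.2)
          · rintro ⟨l', m⟩ hq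
            simp only [coe_filter, Set.mem_ofPred_eq, Pset, mem_filter] at hq
            obtain ⟨⟨⟨-, h1, -⟩, -⟩, rfl⟩ := hq
            simp only [SetLike.mem_coe, Nat.mem_divisors]
            refine ⟨Int.natCast_dvd.1 h1, by omega⟩
          · rintro ⟨l', m⟩ hq ⟨l'', m'⟩ hq' h
            simp only [coe_filter, Set.mem_ofPred_eq] at hq hq' h
            grind
        · rw [mem_Icc] at hl
          have h1 : |(p : ℤ) * l| ≤ p * L := by
            rw [abs_mul, abs_of_nonneg (by positivity : (0:ℤ) ≤ p)]
            exact mul_le_mul_of_nonneg_left (abs_le.2 hl) (by positivity)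
          have h2 := abs_sub Y (p * l)
          zify
          linarith
  · split_ifs with hK
    · have : Mn = (Icc 1 Mn).card := by simp
      conv_rhs => rw [this]
      apply Finset.card_le_card_of_injOn (fun q => q.2)
      · rintro ⟨l', m⟩ hq
        simp only [coe_filter, Set.mem_ofPred_eq, Pset, mem_filter, mem_product] at hq
        exact hq.1.1.2
      · rintro ⟨l', m⟩ hq ⟨l'', m'⟩ hq' h
        simp only [coe_filter, Set.mem_ofPred_eq, not_not] at hq hq' h
        have h1 : (p : ℤ) * l' = p * l'' := by rw [← hq.2, ← hq'.2]
        have h2 := mul_left_cancel₀ (by exact_mod_cast hp.ne') h1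
        rw [h2, h]
    · rw [Nat.le_zero, Finset.card_eq_zero, Finset.filter_eq_empty_iff]
      intro q hq h
      simp only [Pset, mem_filter] at hq
      exact hK (hq.2.2 (not_not.1 h))

def ell (p : ℕ) (a b : ℤ) (k k' m m' : ℕ) (n n' : ℤ) (u u' : ℕ) : ℤ :=
  ((a * k + b * m * n) * m' * u' - (a * k' + b * m' * n') * m * u) / p

theorem ell_spec {p : ℕ} {a b : ℤ} {k k' m m' : ℕ} {n n' : ℤ} {u u' : ℕ}
    (h : Cg p a b k k' m m' n n' u u') :
    (a * k + b * m * n) * m' * u' - (a * k' + b * m' * n') * m * u =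
      p * ell p a b k k' m m' n n' u u' :=
  (Int.mul_ediv_cancel' h.ndvd.1).symm

theorem term_bound {a b : ℤ} {k m m' Kn Mn u U2 : ℕ} {n Nn : ℤ} (hk : k ≤ Kn)
    (hm : m ≤ Mn) (hm' : m' ≤ Mn) (hu : u ≤ U2) (hn : |n| ≤ Nn) :
    |(a * k + b * m * n) * m' * u| ≤ (|a| * Kn + |b| * Mn * Nn) * Mn * U2 := by
  have h1 : |(k : ℤ)| = k := abs_of_nonneg (by positivity)
  have h2 : |(m : ℤ)| = m := abs_of_nonneg (by positivity)
  have h3 : |(m' : ℤ)| = m' := abs_of_nonneg (by positivity)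
  have h4 : |(u : ℤ)| = u := abs_of_nonneg (by positivity)
  have h0 : 0 ≤ Nn := (abs_nonneg _).trans hn
  rw [abs_mul, abs_mul, h3, h4]
  have h5 : |a * k + b * m * n| ≤ |a| * Kn + |b| * Mn * Nn := by
    refine (abs_add_le _ _).trans ?_
    rw [abs_mul, abs_mul, abs_mul, h1, h2]
    gcongr
  gcongr

theorem ell_mem {p : ℕ} (hp : p.Prime) {a b : ℤ} (hab : ¬ (p : ℤ) ∣ a * b)
    {k k' m m' : ℕ} {n n' : ℤ} {u u' : ℕ} {Kn Mn U2 : ℕ} {Nn L : ℤ}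
    (h : Cg p a b k k' m m' n n' u u') (hk : 1 ≤ k ∧ k ≤ Kn) (hk' : 1 ≤ k' ∧ k' ≤ Kn)
    (hm : 1 ≤ m ∧ m ≤ Mn) (hm' : 1 ≤ m' ∧ m' ≤ Mn) (hn : -Nn ≤ n ∧ n ≤ Nn)
    (hn' : -Nn ≤ n' ∧ n' ≤ Nn) (hu : u ≤ U2) (hu' : u' ≤ U2)
    (hL : 2 * ((|a| * Kn + |b| * Mn * Nn) * Mn * U2) < p * (L + 1)) :
    (ell p a b k k' m m' n n' u u', m) ∈ Pset p Kn Mn L (a * k * u' * m') := by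
  have hpp : Prime (p : ℤ) := Nat.prime_iff_prime_int.1 hp
  have hpz : (0:ℤ) < p := by exact_mod_cast hp.pos
  have hs := ell_spec h
  set l := ell p a b k k' m m' n n' u u'
  have b1 := term_bound (a := a) (b := b) hk.2 hm.2 hm'.2 hu' (abs_le.2 hn)
  have b2 := term_bound (a := a) (b := b) hk'.2 hm'.2 hm.2 hu (abs_le.2 hn')
  have b3 : |(p : ℤ) * l| < p * (L + 1) := by
    rw [← hs]
    refine lt_of_le_of_lt (abs_sub _ _) ?_
    linarith
  rw [abs_mul, abs_of_pos hpz] at b3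
  have b4 : |l| < L + 1 := lt_of_mul_lt_mul_left b3 hpz.le
  have b5 := abs_le.1 (Int.lt_add_one_iff.1 b4)
  simp only [Pset, mem_filter, mem_product, mem_Icc]
  refine ⟨⟨b5, hm⟩, ⟨a * k' * u + b * m' * n' * u - b * n * m' * u', by linear_combination hs⟩, ?_⟩
  intro hY
  obtain ⟨-, -, h3, -, h5⟩ := h.ndvd
  have h6 : (p : ℤ) ∣ a * k * u' * m' := ⟨l, hY⟩
  rcases hpp.dvd_or_dvd h6 with h6 | h6
  · rcases hpp.dvd_or_dvd h6 with h6 | h6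
    · rcases hpp.dvd_or_dvd h6 with h6 | h6
      · exact absurd (Dvd.dvd.mul_right h6 b) hab
      · exact (Nat.le_of_dvd hk.1 (by exact_mod_cast h6)).trans hk.2
    · exact absurd h6 h5
  · exact absurd h6 h3

theorem lin_sys {a b k u' n n' n'' m m' o o' p l l' : ℤ} (ha : a ≠ 0) (hb : b ≠ 0)
    (hm : m ≠ 0) (ho : o ≠ 0) (hne : m' ≠ o') {k' k'' u v : ℤ}
    (h1 : (a * k + b * m * n) * m' * u' - (a * k' + b * m' * n') * m * u = p * l)
    (h2 : (a * k + b * o * n) * o' * u' - (a * k' + b * o' * n') * o * u = p * l')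
    (h3 : (a * k + b * m * n) * m' * u' - (a * k'' + b * m' * n'') * m * v = p * l)
    (h4 : (a * k + b * o * n) * o' * u' - (a * k'' + b * o' * n'') * o * v = p * l') :
    k' * u = k'' * v ∧ n' * u = n'' * v := by
  have e1 : (a * k' + b * m' * n') * u = (a * k'' + b * m' * n'') * v :=
    mul_left_cancel₀ hm (by linear_combination h3 - h1)
  have e2 : (a * k' + b * o' * n') * u = (a * k'' + b * o' * n'') * v :=
    mul_left_cancel₀ ho (by linear_combination h4 - h2)
  have e3 : n' * u = n'' * v := by
    apply mul_left_cancel₀ hb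
    apply mul_left_cancel₀ (sub_ne_zero.2 hne)
    linear_combination e1 - e2
  refine ⟨?_, e3⟩
  apply mul_left_cancel₀ ha
  linear_combination e1 - b * m' * e3

theorem mainA (p : ℕ) (hp : p.Prime) (a b : ℤ) (hab : ¬ (p : ℤ) ∣ a * b)
    (Kn Mn : ℕ) (Nn : ℤ) (U1 U2 D W E : ℕ) (L : ℤ) (hL0 : 0 ≤ L)
    (hD : ∀ n : ℕ, n ≠ 0 → n ≤ W → n.divisors.card ≤ D)
    (hL : 2 * ((|a| * Kn + |b| * Mn * Nn) * Mn * U2) < p * (L + 1))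
    (hW1 : Kn * U2 ≤ W) (hW2 : |a| * Kn * U2 * Mn + p * L ≤ W)
    (hE : D * (2 * L + 1).toNat + (if p ≤ Kn then Mn else 0) ≤ E) :
    (TT p a b Kn Mn Nn U1 U2).card ≤
      D * (Kn * (Icc (-Nn) Nn).card * (Ioc U1 U2).card * Mn * Mn * (E * E)) := by
  classical
  have ha : a ≠ 0 := by rintro rfl; simp at hab
  have hb : b ≠ 0 := by rintro rfl; simp at hab
  set B5 := Icc 1 Kn ×ˢ Icc (-Nn) Nn ×ˢ Ioc U1 U2 ×ˢ Icc 1 Mn ×ˢ Icc 1 Mn with hB5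
  let P : (ℕ × ℤ × ℕ × ℕ × ℕ) → Finset ((ℤ × ℕ) × (ℤ × ℕ)) := fun q => match q with
    | (k, _, u', m₁', m₂') => Pset p Kn Mn L (a * k * u' * m₁') ×ˢ Pset p Kn Mn L (a * k * u' * m₂')
  have hcard : (B5.sigma P).card ≤
      Kn * (Icc (-Nn) Nn).card * (Ioc U1 U2).card * Mn * Mn * (E * E) := by
    rw [Finset.card_sigma]
    refine (Finset.sum_le_card_nsmul _ _ (E * E) ?_).trans (le_of_eq ?_)
    · rintro ⟨k, n, u', m₁', m₂'⟩ h
      simp only [hB5, mem_product, mem_Icc, mem_Ioc] at h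
      have hpc : ∀ m : ℕ, m ≤ Mn → (Pset p Kn Mn L (a * k * u' * m)).card ≤ E := by
        intro m hm
        refine (pset_card p Kn Mn D W hp.pos L _ hL0 hD ?_).trans hE
        refine le_trans ?_ hW2
        have h1 : |(k : ℤ)| = k := abs_of_nonneg (by positivity)
        have h2 : |(m : ℤ)| = m := abs_of_nonneg (by positivity)
        have h3 : |(u' : ℤ)| = u' := abs_of_nonneg (by positivity)
        rw [abs_mul, abs_mul, abs_mul, h1, h2, h3]
        have hk := h.1.2
        have hu := h.2.2.1.2
        gcongr
      simp only [P, Finset.card_product]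
      exact Nat.mul_le_mul (hpc _ h.2.2.2.1.2) (hpc _ h.2.2.2.2.2)
    · simp only [hB5, Finset.card_product, Nat.card_Icc, Nat.add_sub_cancel, smul_eq_mul]
      ring
  refine le_trans ?_ (Nat.mul_le_mul_left D hcard)
  let f : Tup → (Σ _ : (ℕ × ℤ × ℕ × ℕ × ℕ), ((ℤ × ℕ) × (ℤ × ℕ))) := fun t => match t with
    | (k, k', m₁, m₁', m₂, m₂', n, n', u, u') => ⟨(k, n, u', m₁', m₂'),
        ((ell p a b k k' m₁ m₁' n n' u u', m₁), (ell p a b k k' m₂ m₂' n n' u u', m₂))⟩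
  apply Finset.card_le_mul_card_image_of_maps_to (f := f)
  · rintro ⟨k, k', m₁, m₁', m₂, m₂', n, n', u, u'⟩ ht
    rw [mem_TT] at ht
    obtain ⟨⟨hk, hk', hm₁, hm₁', hm₂, hm₂', hn, hn', hu, hu'⟩, -, -, hc₁, hc₂⟩ := ht
    simp only [f, mem_sigma, P, mem_product, hB5, mem_Icc, mem_Ioc]
    exact ⟨⟨hk, hn, hu', hm₁', hm₂'⟩,
      ell_mem hp hab hc₁ hk hk' hm₁ hm₁' hn hn' hu.2 hu'.2 hL,
      ell_mem hp hab hc₂ hk hk' hm₂ hm₂' hn hn' hu.2 hu'.2 hL⟩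
  · intro c _
    set F := (TT p a b Kn Mn Nn U1 U2).filter (fun t => f t = c) with hF
    rcases F.eq_empty_or_nonempty with h0 | ⟨t0, ht0⟩
    · rw [h0]; simp
    have key : ∀ s ∈ F, ∀ t ∈ F, s.2.1 * s.2.2.2.2.2.2.2.2.1 = t.2.1 * t.2.2.2.2.2.2.2.2.1 ∧
        (s.2.2.2.2.2.2.2.2.1 = t.2.2.2.2.2.2.2.2.1 → s = t) := by
      rintro ⟨k, k', m₁, m₁', m₂, m₂', n, n', u, u'⟩ hs ⟨l, l', o₁, o₁', o₂, o₂', j, j', v, v'⟩ ht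
      simp only [hF, mem_filter] at hs ht
      obtain ⟨hs, hs1⟩ := hs
      obtain ⟨ht, ht1⟩ := ht
      have hst := hs1.trans ht1.symm
      simp only [f, Sigma.mk.injEq, Prod.mk.injEq, heq_eq_eq] at hst
      obtain ⟨⟨rfl, rfl, rfl, rfl, rfl⟩, ⟨he1, rfl⟩, he2, rfl⟩ := hst
      rw [mem_TT] at hs ht
      obtain ⟨hr, -, hne, hs, hs'⟩ := hs
      obtain ⟨-, -, -, ht, ht'⟩ := ht
      have q1 := ell_spec hs
      have q2 := ell_spec hs'
      have q3 := ell_spec ht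
      have q4 := ell_spec ht'
      rw [← he1] at q3
      rw [← he2] at q4
      obtain ⟨r1, r2⟩ := lin_sys ha hb (by omega) (by omega)
        (by exact_mod_cast hne) q1 q2 q3 q4
      refine ⟨by exact_mod_cast r1, ?_⟩
      intro huv
      simp only at huv
      subst huv
      have hu0 : (u : ℤ) ≠ 0 := by omega
      have r3 := mul_right_cancel₀ hu0 r1
      have r4 := mul_right_cancel₀ hu0 r2
      have r5 : k' = l' := by exact_mod_cast r3
      subst r5 r4
      rfl
    have hpos : t0.2.1 * t0.2.2.2.2.2.2.2.2.1 ≠ 0 ∧ t0.2.1 * t0.2.2.2.2.2.2.2.2.1 ≤ W := by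
      obtain ⟨k, k', m₁, m₁', m₂, m₂', n, n', u, u'⟩ := t0
      simp only [hF, mem_filter] at ht0
      have ht := ht0.1
      rw [mem_TT] at ht
      obtain ⟨⟨hk, hk', hm₁, hm₁', hm₂, hm₂', hn, hn', hu, hu'⟩, -⟩ := ht
      refine ⟨mul_ne_zero (by simp only; omega) (by simp only; omega), ?_⟩
      exact (Nat.mul_le_mul hk'.2 hu.2).trans hW1
    refine le_trans ?_ (hD _ hpos.1 hpos.2)
    apply Finset.card_le_card_of_injOn (fun t => t.2.2.2.2.2.2.2.2.1)
    · intro t ht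
      have ht : t ∈ F := ht
      simp only [SetLike.mem_coe, Nat.mem_divisors]
      refine ⟨?_, hpos.1⟩
      rw [(key t0 ht0 t ht).1]
      exact dvd_mul_left _ _
    · intro s hs t ht h
      exact (key s hs t ht).2 h

theorem final_of {card c0 K M N U Q p : ℝ} (hc : 1 ≤ c0) (hK : 1 ≤ K) (hM : 1 ≤ M)
    (hN : 1 ≤ N) (hU : 1 ≤ U) (hQ : 0 < Q) (hp : 0 < p) (s : ℝ)
    (h : card ≤ 200 * (K ^ 2 * M ^ 4 * N ^ 2 * U ^ 2) * s) (hs : K * N * s * p ^ 2 ≤ Q ^ 2 * U) :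
    card ≤ c0 * (200 * (K * N * U * (K + M ^ 2) * (1 + Q * M * U / p) ^ 2)) := by
  have e1 : K * N * s ≤ Q ^ 2 * U / p ^ 2 := by
    rw [le_div_iff₀ (by positivity)]; exact hs
  have e2 : 200 * (K ^ 2 * M ^ 4 * N ^ 2 * U ^ 2) * s ≤
      200 * (K * N * U * M ^ 2 * (Q * M * U / p) ^ 2) := by
    calc _ = 200 * (K * M ^ 4 * N * U ^ 2) * (K * N * s) := by ring
      _ ≤ 200 * (K * M ^ 4 * N * U ^ 2) * (Q ^ 2 * U / p ^ 2) := by gcongr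
      _ = _ := by field_simp
  have e3 : 200 * (K * N * U * M ^ 2 * (Q * M * U / p) ^ 2) ≤
      200 * (K * N * U * (K + M ^ 2) * (1 + Q * M * U / p) ^ 2) := by
    have : 0 ≤ Q * M * U / p := by positivity
    gcongr <;> linarith
  have e4 : 0 ≤ 200 * (K * N * U * (K + M ^ 2) * (1 + Q * M * U / p) ^ 2) := by positivity
  nlinarith

set_option maxHeartbeats 4000000 in
open Classical in
/-- Lemma 5.1 (the counting bound for `𝒥₂` in the proof of Theorem 2.5). -/
theorem counting_J2 (ε : ℝ) (hε : 0 < ε) :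
    ∃ C : ℝ, 0 < C ∧ ∀ (p : ℕ), p.Prime →
      ∀ (a b : ℤ), ¬ ((p : ℤ) ∣ a * b) →
      ∀ (K M N U : ℝ), 1 ≤ K → 1 ≤ M → 1 ≤ N → 1 ≤ U →
      (∑ k ∈ Icc 1 ⌊K⌋₊, ∑ k' ∈ Icc 1 ⌊K⌋₊,
        ∑ m₁ ∈ Icc 1 ⌊M⌋₊, ∑ m₁' ∈ Icc 1 ⌊M⌋₊, ∑ m₂ ∈ Icc 1 ⌊M⌋₊, ∑ m₂' ∈ Icc 1 ⌊M⌋₊,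
        ∑ n ∈ Finset.Icc (-⌊(2 * N : ℝ)⌋) ⌊(2 * N : ℝ)⌋,
        ∑ n' ∈ Finset.Icc (-⌊(2 * N : ℝ)⌋) ⌊(2 * N : ℝ)⌋,
        ∑ u ∈ Ioc ⌊U⌋₊ ⌊2 * U⌋₊, ∑ u' ∈ Ioc ⌊U⌋₊ ⌊2 * U⌋₊,
          if m₁ ≠ m₂ ∧ m₁' ≠ m₂' ∧
              ((a * k + b * m₁ * n) * m₁' * u' ≡ (a * k' + b * m₁' * n') * m₁ * u
                [ZMOD (p : ℤ)]) ∧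
              ¬ ((a * k + b * m₁ * n) * m₁' * u' ≡ 0 [ZMOD (p : ℤ)]) ∧
              ((a * k + b * m₂ * n) * m₂' * u' ≡ (a * k' + b * m₂' * n') * m₂ * u
                [ZMOD (p : ℤ)]) ∧
              ¬ ((a * k + b * m₂ * n) * m₂' * u' ≡ 0 [ZMOD (p : ℤ)]) then (1 : ℝ)
          else 0) ≤
        C * (p : ℝ) ^ ε * (K * N * U * (K + M ^ 2) *
          (1 + ((|a| : ℝ) * K + 2 * (|b| : ℝ) * M * N) * M * U / (p : ℝ)) ^ 2) := by
  obtain ⟨C0, hC0, hdv⟩ := dvb (ε / 42) (by positivity)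
  refine ⟨810 * C0 ^ 3, by positivity, ?_⟩
  intro p hp a b hab K M N U hK hM hN hU
  rw [sum_TT]
  set Kn := ⌊K⌋₊ with hKn
  set Mn := ⌊M⌋₊ with hMn
  set Nn := ⌊(2 * N : ℝ)⌋ with hNn
  set U1 := ⌊U⌋₊ with hU1
  set U2 := ⌊2 * U⌋₊ with hU2
  have ha : a ≠ 0 := by rintro rfl; simp at hab
  have hb : b ≠ 0 := by rintro rfl; simp at hab
  have hA : (1:ℝ) ≤ |(a:ℝ)| := by exact_mod_cast Int.one_le_abs ha
  have hB : (1:ℝ) ≤ |(b:ℝ)| := by exact_mod_cast Int.one_le_abs hb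
  have hKr : (Kn : ℝ) ≤ K := Nat.floor_le (by linarith)
  have hMr : (Mn : ℝ) ≤ M := Nat.floor_le (by linarith)
  have hNr : (Nn : ℝ) ≤ 2 * N := Int.floor_le _
  have hUr : (U2 : ℝ) ≤ 2 * U := Nat.floor_le (by linarith)
  have hK1 : 1 ≤ Kn := Nat.le_floor (by simpa using hK)
  have hM1 : 1 ≤ Mn := Nat.le_floor (by simpa using hM)
  have hN0 : 0 ≤ Nn := Int.floor_nonneg.2 (by linarith)
  have hU21 : 1 ≤ U2 := Nat.le_floor (by push_cast; linarith)
  have hp2 : (2:ℝ) ≤ p := by exact_mod_cast hp.two_le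
  have hp0 : (0:ℝ) < p := by linarith
  have hcN : ((Icc (-Nn) Nn).card : ℝ) ≤ 5 * N := by
    rw [Int.card_Icc]
    have h1 : (((Nn + 1 - -Nn).toNat : ℤ) : ℝ) = 2 * Nn + 1 := by
      rw [Int.toNat_of_nonneg (by omega)]; push_cast; ring
    have h2 : (((Nn + 1 - -Nn).toNat : ℕ) : ℝ) = 2 * Nn + 1 := by exact_mod_cast h1
    rw [h2]; linarith
  have hcU : ((Ioc U1 U2).card : ℝ) ≤ 2 * U := by
    refine le_trans ?_ hUr
    rw [Nat.card_Ioc]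
    exact_mod_cast Nat.sub_le _ _
  set Q : ℝ := (|(a:ℝ)|) * K + 2 * (|(b:ℝ)|) * M * N with hQ
  have hQ0 : 0 < Q := by positivity
  have hpe : (1:ℝ) ≤ (p:ℝ) ^ ε := Real.one_le_rpow (by linarith) hε.le
  have hC3 : (1:ℝ) ≤ C0 ^ 3 := one_le_pow₀ hC0
  have hAK : |(a:ℝ)| * K ≤ Q := by
    have : 0 ≤ 2 * (|(b:ℝ)|) * M * N := by positivity
    linarith
  have hBM : 2 * (|(b:ℝ)|) * M * N ≤ Q := by
    have : 0 ≤ (|(a:ℝ)|) * K := by positivity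
    linarith
  have hQK : K ≤ Q := le_trans (by nlinarith) hAK
  have hQM : M * N ≤ Q := le_trans (by
    have : 0 ≤ M * N := by positivity
    calc M * N ≤ |(b:ℝ)| * (M * N) := by nlinarith
      _ ≤ _ := by nlinarith) hBM
  have hQ2 : |(a:ℝ)| * K * (|(b:ℝ)| * M * N) ≤ Q ^ 2 := by
    have h1 : 0 ≤ |(b:ℝ)| * M * N := by positivity
    calc |(a:ℝ)| * K * (|(b:ℝ)| * M * N) ≤ Q * Q := by
          apply mul_le_mul hAK (by linarith) h1 hQ0.le
      _ = Q ^ 2 := by ring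
  -- reduction to the trivial-type bounds
  have fin : ∀ s : ℝ, ((TT p a b Kn Mn Nn U1 U2).card : ℝ) ≤
      200 * (K ^ 2 * M ^ 4 * N ^ 2 * U ^ 2) * s → K * N * s * (p:ℝ) ^ 2 ≤ Q ^ 2 * U →
      ((TT p a b Kn Mn Nn U1 U2).card : ℝ) ≤ 810 * C0 ^ 3 * (p:ℝ) ^ ε *
        (K * N * U * (K + M ^ 2) * (1 + Q * M * U / (p:ℝ)) ^ 2) := by
    intro s h1 h2
    have h3 := final_of (c0 := C0 ^ 3 * (p:ℝ) ^ ε) (one_le_mul_of_one_le_of_one_le hC3 hpe)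
      hK hM hN hU hQ0 hp0 s h1 h2
    refine h3.trans ?_
    have h4 : 0 ≤ C0 ^ 3 * (p:ℝ) ^ ε * (K * N * U * (K + M ^ 2) * (1 + Q * M * U / (p:ℝ)) ^ 2) := by
      positivity
    linarith
  by_cases hB1 : (p:ℝ) ^ 2 ≤ |(a:ℝ)| * |(b:ℝ)| * M * U ∨ N * (p:ℝ) ^ 2 ≤ K ∨ K * (p:ℝ) ^ 2 ≤ M ^ 2 * N
  · apply fin 1
    · have h1 : ((TT p a b Kn Mn Nn U1 U2).card : ℝ) ≤
        (Kn:ℝ) ^ 2 * (Mn:ℝ) ^ 4 * ((Icc (-Nn) Nn).card:ℝ) ^ 2 * ((Ioc U1 U2).card:ℝ) ^ 2 := by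
        exact_mod_cast triv_bound p a b Kn Mn Nn U1 U2
      refine h1.trans ?_
      calc _ ≤ K ^ 2 * M ^ 4 * (5 * N) ^ 2 * (2 * U) ^ 2 := by gcongr
        _ = 100 * (K ^ 2 * M ^ 4 * N ^ 2 * U ^ 2) := by ring
        _ ≤ _ := by
          have : 0 ≤ K ^ 2 * M ^ 4 * N ^ 2 * U ^ 2 := by positivity
          linarith
    · rw [mul_one]
      have hQQ : Q ^ 2 ≤ Q ^ 2 * U := le_mul_of_one_le_right (by positivity) hU
      rcases hB1 with h | h | h
      · calc K * N * (p:ℝ) ^ 2 ≤ K * N * (|(a:ℝ)| * |(b:ℝ)| * M * U) := by gcongr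
          _ = (|(a:ℝ)| * K * (|(b:ℝ)| * M * N)) * U := by ring
          _ ≤ _ := by gcongr
      · calc K * N * (p:ℝ) ^ 2 = K * (N * (p:ℝ) ^ 2) := by ring
          _ ≤ Q * Q := by
            apply mul_le_mul hQK (h.trans hQK) (by positivity) hQ0.le
          _ = Q ^ 2 := by ring
          _ ≤ _ := hQQ
      · calc K * N * (p:ℝ) ^ 2 = N * (K * (p:ℝ) ^ 2) := by ring
          _ ≤ N * (M ^ 2 * N) := by gcongr
          _ = (M * N) ^ 2 := by ring
          _ ≤ Q ^ 2 := by gcongr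
          _ ≤ _ := hQQ
  push Not at hB1
  obtain ⟨hs1, hs2, hs3⟩ := hB1
  have hKMN : K * (M * N) ≤ Q ^ 2 := by
    calc K * (M * N) ≤ Q * Q := mul_le_mul hQK hQM (by positivity) hQ0.le
      _ = Q ^ 2 := by ring
  by_cases hB2 : (p:ℝ) ≤ K ∧ (p:ℝ) ≤ N
  · obtain ⟨hpK, hpN⟩ := hB2
    have e1 : ((2 * Nn : ℤ) : ℝ) / p + 1 ≤ 5 * N / p := by
      rw [div_add_one hp0.ne']
      apply div_le_div_of_nonneg_right _ hp0.le
      push_cast; linarith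
    have e0 : 0 ≤ ((2 * Nn : ℤ) : ℝ) / p + 1 := by
      have : (0:ℝ) ≤ ((2 * Nn : ℤ) : ℝ) := by exact_mod_cast (by linarith)
      positivity
    have e2 : (Kn : ℝ) / p + 1 ≤ 2 * K / p := by
      rw [div_add_one hp0.ne']
      apply div_le_div_of_nonneg_right _ hp0.le
      linarith
    by_cases hMp : (p:ℝ) ≤ M
    · apply fin (1 / p)
      · refine (save1 p hp a b hab Kn Mn Nn hN0 U1 U2).trans ?_
        calc _ ≤ (5 * N / p) * (K ^ 2 * M ^ 4 * (5 * N) * (2 * U) ^ 2) := by gcongr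
          _ = 100 * (K ^ 2 * M ^ 4 * N ^ 2 * U ^ 2) * (1 / p) := by ring
          _ ≤ _ := by gcongr; norm_num
      · calc K * N * (1 / (p:ℝ)) * (p:ℝ) ^ 2 = K * (p * N) := by field_simp
          _ ≤ K * (M * N) := by gcongr
          _ ≤ Q ^ 2 := hKMN
          _ ≤ _ := le_mul_of_one_le_right (by positivity) hU
    · push Not at hMp
      have hMnp : Mn < p := by exact_mod_cast lt_of_le_of_lt hMr hMp
      apply fin (1 / p ^ 2)
      · refine (save2 p hp a b hab Kn Mn hK1 hMnp Nn hN0 U1 U2).trans ?_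
        calc _ ≤ ((5 * N / p) * (2 * K / p)) * (K * M ^ 4 * (5 * N) * (2 * U) ^ 2) := by gcongr
          _ = 200 * (K ^ 2 * M ^ 4 * N ^ 2 * U ^ 2) * (1 / p ^ 2) := by ring
          _ ≤ _ := le_rfl
      · calc K * N * (1 / (p:ℝ) ^ 2) * (p:ℝ) ^ 2 = K * (1 * N) := by field_simp
          _ ≤ K * (M * N) := by gcongr
          _ ≤ Q ^ 2 := hKMN
          _ ≤ _ := le_mul_of_one_le_right (by positivity) hU
  -- the main case
  have hp1 : (1:ℝ) ≤ p := by linarith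
  have hKN : K ≤ (p:ℝ) ^ 3 ∧ N ≤ (p:ℝ) ^ 3 := by
    have hp13 : (p:ℝ) ≤ (p:ℝ) ^ 3 := by
      calc (p:ℝ) = (p:ℝ) ^ 1 := by ring
        _ ≤ _ := pow_le_pow_right₀ hp1 (by norm_num)
    have hMN : N ≤ M ^ 2 * N := le_mul_of_one_le_left (by linarith) (one_le_pow₀ hM)
    rcases not_and_or.1 hB2 with h | h
    · push Not at h
      refine ⟨h.le.trans hp13, ?_⟩
      calc N ≤ K * (p:ℝ) ^ 2 := hMN.trans hs3.le
        _ ≤ p * (p:ℝ) ^ 2 := by gcongr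
        _ = _ := by ring
    · push Not at h
      refine ⟨?_, h.le.trans hp13⟩
      calc K ≤ N * (p:ℝ) ^ 2 := hs2.le
        _ ≤ p * (p:ℝ) ^ 2 := by gcongr
        _ = _ := by ring
  obtain ⟨hK3, hN3⟩ := hKN
  have hABMU : 0 < |(a:ℝ)| * |(b:ℝ)| * M * U := by positivity
  have hAp : |(a:ℝ)| ≤ (p:ℝ) ^ 2 := by
    refine le_trans ?_ hs1.le
    calc |(a:ℝ)| = |(a:ℝ)| * 1 * 1 * 1 := by ring
      _ ≤ _ := by gcongr
  have hBMp : |(b:ℝ)| * M ≤ (p:ℝ) ^ 2 := by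
    refine le_trans ?_ hs1.le
    calc |(b:ℝ)| * M = 1 * |(b:ℝ)| * M * 1 := by ring
      _ ≤ _ := by gcongr
  have hMUp : M * U ≤ (p:ℝ) ^ 2 := by
    refine le_trans ?_ hs1.le
    calc M * U = 1 * 1 * M * U := by ring
      _ ≤ _ := by gcongr
  set H : ℤ := 2 * ((|a| * Kn + |b| * Mn * Nn) * Mn * U2) with hH
  have hpz : (0:ℤ) < p := by exact_mod_cast hp.pos
  have hH0 : 0 ≤ H := by positivity
  set L : ℤ := H / p with hLdef
  have hL0 : 0 ≤ L := Int.ediv_nonneg hH0 hpz.le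
  have hpL : p * L ≤ H := Int.mul_ediv_self_le hpz.ne'
  have hL : H < p * (L + 1) := by
    have := Int.lt_mul_ediv_self_add (x := H) hpz
    rw [mul_add, mul_one]; exact this
  set W : ℕ := (2 * H).toNat with hW
  have hWz : (W : ℤ) = 2 * H := Int.toNat_of_nonneg (by linarith)
  have hHr : (H : ℝ) ≤ 4 * (Q * M * U) := by
    rw [hH, hQ]
    push_cast
    have hNn0 : (0:ℝ) ≤ Nn := by exact_mod_cast hN0
    calc 2 * ((|(a:ℝ)| * (Kn:ℝ) + |(b:ℝ)| * Mn * Nn) * Mn * U2)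
        ≤ 2 * ((|(a:ℝ)| * K + |(b:ℝ)| * M * (2 * N)) * M * (2 * U)) := by gcongr
      _ = _ := by ring
  have hWp : (W : ℝ) ≤ (p:ℝ) ^ 14 := by
    have h1 : ((W : ℤ) : ℝ) = 2 * (H : ℝ) := by rw [hWz]; push_cast; ring
    have h2 : (W : ℝ) = 2 * (H : ℝ) := by exact_mod_cast h1
    rw [h2]
    have hQp : Q ≤ 3 * (p:ℝ) ^ 5 := by
      calc Q = |(a:ℝ)| * K + 2 * ((|(b:ℝ)| * M) * N) := by rw [hQ]; ring
        _ ≤ (p:ℝ) ^ 2 * (p:ℝ) ^ 3 + 2 * ((p:ℝ) ^ 2 * (p:ℝ) ^ 3) := by gcongr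
        _ = _ := by ring
    calc 2 * (H:ℝ) ≤ 2 * (4 * (Q * M * U)) := by gcongr
      _ = 8 * Q * (M * U) := by ring
      _ ≤ 8 * (3 * (p:ℝ) ^ 5) * (p:ℝ) ^ 2 := by gcongr
      _ = 24 * (p:ℝ) ^ 7 := by ring
      _ ≤ (2:ℝ) ^ 7 * (p:ℝ) ^ 7 := by gcongr; norm_num
      _ ≤ (p:ℝ) ^ 7 * (p:ℝ) ^ 7 := by gcongr
      _ = _ := by ring
  set d : ℝ := C0 * (p:ℝ) ^ (ε / 3) with hd
  have hd1 : 1 ≤ d := one_le_mul_of_one_le_of_one_le hC0 (Real.one_le_rpow hp1 (by positivity))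
  have hDr : (⌊d⌋₊ : ℝ) ≤ d := Nat.floor_le (by linarith)
  have hd3 : d ^ 3 = C0 ^ 3 * (p:ℝ) ^ ε := by
    rw [hd, mul_pow, ← Real.rpow_natCast ((p:ℝ) ^ (ε / 3)), ← Real.rpow_mul hp0.le]
    congr 2
    push_cast; ring
  have hD : ∀ n : ℕ, n ≠ 0 → n ≤ W → n.divisors.card ≤ ⌊d⌋₊ := by
    intro n hn hnW
    apply Nat.le_floor
    refine (hdv n hn).trans ?_
    rw [hd]
    apply mul_le_mul_of_nonneg_left _ (by linarith)
    have h1 : (n:ℝ) ≤ (p:ℝ) ^ 14 := le_trans (by exact_mod_cast hnW) hWp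
    calc (n:ℝ) ^ (ε / 42) ≤ ((p:ℝ) ^ 14) ^ (ε / 42) :=
          Real.rpow_le_rpow (by positivity) h1 (by positivity)
      _ = (p:ℝ) ^ (ε / 3) := by
        rw [← Real.rpow_natCast (p:ℝ) 14, ← Real.rpow_mul hp0.le]
        congr 1
        push_cast; ring
  have hAz : (1:ℤ) ≤ |a| := Int.one_le_abs ha
  have hw : |a| * Kn * U2 * Mn ≤ H := by
    have h1 : 0 ≤ |b| * Mn * Nn * Mn * U2 := by positivity
    have h2 : 0 ≤ |a| * Kn * U2 * Mn := by positivity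
    rw [hH]
    nlinarith
  have hW2 : |a| * Kn * U2 * Mn + p * L ≤ W := by rw [hWz]; linarith
  have hW1 : Kn * U2 ≤ W := by
    have h1 : (Kn:ℤ) * U2 ≤ |a| * Kn * U2 * Mn := by
      calc (Kn:ℤ) * U2 = 1 * Kn * U2 * 1 := by ring
        _ ≤ _ := by gcongr; exact_mod_cast hM1
    have h2 : (Kn:ℤ) * U2 ≤ W := by rw [hWz]; linarith
    exact_mod_cast h2
  set E : ℕ := ⌊d⌋₊ * (2 * L + 1).toNat + (if p ≤ Kn then Mn else 0) with hE
  have hX0 : 0 ≤ Q * M * U / p := by positivity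
  have hEr : (E : ℝ) ≤ 9 * d * (1 + Q * M * U / p) := by
    have hLr : (L:ℝ) ≤ 4 * (Q * M * U / p) := by
      rw [← mul_div_assoc, le_div_iff₀ hp0]
      have : ((p * L : ℤ) : ℝ) ≤ H := by exact_mod_cast hpL
      push_cast at this
      linarith
    have h1 : (((2 * L + 1).toNat : ℤ) : ℝ) = 2 * L + 1 := by
      rw [Int.toNat_of_nonneg (by omega)]; push_cast; ring
    have h2 : (((2 * L + 1).toNat : ℕ) : ℝ) = 2 * L + 1 := by exact_mod_cast h1
    have h3 : (((if p ≤ Kn then Mn else 0) : ℕ) : ℝ) ≤ Q * M * U / p := by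
      split_ifs with h
      · rw [le_div_iff₀ hp0]
        have h4 : (p:ℝ) ≤ Q := le_trans (le_trans (by exact_mod_cast h) hKr) hQK
        calc (Mn:ℝ) * p ≤ M * Q := by gcongr
          _ = Q * M * 1 := by ring
          _ ≤ _ := by gcongr
      · simpa using hX0
    rw [hE]
    push_cast [h2]
    push_cast at h3
    have hL0r : (0:ℝ) ≤ L := by exact_mod_cast hL0
    have h5 : (⌊d⌋₊ : ℝ) * (2 * L + 1) ≤ d * (2 * (4 * (Q * M * U / p)) + 1) := by gcongr
    nlinarith
  have hmain := mainA p hp a b hab Kn Mn Nn U1 U2 ⌊d⌋₊ W E L hL0 hD hL hW1 hW2 le_rfl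
  have hmain' : ((TT p a b Kn Mn Nn U1 U2).card : ℝ) ≤ (⌊d⌋₊ : ℝ) * ((Kn:ℝ) *
      ((Icc (-Nn) Nn).card : ℝ) * ((Ioc U1 U2).card : ℝ) * Mn * Mn * ((E:ℝ) * E)) := by
    exact_mod_cast hmain
  refine hmain'.trans ?_
  calc _ ≤ d * (K * (5 * N) * (2 * U) * M * M * ((9 * d * (1 + Q * M * U / p)) *
          (9 * d * (1 + Q * M * U / p)))) := by gcongr
    _ = 810 * d ^ 3 * (K * N * U * (M ^ 2) * (1 + Q * M * U / p) ^ 2) := by ring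
    _ ≤ 810 * d ^ 3 * (K * N * U * (K + M ^ 2) * (1 + Q * M * U / p) ^ 2) := by
      gcongr
      linarith
    _ = _ := by rw [hd3]; ring
end

section
/- For every positive integer r there exists a constant C = C(r) such that the following holds. Let p be a prime, let χ be a non-trivial multiplicative character modulo p, let ℳ, 𝒩 ⊆ 𝔽_p be arbitrary subsets with cardinalities M and N respectively, and let (α_m)_{m ∈ ℳ} and (β_n)_{n ∈ 𝒩} be arbitrary complex numbers. Then |∑_{m ∈ ℳ} ∑_{n ∈ 𝒩} α_m·β_n·χ(m + n)| ≤ C · ‖α‖₁^{1 − 1/r} · ‖α‖₂^{1/r} · ‖β‖_∞ · (N·p^{1/(4r)} + N^{1/2}·p^{1/(2r)}), where ‖α‖₁ = ∑_{m ∈ ℳ} |α_m|, ‖α‖₂ = (∑_{m ∈ ℳ} |α_m|²)^{1/2}, and ‖β‖_∞ = max_{n ∈ 𝒩} |β_n|. -/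
open Finset


section kbA
open Polynomial
variable {F : Type} [Field F] [Fintype F]

theorem kb_monic_finite (F : Type) [Field F] [Fintype F] (n : ℕ) :
    {g : F[X] | g.Monic ∧ g.natDegree = n}.Finite := by
  have e := (monicEquivDegreeLT (R := F) n).trans (degreeLTEquiv F n).toEquiv
  exact Set.finite_coe_iff.mp (Finite.of_equiv _ e.symm)

noncomputable def kbM (F : Type) [Field F] [Fintype F] (n : ℕ) : Finset F[X] :=
  (kb_monic_finite F n).toFinset

open scoped Classical in
noncomputable def kbI (F : Type) [Field F] [Fintype F] (n : ℕ) : Finset F[X] :=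
  (kbM F n).filter Irreducible

theorem kb_mem_M {n : ℕ} {g : F[X]} : g ∈ kbM F n ↔ g.Monic ∧ g.natDegree = n := by
  simp [kbM]

theorem kb_mem_I {n : ℕ} {g : F[X]} :
    g ∈ kbI F n ↔ (g.Monic ∧ g.natDegree = n) ∧ Irreducible g := by
  simp [kbI, kb_mem_M]

theorem kb_card_M (n : ℕ) : (kbM F n).card = Fintype.card F ^ n := by
  have e := (monicEquivDegreeLT (R := F) n).trans (degreeLTEquiv F n).toEquiv
  have h1 : (kbM F n).card = Nat.card {g : F[X] | g.Monic ∧ g.natDegree = n} := by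
    rw [kbM, ← Set.ncard_eq_toFinset_card _ (kb_monic_finite F n), ← Nat.card_coe_set_eq]
  rw [h1]
  have := Nat.card_congr e
  rw [Nat.card_fun, Nat.card_fin, Nat.card_eq_fintype_card (α := F)] at this
  exact this

/-- von Mangoldt sums -/
noncomputable def kbL (lam : F[X] → ℂ) (n : ℕ) : ℂ :=
  ∑ x ∈ n.divisorsAntidiagonal, ∑ P ∈ kbI F x.1, (x.1 : ℂ) * lam P ^ x.2

noncomputable def kbA (lam : F[X] → ℂ) (n : ℕ) : ℂ := ∑ g ∈ kbM F n, lam g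

open scoped Classical in
theorem kb_degree_eq (n : ℕ) (g : F[X]) (hg : g ∈ kbM F n) :
    ∑ x ∈ Icc 1 n ×ˢ Icc 1 n, ∑ P ∈ kbI F x.1, (if P ^ x.2 ∣ g then (x.1 : ℂ) else 0) = n := by
  rw [kb_mem_M] at hg
  obtain ⟨hm, hd⟩ := hg
  have hg0 := hm.ne_zero
  set S := UniqueFactorizationMonoid.normalizedFactors g with hS
  have hirr : ∀ P ∈ S, Irreducible P := fun P hP =>
    UniqueFactorizationMonoid.irreducible_of_normalized_factor P hP
  have hmon : ∀ P ∈ S, P.Monic := by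
    intro P hP
    have h1 := UniqueFactorizationMonoid.normalize_normalized_factor P hP
    rw [← h1]
    exact Polynomial.monic_normalize (hirr P hP).ne_zero
  have hprod : S.prod = g := by
    rw [hS, UniqueFactorizationMonoid.prod_normalizedFactors_eq hg0, hm.normalize_eq_self]
  have hdeg : n = ∑ P ∈ S.toFinset, S.count P * P.natDegree := by
    rw [← hd, ← hprod, natDegree_multiset_prod_of_monic _ hmon, Finset.sum_multiset_map_count]
    simp
  have hcnt : ∀ d ∈ Icc 1 n, ∀ P ∈ kbI F d,
      ∑ m ∈ Icc 1 n, (if P ^ m ∣ g then (d : ℂ) else 0) = S.count P * d := by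
    intro d hd1 P hP
    rw [kb_mem_I] at hP
    have hiff : ∀ m, P ^ m ∣ g ↔ m ≤ S.count P := by
      intro m
      rw [pow_dvd_iff_le_emultiplicity,
        UniqueFactorizationMonoid.emultiplicity_eq_count_normalizedFactors hP.2 hg0,
        hP.1.1.normalize_eq_self, Nat.cast_le]
    have hle : S.count P ≤ n := by
      have h1 := (hiff _).2 le_rfl
      have h2 := natDegree_le_of_dvd h1 hg0
      rw [hP.1.1.natDegree_pow, hd, hP.1.2] at h2
      simp at hd1
      nlinarith
    simp only [hiff]
    rw [← Finset.sum_filter, Finset.sum_const, nsmul_eq_mul]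
    congr 2
    have : filter (fun m => m ≤ S.count P) (Icc 1 n) = Icc 1 (S.count P) := by
      ext m; simp; omega
    rw [this]; simp
  rw [Finset.sum_product]
  have hstep : ∀ d ∈ Icc 1 n, ∑ m ∈ Icc 1 n, ∑ P ∈ kbI F (d, m).1, (if P ^ (d,m).2 ∣ g then ((d,m).1 : ℂ) else 0)
      = ∑ P ∈ S.toFinset with P.natDegree = d, (S.count P : ℂ) * P.natDegree := by
    intro d hd1
    dsimp only
    rw [Finset.sum_comm]
    rw [Finset.sum_congr rfl (hcnt d hd1)]
    symm
    rw [Finset.sum_congr rfl (g := fun P => (S.count P : ℂ) * d)]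
    · apply Finset.sum_subset
      · intro P hP
        simp at hP
        rw [kb_mem_I]
        exact ⟨⟨hmon P hP.1, hP.2⟩, hirr P hP.1⟩
      · intro P hP hP2
        rw [kb_mem_I] at hP
        have : P ∉ S := by
          intro h; apply hP2; simp [h, hP.1.2]
        simp [Multiset.count_eq_zero_of_notMem this]
    · intro P hP
      simp at hP; rw [hP.2]
  rw [Finset.sum_congr rfl hstep, Finset.sum_fiberwise_of_maps_to]
  · rw [hdeg]; push_cast; rfl
  · intro P hP
    rw [Multiset.mem_toFinset] at hP
    simp only [mem_Icc]
    refine ⟨(hirr P hP).natDegree_pos, ?_⟩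
    rw [← hd]
    exact natDegree_le_of_dvd (UniqueFactorizationMonoid.dvd_of_mem_normalizedFactors hP) hg0

theorem kb_fiber_sum (lam : F[X] → ℂ) (hmul : ∀ f g, lam (f * g) = lam f * lam g) (h1 : lam 1 = 1)
    (n d m : ℕ) (P : F[X]) (hP : P ∈ kbI F d) (hdm : d * m ≤ n) :
    (open scoped Classical in ∑ g ∈ kbM F n, (if P ^ m ∣ g then lam g else 0))
      = lam P ^ m * kbA lam (n - d * m) := by
  classical
  rw [kb_mem_I] at hP
  have hpow : ∀ m, lam (P ^ m) = lam P ^ m := by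
    intro m; induction m with
    | zero => simp [h1]
    | succ m ih => rw [pow_succ, hmul, ih, pow_succ]
  have hPm : (P ^ m).Monic := hP.1.1.pow m
  have hPd : (P ^ m).natDegree = d * m := by
    rw [hP.1.1.natDegree_pow, hP.1.2, mul_comm]
  rw [← Finset.sum_filter, kbA, Finset.mul_sum]
  symm
  apply Finset.sum_bij (fun h _ => P ^ m * h)
  · intro h hh
    rw [kb_mem_M] at hh
    simp only [mem_filter, kb_mem_M]
    refine ⟨⟨hPm.mul hh.1, ?_⟩, Dvd.intro _ rfl⟩
    rw [hPm.natDegree_mul hh.1, hPd, hh.2]; omega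
  · intro a _ b _ hab
    exact mul_left_cancel₀ hPm.ne_zero hab
  · intro g hg
    simp only [mem_filter, kb_mem_M] at hg
    obtain ⟨⟨hgm, hgd⟩, h, rfl⟩ := hg
    have hhm : h.Monic := hPm.of_mul_monic_left hgm
    refine ⟨h, ?_, rfl⟩
    rw [kb_mem_M]
    refine ⟨hhm, ?_⟩
    rw [hPm.natDegree_mul hhm, hPd] at hgd; omega
  · intro h hh
    rw [hmul, hpow]

theorem kb_newton_poly (lam : F[X] → ℂ) (hmul : ∀ f g, lam (f * g) = lam f * lam g)
    (h1 : lam 1 = 1) (n : ℕ) :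
    (n : ℂ) * kbA lam n
      = ∑ a ∈ antidiagonal n with a.1 < n, kbA lam a.1 * kbL lam a.2 := by
  classical
  have e1 : (n : ℂ) * kbA lam n = ∑ x ∈ Icc 1 n ×ˢ Icc 1 n, ∑ P ∈ kbI F x.1,
      (x.1 : ℂ) * ∑ g ∈ kbM F n, (if P ^ x.2 ∣ g then lam g else 0) := by
    rw [kbA, Finset.mul_sum]
    rw [Finset.sum_congr rfl (fun g hg => by rw [← kb_degree_eq n g hg])]
    simp_rw [Finset.sum_mul, Finset.mul_sum]
    rw [Finset.sum_comm]
    apply Finset.sum_congr rfl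
    intro x _
    rw [Finset.sum_comm]
    apply Finset.sum_congr rfl
    intro P _
    apply Finset.sum_congr rfl
    intro g _
    split_ifs <;> simp
  have e2 : (n : ℂ) * kbA lam n = ∑ x ∈ (Icc 1 n ×ˢ Icc 1 n).filter (fun x => x.1 * x.2 ≤ n),
      ∑ P ∈ kbI F x.1, (x.1 : ℂ) * (lam P ^ x.2 * kbA lam (n - x.1 * x.2)) := by
    rw [e1]
    symm
    rw [Finset.sum_filter]
    apply Finset.sum_congr rfl
    intro x _
    split_ifs with hx
    · apply Finset.sum_congr rfl
      intro P hP
      rw [← kb_fiber_sum lam hmul h1 n x.1 x.2 P hP hx]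
    · symm
      apply Finset.sum_eq_zero
      intro P hP
      rw [Finset.sum_eq_zero, mul_zero]
      intro g hg
      rw [if_neg]
      intro hdvd
      rw [kb_mem_M] at hg
      rw [kb_mem_I] at hP
      have := natDegree_le_of_dvd hdvd hg.1.ne_zero
      rw [hP.1.1.natDegree_pow, hP.1.2, hg.2] at this
      apply hx; linarith
  rw [e2]
  rw [← Finset.sum_fiberwise_of_maps_to (t := Icc 1 n) (g := fun x => x.1 * x.2)]
  · have e3 : ∀ j ∈ Icc 1 n, ∑ x ∈ ((Icc 1 n ×ˢ Icc 1 n).filter (fun x => x.1 * x.2 ≤ n)).filter (fun x => x.1 * x.2 = j),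
        ∑ P ∈ kbI F x.1, (x.1 : ℂ) * (lam P ^ x.2 * kbA lam (n - x.1 * x.2)) = kbA lam (n - j) * kbL lam j := by
      intro j hj
      rw [mem_Icc] at hj
      rw [kbL, Finset.mul_sum]
      apply Finset.sum_congr
      · ext ⟨a, b⟩
        simp only [mem_filter, mem_product, mem_Icc, Nat.mem_divisorsAntidiagonal]
        constructor
        · rintro ⟨_, h⟩; exact ⟨h, by omega⟩
        · rintro ⟨h, _⟩
          have ha : 1 ≤ a := Nat.pos_of_ne_zero (by rintro rfl; simp at h; omega)
          have hb : 1 ≤ b := Nat.pos_of_ne_zero (by rintro rfl; simp at h; omega)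
          refine ⟨⟨⟨⟨ha, ?_⟩, hb, ?_⟩, ?_⟩, h⟩ <;> nlinarith
      · rintro ⟨a, b⟩ hx
        rw [Nat.mem_divisorsAntidiagonal] at hx
        dsimp only at hx ⊢
        rw [hx.1, Finset.mul_sum]
        apply Finset.sum_congr rfl
        intro P _; ring
    rw [Finset.sum_congr rfl e3]
    apply Finset.sum_bij (fun j _ => (n - j, j))
    · intro j hj; simp at hj ⊢; omega
    · intro a _ b _ hab; simpa using (Prod.ext_iff.1 hab).2
    · rintro ⟨a, b⟩ hab
      simp at hab
      refine ⟨b, by simp; omega, ?_⟩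
      ext <;> simp; omega
    · intro j _; rfl
  · rintro ⟨a, b⟩ hx
    simp only [mem_filter, mem_product, mem_Icc] at hx ⊢
    exact ⟨Nat.mul_pos hx.1.1.1 hx.1.2.1, hx.2⟩

/-- total count -/
theorem kb_total (n : ℕ) (hn : 1 ≤ n) :
    kbL (F := F) (fun _ => 1) n = (Fintype.card F : ℂ) ^ n := by
  induction n using Nat.strong_induction_on with
  | _ n ih =>
  have hA : ∀ n, kbA (F := F) (fun _ => 1) n = (Fintype.card F : ℂ) ^ n := by
    intro n; simp [kbA, kb_card_M]
  have h := kb_newton_poly (F := F) (fun _ => 1) (by simp) rfl n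
  simp only [hA] at h
  have hmem : (0, n) ∈ (antidiagonal n).filter (fun a => a.1 < n) := by simp; omega
  rw [← Finset.add_sum_erase _ _ hmem] at h
  have h3 : ∑ x ∈ ((antidiagonal n).filter (fun a => a.1 < n)).erase (0, n),
      (Fintype.card F : ℂ) ^ x.1 * kbL (F := F) (fun _ => 1) x.2
       = ∑ x ∈ ((antidiagonal n).filter (fun a => a.1 < n)).erase (0, n), (Fintype.card F : ℂ) ^ n := by
    apply Finset.sum_congr rfl
    rintro ⟨a, b⟩ hx
    simp at hx
    rw [ih b (by omega) (by omega), ← pow_add, hx.2.1]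
  rw [h3, Finset.sum_const, Finset.card_erase_of_mem hmem] at h
  have hc : ((antidiagonal n).filter (fun a => a.1 < n)).card = n := by
    have : (antidiagonal n).filter (fun a => a.1 < n) = (antidiagonal n).erase (n, 0) := by
      ext ⟨a, b⟩; simp; omega
    rw [this, Finset.card_erase_of_mem (by simp)]; simp
  rw [hc, nsmul_eq_mul, Nat.cast_sub hn] at h
  simp at h
  linear_combination -h
end kbA

section kbB
open Polynomial

theorem kb_count_le {F : Type} [Field F] [Fintype F] (n : ℕ) (Q : ℕ × ℕ → F[X] → Prop)
    [∀ x, DecidablePred (Q x)] (W : F[X]) (hW : W ≠ 0)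
    (h : ∀ x ∈ n.divisorsAntidiagonal, ∀ P ∈ kbI F x.1, Q x P → P ∣ W) :
    ∑ x ∈ n.divisorsAntidiagonal, ∑ P ∈ (kbI F x.1).filter (Q x), x.1 ≤ W.natDegree := by
  classical
  have hdvd : ∏ y ∈ (n.divisorsAntidiagonal).sigma (fun x => (kbI F x.1).filter (Q x)), y.2 ∣ W := by
    apply Finset.prod_dvd_of_coprime
    · rintro ⟨⟨a, b⟩, P⟩ hy ⟨⟨a', b'⟩, P'⟩ hy' hne
      simp only [coe_sigma, Set.mem_sigma_iff, mem_coe, Nat.mem_divisorsAntidiagonal, mem_filter,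
        kb_mem_I] at hy hy'
      apply (Irreducible.isCoprime_or_dvd hy.2.1.2 P').resolve_right
      intro hd
      apply hne
      have hPP : P = P' := eq_of_monic_of_associated hy.2.1.1.1 hy'.2.1.1.1
        (hy.2.1.2.associated_of_dvd hy'.2.1.2 hd)
      have haa : a = a' := by rw [← hy.2.1.1.2, ← hy'.2.1.1.2, hPP]
      have hbb : b = b' := by
        have h1 := hy.1.1
        have h2 := hy'.1.1
        have h3 := hy.1.2
        subst haa
        have ha : 0 < a := Nat.pos_of_ne_zero (by rintro rfl; simp at h1; omega)
        exact Nat.eq_of_mul_eq_mul_left ha (h1.trans h2.symm)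
      subst hPP haa hbb; rfl
    · rintro ⟨x, P⟩ hy
      simp only [mem_sigma, mem_filter] at hy
      exact h x hy.1 P hy.2.1 hy.2.2
  have hle := natDegree_le_of_dvd hdvd hW
  rw [natDegree_prod_of_monic] at hle
  · rw [Finset.sum_sigma] at hle
    refine le_trans (le_of_eq ?_) hle
    apply Finset.sum_congr rfl
    intro x _
    apply Finset.sum_congr rfl
    intro P hP
    simp only [mem_filter, kb_mem_I] at hP
    exact hP.1.1.2.symm
  · rintro ⟨x, P⟩ hy
    simp only [mem_sigma, mem_filter, kb_mem_I] at hy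
    exact hy.2.1.1.1

theorem kb_norm {p : ℕ} [Fact p.Prime] (P : (ZMod p)[X]) (hP : Irreducible P) (hm : P.Monic)
    (a : ZMod p) :
    haveI : Fact (Irreducible P) := ⟨hP⟩
    (algebraMap (ZMod p) (AdjoinRoot P) a - AdjoinRoot.root P) ^ (∑ t ∈ range P.natDegree, p ^ t)
      = algebraMap (ZMod p) (AdjoinRoot P) (P.eval a) := by
  haveI : Fact (Irreducible P) := ⟨hP⟩
  let pb := AdjoinRoot.powerBasis hP.ne_zero
  haveI : Module.Finite (ZMod p) (AdjoinRoot P) := pb.finite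
  haveI : Finite (AdjoinRoot P) := Module.finite_of_finite (ZMod p)
  have hgen : pb.gen = AdjoinRoot.root P := AdjoinRoot.powerBasis_gen hP.ne_zero
  have hfr : Module.finrank (ZMod p) (AdjoinRoot P) = P.natDegree := by
    rw [pb.finrank, AdjoinRoot.powerBasis_dim]
  have h1 := FiniteField.algebraMap_norm_eq_pow_sum (ZMod p) (AdjoinRoot P)
    (algebraMap (ZMod p) (AdjoinRoot P) a - AdjoinRoot.root P)
  rw [hfr, Nat.card_zmod] at h1
  rw [← h1]
  congr 1
  rw [Algebra.norm_eq_matrix_det pb.basis, map_sub, ← hgen]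
  have h2 := charpoly_leftMulMatrix pb
  have h3 : minpoly (ZMod p) pb.gen = P := by
    rw [hgen, AdjoinRoot.minpoly_root hP.ne_zero, hm.leadingCoeff]; simp
  rw [h3] at h2
  conv_rhs => rw [← h2]
  rw [Matrix.eval_charpoly]
  congr 2
  rw [AlgHom.commutes, Matrix.algebraMap_eq_diagonal]
  rfl

noncomputable def kbrho {p : ℕ} {ι : Type} [Fintype ι] (w : ι → ZMod p) (e : ι → ℕ)
    (g : (ZMod p)[X]) : ZMod p := ∏ i, (g.eval (w i)) ^ e i

noncomputable def kbf {p : ℕ} {ι : Type} [Fintype ι] (w : ι → ZMod p) (e : ι → ℕ) :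
    (ZMod p)[X] := ∏ i, (C (w i) - X) ^ e i

theorem kb_geom (p d m : ℕ) :
    ∑ t ∈ range (d * m), p ^ t = (∑ t ∈ range d, p ^ t) * ∑ s ∈ range m, p ^ (d * s) := by
  induction m with
  | zero => simp
  | succ m ih =>
    rw [Nat.mul_succ, Finset.sum_range_add, ih, Finset.sum_range_succ, mul_add]
    congr 1
    rw [Finset.sum_mul]
    apply Finset.sum_congr rfl
    intro t _
    rw [pow_add]; ring

theorem kb_norm_f {p : ℕ} [Fact p.Prime] {ι : Type} [Fintype ι] (w : ι → ZMod p) (e : ι → ℕ)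
    (P : (ZMod p)[X]) (hP : Irreducible P) (hm : P.Monic) (n m : ℕ) (hn : P.natDegree * m = n) :
    haveI : Fact (Irreducible P) := ⟨hP⟩
    (aeval (AdjoinRoot.root P) (kbf w e)) ^ (∑ t ∈ range n, p ^ t)
      = algebraMap (ZMod p) (AdjoinRoot P) (kbrho w e P ^ m) := by
  haveI : Fact (Irreducible P) := ⟨hP⟩
  rw [← hn, kb_geom, pow_mul]
  have h1 : (aeval (AdjoinRoot.root P) (kbf w e)) ^ (∑ t ∈ range P.natDegree, p ^ t)
      = algebraMap (ZMod p) (AdjoinRoot P) (kbrho w e P) := by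
    rw [kbf, kbrho, map_prod, map_prod, ← Finset.prod_pow]
    apply Finset.prod_congr rfl
    intro i _
    rw [map_pow, map_pow, ← kb_norm P hP hm (w i), ← pow_mul, ← pow_mul, mul_comm]
    simp
  rw [h1, ← map_pow]
  congr 1
  rw [← Finset.prod_pow_eq_pow_sum]
  simp [ZMod.pow_card_pow]

theorem kb_frob {p : ℕ} [Fact p.Prime] 
    (P : (ZMod p)[X]) (hP : Irreducible P) (n m : ℕ) (hn : P.natDegree * m = n) :
    haveI : Fact (Irreducible P) := ⟨hP⟩
    (AdjoinRoot.root P) ^ (p ^ n) = AdjoinRoot.root P := by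
  haveI : Fact (Irreducible P) := ⟨hP⟩
  let pb := AdjoinRoot.powerBasis hP.ne_zero
  haveI : Module.Finite (ZMod p) (AdjoinRoot P) := pb.finite
  haveI : Finite (AdjoinRoot P) := Module.finite_of_finite (ZMod p)
  haveI := Fintype.ofFinite (AdjoinRoot P)
  have hfr : Module.finrank (ZMod p) (AdjoinRoot P) = P.natDegree := by
    rw [pb.finrank, AdjoinRoot.powerBasis_dim]
  have hc := Module.card_eq_pow_finrank (K := ZMod p) (V := AdjoinRoot P)
  rw [hfr, ZMod.card] at hc
  have := FiniteField.pow_card_pow (K := AdjoinRoot P) m (AdjoinRoot.root P)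
  rwa [hc, ← pow_mul, hn] at this
end kbB

section kbB2
open Polynomial

theorem kb_W_ne {F : Type} [Field F] (g : F[X]) (hg : g.coeff 0 ≠ 0) (d J E R : ℕ) (hdE : d * E + 1 = R)
    (c : Fin d × Fin J × Fin E → F) (hc : c ≠ 0) :
    ∑ x, c x • (X ^ ((x.2.2 : ℕ) + x.2.1 * R) * (X * g) ^ (E * (x.1 : ℕ)) : F[X]) ≠ 0 := by
  classical
  let v : Fin d × Fin J × Fin E → ℕ := fun x => x.2.2 + x.2.1 * R + E * x.1
  have hv : Function.Injective v := by
    rintro ⟨i, j, t⟩ ⟨i', j', t'⟩ h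
    simp only [v] at h
    have b1 : (t:ℕ) + E * i < R := by
      have := i.2; have := t.2
      have : E * (i+1) ≤ E * d := Nat.mul_le_mul_left _ i.2
      nlinarith
    have b2 : (t':ℕ) + E * i' < R := by
      have := i'.2; have := t'.2
      have : E * (i'+1) ≤ E * d := Nat.mul_le_mul_left _ i'.2
      nlinarith
    have hj : (j:ℕ) = j' := by
      have h1 : ((t:ℕ) + E * i + R * j) / R = j := by
        rw [Nat.add_mul_div_left _ _ (by omega), Nat.div_eq_of_lt b1, zero_add]
      have h2 : ((t':ℕ) + E * i' + R * j') / R = j' := by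
        rw [Nat.add_mul_div_left _ _ (by omega), Nat.div_eq_of_lt b2, zero_add]
      rw [← h1, ← h2]; congr 1; linarith
    rw [hj] at h
    have h' : (t:ℕ) + E * i = t' + E * i' := by linarith
    have hE : 0 < E := by have := t.2; omega
    have hi : (i:ℕ) = i' := by
      have h1 : ((t:ℕ) + E * i) / E = i := by
        rw [Nat.add_mul_div_left _ _ hE, Nat.div_eq_of_lt t.2, zero_add]
      have h2 : ((t':ℕ) + E * i') / E = i' := by
        rw [Nat.add_mul_div_left _ _ hE, Nat.div_eq_of_lt t'.2, zero_add]
      rw [← h1, ← h2, h']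
    rw [hi] at h'
    have ht : (t:ℕ) = t' := by omega
    simp [Fin.ext_iff, hi, hj, ht]
  have hex : (univ.filter (fun x => c x ≠ 0)).Nonempty := by
    obtain ⟨x, hx⟩ := Function.ne_iff.1 hc
    exact ⟨x, by simpa using hx⟩
  obtain ⟨x0, hx0, hmin⟩ := Finset.exists_min_image _ v hex
  simp only [mem_filter, mem_univ, true_and] at hx0 hmin
  have hterm : ∀ x, (X ^ ((x.2.2 : ℕ) + x.2.1 * R) * (X * g) ^ (E * (x.1 : ℕ)) : F[X])
      = g ^ (E * (x.1 : ℕ)) * X ^ v x := by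
    intro x
    simp only [v]; rw [mul_pow, pow_add X _ (E * _)]; ring
  intro h0
  have h1 := congrArg (fun q => q.coeff (v x0)) h0
  simp only [finsetSum_coeff, coeff_smul, coeff_zero, hterm] at h1
  rw [Finset.sum_eq_single x0] at h1
  · rw [coeff_mul_X_pow', if_pos le_rfl, Nat.sub_self, coeff_zero_eq_eval_zero, eval_pow,
      ← coeff_zero_eq_eval_zero] at h1
    simp only [smul_eq_mul] at h1
    exact (mul_ne_zero hx0 (pow_ne_zero _ hg)) h1
  · intro x _ hx
    by_cases hcx : c x = 0
    · simp [hcx]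
    · have := hmin x hcx
      have hne : v x0 ≠ v x := fun h => hx (hv h).symm
      rw [coeff_mul_X_pow', if_neg (by omega), smul_zero]
  · simp

theorem kb_stepanov {p : ℕ} [Fact p.Prime] (k E R D : ℕ) (hR : R = p ^ k)
    (hdE : (p - 1) * E + 1 = R) (f g : (ZMod p)[X]) (hfg : f = X * g) (hg : g.coeff 0 ≠ 0)
    (hD : f.natDegree ≤ D) (hbig : E + D + 2 < R) (z : ZMod p) (hz : z ≠ 0) :
    ∃ W : (ZMod p)[X], W ≠ 0 ∧ W.natDegree ≤ E * R + (2 * D + 2) * R ∧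
      ∀ (L : Type) [Field L] [Algebra (ZMod p) L] (θ : L), θ ^ (p ^ (2 * k)) = θ →
        (aeval θ f) ^ (E * (R + 1)) = algebraMap (ZMod p) L z → aeval θ W = 0 := by
  classical
  obtain ⟨d, hd⟩ : ∃ d, d = p - 1 := ⟨_, rfl⟩
  rw [← hd] at hdE
  have hE : 0 < E := Nat.pos_of_ne_zero (by rintro rfl; omega)
  set J := E + D + 2 with hJ
  set M := E * R + J + D * R with hM
  let T : Fin d × Fin J × Fin E → (ZMod p)[X] := fun x =>
    X ^ ((x.2.2 : ℕ) * R + x.2.1) * C (z ^ (x.1 : ℕ)) * f ^ (E * (d - 1 - x.1))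
  have hT : ∀ x, T x ∈ degreeLT (ZMod p) M := by
    rintro ⟨i, j, t⟩
    rw [mem_degreeLT]
    refine lt_of_le_of_lt degree_le_natDegree ?_
    norm_cast
    have h1 : (T (i, j, t)).natDegree ≤ (t * R + j) + 0 + (E * (d - 1 - i)) * D := by
      refine natDegree_mul_le.trans (add_le_add (natDegree_mul_le.trans (add_le_add ?_ ?_)) ?_)
      · exact natDegree_X_pow_le _
      · simp
      · exact natDegree_pow_le.trans (Nat.mul_le_mul_left _ hD)
    refine lt_of_le_of_lt h1 ?_
    have ht : ((t:ℕ) + 1) * R ≤ E * R := Nat.mul_le_mul_right _ t.2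
    have hj := j.2
    have h2 : E * (d - 1 - i) ≤ R := by
      have : E * (d - 1 - i) ≤ E * d := Nat.mul_le_mul_left _ (by omega)
      nlinarith
    have h3 : E * (d - 1 - i) * D ≤ R * D := Nat.mul_le_mul_right _ h2
    nlinarith
  let Φ : (Fin d × Fin J × Fin E → ZMod p) →ₗ[ZMod p] degreeLT (ZMod p) M :=
    (Fintype.linearCombination (ZMod p) T).codRestrict (degreeLT (ZMod p) M) (by
      intro c
      rw [Fintype.linearCombination_apply]
      exact Submodule.sum_mem _ (fun x _ => Submodule.smul_mem _ _ (hT x)))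
  haveI : FiniteDimensional (ZMod p) (degreeLT (ZMod p) M) :=
    Module.Finite.equiv (degreeLTEquiv (ZMod p) M).symm
  have hker : LinearMap.ker Φ ≠ ⊥ := by
    apply LinearMap.ker_ne_bot_of_finrank_lt
    rw [(degreeLTEquiv (ZMod p) M).finrank_eq, Module.finrank_fintype_fun_eq_card,
      Module.finrank_fintype_fun_eq_card]
    simp only [Fintype.card_fin, Fintype.card_prod]
    have : d * (J * E) = J * (d * E) := by ring
    rw [this]
    have h4 : J * (d * E) + J = J * R := by rw [← hdE]; ring
    have h5 : J * R = E * R + D * R + 2 * R := by rw [hJ]; ring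
    omega
  obtain ⟨c, hcker, hc⟩ := Submodule.exists_mem_ne_zero_of_ne_bot hker
  have hE0 : ∑ x, c x • T x = 0 := by
    have := congrArg Subtype.val (LinearMap.mem_ker.1 hcker)
    simpa [Φ, Fintype.linearCombination_apply] using this
  refine ⟨∑ x, c x • (X ^ ((x.2.2 : ℕ) + x.2.1 * R) * f ^ (E * (x.1 : ℕ))), ?_, ?_, ?_⟩
  · rw [hfg]
    exact kb_W_ne g hg d J E R hdE c hc
  · apply natDegree_sum_le_of_forall_le
    rintro ⟨i, j, t⟩ _
    refine (natDegree_smul_le _ _).trans ?_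
    have h1 : (X ^ ((t : ℕ) + (j:ℕ) * R) * f ^ (E * (i : ℕ))).natDegree ≤ ((t:ℕ) + (j:ℕ) * R) + (E * (i:ℕ)) * D := by
      refine natDegree_mul_le.trans (add_le_add ?_ ?_)
      · exact natDegree_X_pow_le _
      · exact natDegree_pow_le.trans (Nat.mul_le_mul_left _ hD)
    refine h1.trans ?_
    have ht := t.2
    have hj : ((j:ℕ) + 1) * R ≤ J * R := Nat.mul_le_mul_right _ j.2
    have h2 : E * i ≤ R := by
      have : E * i ≤ E * d := Nat.mul_le_mul_left _ (by omega)
      nlinarith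
    have h3 : E * i * D ≤ R * D := Nat.mul_le_mul_right _ h2
    have h5 : J * R = E * R + D * R + 2 * R := by rw [hJ]; ring
    nlinarith
  · intro L _ _ θ hθ hfz
    haveI : CharP L p := charP_of_injective_algebraMap (algebraMap (ZMod p) L).injective p
    haveI : ExpChar L p := ExpChar.prime Fact.out
    set y := aeval θ f with hy
    have hzL : algebraMap (ZMod p) L z ≠ 0 := by
      rwa [Ne, FaithfulSMul.algebraMap_eq_zero_iff]
    have hy0 : y ≠ 0 := by
      intro h; rw [h, zero_pow] at hfz
      · exact hzL hfz.symm
      · positivity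
    have hRR : p ^ (2 * k) = R * R := by rw [hR, ← pow_add, two_mul]
    rw [hRR] at hθ
    have key : y ^ (E * (d - 1)) * (aeval θ (∑ x, c x • (X ^ ((x.2.2 : ℕ) + x.2.1 * R) * f ^ (E * (x.1 : ℕ))))) ^ R
        = aeval θ (∑ x, c x • T x) := by
      rw [map_sum, map_sum, hR, sum_pow_char_pow, Finset.mul_sum, ← hR]
      apply Finset.sum_congr rfl
      rintro ⟨i, j, t⟩ _
      have hcR : (c (i,j,t)) ^ R = c (i,j,t) := by rw [hR]; exact ZMod.pow_card_pow _
      simp only [T, map_smul, map_mul, map_pow, aeval_X, aeval_C, ← hy]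
      rw [_root_.smul_pow, hcR, mul_smul_comm]
      congr 1
      rw [← hfz]
      have e1 : (θ ^ ((t:ℕ) + j * R)) ^ R = θ ^ ((t:ℕ) * R + j) := by
        rw [← pow_mul, add_mul, pow_add, pow_add]
        congr 1
        rw [mul_assoc, mul_comm, pow_mul, hθ]
      rw [mul_pow, e1]
      have hi : E * (d - 1) = E * (d - 1 - i) + E * i := by
        rw [← mul_add]; congr 1; have := i.2; omega
      rw [hi]
      ring
    rw [hE0, map_zero] at key
    rcases mul_eq_zero.1 key with h | h
    · exact absurd h (pow_ne_zero _ hy0)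
    · exact pow_eq_zero_iff (by omega) |>.1 h
end kbB2


theorem kb_power_sum {ι : Type} [Fintype ι] (z : ι → ℂ) (ρ C : ℝ) (hρ : 0 < ρ) (m0 : ℕ)
    (h : ∀ m ≥ m0, ‖∑ i, z i ^ m‖ ≤ C * ρ ^ m) (i : ι) : ‖z i‖ ≤ ρ := by
  classical
  by_contra hcon
  push Not at hcon
  -- unit vectors
  have hu : ∀ w : ℂ, ∃ u : Circle, w = ‖w‖ * (u : ℂ) := by
    intro w
    refine ⟨Circle.exp w.arg, ?_⟩
    rw [Circle.coe_exp, Complex.norm_mul_exp_arg_mul_I]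
  choose u hu using fun i => hu (z i)
  have hcl := mapClusterPt_one_atTop_pow (G := ι → Circle) u
  have hU : {v : ι → Circle | ∀ i, (1/2 : ℝ) < ((v i : Circle) : ℂ).re} ∈ nhds (1 : ι → Circle) := by
    apply IsOpen.mem_nhds
    · rw [Set.ofPred_forall]
      apply isOpen_iInter_of_finite
      intro j
      apply isOpen_lt continuous_const
      exact Complex.continuous_re.comp ((by fun_prop : Continuous (fun x : Circle => (x:ℂ))).comp (continuous_apply j))
    · intro j; simp; norm_num
  have hfr := hcl.frequently hU
  have hgrow : Filter.Tendsto (fun m : ℕ => (‖z i‖ / ρ) ^ m) Filter.atTop Filter.atTop :=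
    tendsto_pow_atTop_atTop_of_one_lt ((one_lt_div hρ).2 hcon)
  have hev := (hgrow.eventually_gt_atTop (2 * C)).and (Filter.eventually_ge_atTop m0)
  obtain ⟨m, hm1, hm2, hm3⟩ := (hfr.and_eventually hev).exists
  have h1 := h m hm3
  have hre : ∀ j, (1/2) * ‖z j‖ ^ m ≤ (z j ^ m).re := by
    intro j
    have : z j ^ m = ((‖z j‖ ^ m : ℝ) : ℂ) * (((u ^ m) j : Circle) : ℂ) := by
      conv_lhs => rw [hu j]
      rw [mul_pow]; simp
    rw [this, Complex.re_ofReal_mul]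
    have := hm1 j
    nlinarith [pow_nonneg (norm_nonneg (z j)) m]
  have h2 : (1/2) * ‖z i‖ ^ m ≤ ‖∑ i, z i ^ m‖ := by
    calc (1/2) * ‖z i‖ ^ m ≤ ∑ j, (1/2) * ‖z j‖ ^ m :=
          Finset.single_le_sum (f := fun j => (1/2) * ‖z j‖ ^ m) (fun j _ => by positivity) (Finset.mem_univ i)
      _ ≤ ∑ j, (z j ^ m).re := Finset.sum_le_sum (fun j _ => hre j)
      _ = (∑ j, z j ^ m).re := by rw [Complex.re_sum]
      _ ≤ _ := Complex.re_le_norm _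
  rw [div_pow, lt_div_iff₀ (by positivity)] at hm2
  linarith

theorem kb_newton (k : ℕ) (A L : ℕ → ℂ) (h0 : A 0 = 1) (hk : ∀ n, k ≤ n → A n = 0)
    (hN : ∀ n : ℕ, (n : ℂ) * A n = ∑ a ∈ antidiagonal n with a.1 < n, A a.1 * L a.2) :
    ∃ w : Fin k → ℂ, ∀ n, 1 ≤ n → L n = - ∑ i, w i ^ n := by
  classical
  let B : Polynomial ℂ := ∑ n ∈ range (k+1), Polynomial.monomial (k - n) (A n)
  have hBc : ∀ n ≤ k, B.coeff (k - n) = A n := by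
    intro n hn
    simp only [B, Polynomial.finsetSum_coeff, Polynomial.coeff_monomial]
    rw [Finset.sum_eq_single n]
    · simp
    · intro b hb hbn
      rw [if_neg]; simp at hb; omega
    · intro hh; simp at hh; omega
  have hBd : B.natDegree ≤ k := by
    apply Polynomial.natDegree_sum_le_of_forall_le
    intro n _
    exact (Polynomial.natDegree_monomial_le _).trans (Nat.sub_le _ _)
  have hBk : B.coeff k = 1 := by simpa [h0] using hBc 0 (Nat.zero_le _)
  have hBm : B.Monic := Polynomial.monic_of_natDegree_le_of_coeff_eq_one k hBd hBk
  have hBd' : B.natDegree = k := by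
    apply le_antisymm hBd
    apply Polynomial.le_natDegree_of_ne_zero; rw [hBk]; exact one_ne_zero
  have hcard : B.roots.card = B.natDegree := 
    Polynomial.splits_iff_card_roots.mp (IsAlgClosed.splits B)
  have hl : B.roots.toList.length = k := by simp [hcard, hBd']
  let w : Fin k → ℂ := fun i => B.roots.toList.get (i.cast hl.symm)
  have hw : Multiset.map w univ.val = B.roots := by
    conv_rhs => rw [← Multiset.coe_toList B.roots]
    rw [Fin.univ_val_map]
    congr 1
    apply List.ext_get
    · simp [hl]
    · intro n h1 h2; simp [w]
  have hes : ∀ n, MvPolynomial.aeval w (MvPolynomial.esymm (Fin k) ℂ n) = (-1)^n * A n := by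
    intro n
    rw [MvPolynomial.aeval_esymm_eq_multiset_esymm, hw]
    by_cases hn : n ≤ k
    · have := Polynomial.coeff_eq_esymm_roots_of_card hcard (k := k - n) (by omega)
      rw [hBc n hn, hBm.leadingCoeff, hBd', Nat.sub_sub_self hn] at this
      rw [this]
      rw [one_mul, ← mul_assoc, ← mul_pow]; simp
    · rw [hk n (by omega)]
      have : B.roots.card < n := by omega
      simp [Multiset.esymm, Multiset.powersetCard_eq_empty n this]
  refine ⟨w, fun n hn => ?_⟩
  induction n using Nat.strong_induction_on with
  | _ n ih =>
    have h1 := congrArg (MvPolynomial.aeval w) (MvPolynomial.mul_esymm_eq_sum (Fin k) ℂ n)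
    simp only [map_mul, map_natCast, map_pow, map_neg, map_one, map_sum, hes, MvPolynomial.psum,
      MvPolynomial.aeval_X] at h1
    have h2 : (n : ℂ) * A n = - ∑ a ∈ antidiagonal n with a.1 < n, A a.1 * ∑ i, w i ^ a.2 := by
      have hsq : ((-1 : ℂ)^n) * (-1)^n = 1 := by rw [← mul_pow]; simp
      have : (n : ℂ) * A n = (-1)^n * (n * ((-1)^n * A n)) := by
        linear_combination (- (n : ℂ) * A n) * hsq
      rw [this, h1, pow_succ]
      rw [Finset.mul_sum, Finset.mul_sum, ← Finset.sum_neg_distrib]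
      apply Finset.sum_congr rfl
      intro a ha
      have hsq2 : ((-1 : ℂ)^a.1) * (-1)^a.1 = 1 := by rw [← mul_pow]; simp
      linear_combination (-(-1)^a.1*(-1)^a.1* A a.1 * ∑ i, w i ^ a.2) * hsq - A a.1 * (∑ i, w i ^ a.2) * hsq2
    rw [hN n, ← Finset.sum_neg_distrib] at h2
    have hmem : (0, n) ∈ (antidiagonal n).filter (fun a => a.1 < n) := by simp; omega
    rw [← Finset.add_sum_erase _ _ hmem, ← Finset.add_sum_erase _ _ hmem] at h2
    have h3 : ∑ x ∈ ((antidiagonal n).filter (fun a => a.1 < n)).erase (0, n), A x.1 * L x.2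
       = ∑ x ∈ ((antidiagonal n).filter (fun a => a.1 < n)).erase (0, n), -(A x.1 * ∑ i, w i ^ x.2) := by
      apply Finset.sum_congr rfl
      rintro ⟨a, b⟩ hx
      simp at hx
      rw [ih b (by omega) (by omega)]; ring
    rw [h3] at h2
    have h4 := add_right_cancel h2
    simpa [h0] using h4

theorem kb_analytic (k : ℕ) (A L : ℕ → ℂ) (h0 : A 0 = 1) (hk : ∀ n, k ≤ n → A n = 0)
    (hN : ∀ n : ℕ, (n : ℂ) * A n = ∑ a ∈ antidiagonal n with a.1 < n, A a.1 * L a.2)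
    (q C : ℝ) (hq : 0 < q) (m0 : ℕ) (hL : ∀ m ≥ m0, ‖L (2 * m)‖ ≤ C * q ^ m) :
    ‖A 1‖ ≤ k * Real.sqrt q := by
  obtain ⟨w, hw⟩ := kb_newton k A L h0 hk hN
  have h1 : A 1 = L 1 := by
    have := hN 1
    rw [Finset.sum_filter] at this
    simpa [h0, Finset.Nat.antidiagonal_succ] using this
  have h2 : ∀ i, ‖w i‖ ≤ Real.sqrt q := by
    intro i
    have := kb_power_sum (fun i => w i ^ 2) q C hq (m0 + 1) (by
      intro m hm
      have := hL m (by omega)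
      rw [hw _ (by omega), norm_neg] at this
      simpa [← pow_mul] using this) i
    apply Real.le_sqrt_of_sq_le
    simpa using this
  rw [h1, hw 1 le_rfl, norm_neg]
  calc ‖∑ i, w i ^ 1‖ ≤ ∑ i, ‖w i ^ 1‖ := norm_sum_le _ _
    _ ≤ ∑ i : Fin k, Real.sqrt q := Finset.sum_le_sum (fun i _ => by simpa using h2 i)
    _ = _ := by simp

section kbB3
open Polynomial

theorem kb_p_ge {p : ℕ} [Fact p.Prime] (χ : MulChar (ZMod p) ℂ) (hχ : χ ≠ 1) : 3 ≤ p := by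
  by_contra h
  have h2 := (Fact.out : p.Prime).two_le
  have : p = 2 := by omega
  subst this
  apply hχ
  ext a
  have : a = 1 := by
    revert a; decide
  simp [this]

theorem kb_L_bound {p : ℕ} [Fact p.Prime] (χ : MulChar (ZMod p) ℂ) (hχ : χ ≠ 1)
    {ι : Type} [Fintype ι] [DecidableEq ι] (w : ι → ZMod p) (e : ι → ℕ) (i0 : ι)
    (hw0 : w i0 = 0) (he0 : e i0 = 1) (hw : ∀ i, i ≠ i0 → w i ≠ 0) :
    ∃ (C : ℝ) (k0 : ℕ), ∀ k ≥ k0,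
      ‖kbL (fun g : (ZMod p)[X] => χ (kbrho w e g)) (2 * k)‖ ≤ C * (p : ℝ) ^ k := by
  classical
  have hp3 := kb_p_ge χ hχ
  set f := kbf w e with hf
  set D := f.natDegree with hD
  let g : (ZMod p)[X] := - ∏ i ∈ univ.erase i0, (C (w i) - X) ^ e i
  have hfg : f = X * g := by
    rw [hf, kbf, ← Finset.mul_prod_erase _ _ (mem_univ i0), hw0, he0]
    simp [g]
  have hg : g.coeff 0 ≠ 0 := by
    rw [coeff_zero_eq_eval_zero]
    simp only [g, eval_neg, eval_prod, eval_pow, eval_sub, eval_C, eval_X, sub_zero]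
    rw [neg_ne_zero, Finset.prod_ne_zero_iff]
    intro i hi
    exact pow_ne_zero _ (hw i (Finset.ne_of_mem_erase hi))
  refine ⟨((p - 1 : ℕ) : ℝ) * (2 * D + 2) + Fintype.card ι, 2 * D + 4, fun k hk => ?_⟩
  set n := 2 * k with hn
  set R := p ^ k with hR
  set E := ∑ t ∈ range k, p ^ t with hE
  have hdE : (p - 1) * E + 1 = R := by
    have := Nat.geomSum_eq (m := p) (by omega) k
    have h1 : (p - 1) ∣ p ^ k - 1 := by simpa using Nat.sub_dvd_pow_sub_pow p 1 k
    rw [hE, this, Nat.mul_div_cancel' h1]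
    have : 0 < p ^ k := by positivity
    omega
  have hbig : E + D + 2 < R := by
    have h1 : k < p ^ k := Nat.lt_pow_self (by omega)
    have h2 : 2 * E ≤ (p - 1) * E := Nat.mul_le_mul_right _ (by omega)
    omega
  have hsum : ∑ t ∈ range n, p ^ t = E * (R + 1) := by
    rw [hn, mul_comm 2 k, kb_geom]
    simp [Finset.sum_range_succ, hE, hR, add_comm]
  -- counts
  let N : ZMod p → ℕ := fun z => ∑ x ∈ n.divisorsAntidiagonal,
    ∑ P ∈ (kbI (ZMod p) x.1).filter (fun P => kbrho w e P ^ x.2 = z), x.1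
  have hNz : ∀ z, z ≠ 0 → N z ≤ E * R + (2 * D + 2) * R := by
    intro z hz
    obtain ⟨W, hW0, hWd, hW⟩ := kb_stepanov k E R D hR hdE f g hfg hg le_rfl hbig z hz
    refine le_trans (kb_count_le n (fun x P => kbrho w e P ^ x.2 = z) W hW0 ?_) hWd
    rintro ⟨a, b⟩ hx P hP hPz
    rw [Nat.mem_divisorsAntidiagonal] at hx
    rw [kb_mem_I] at hP
    have hab : P.natDegree * b = n := by rw [hP.1.2]; exact hx.1
    haveI : Fact (Irreducible P) := ⟨hP.2⟩
    have h1 := hW (AdjoinRoot P) (AdjoinRoot.root P) (kb_frob P hP.2 n b hab) (by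
      rw [← hsum, kb_norm_f w e P hP.2 hP.1.1 n b hab, hPz])
    rw [AdjoinRoot.aeval_eq, AdjoinRoot.mk_eq_zero] at h1
    exact h1
  have hN0 : N 0 ≤ Fintype.card ι := by
    have hm : ∀ i ∈ (univ : Finset ι), (X - C (w i)).Monic := fun i _ => monic_X_sub_C _
    have hd : (∏ i, (X - C (w i))).natDegree = Fintype.card ι := by
      rw [natDegree_prod_of_monic _ _ hm]; simp
    rw [← hd]
    refine kb_count_le n (fun x P => kbrho w e P ^ x.2 = 0) _ (monic_prod_of_monic _ _ hm).ne_zero ?_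
    rintro ⟨a, b⟩ hx P hP hPz
    rw [kb_mem_I] at hP
    have h1 := eq_zero_of_pow_eq_zero hPz
    rw [kbrho, Finset.prod_eq_zero_iff] at h1
    obtain ⟨i, _, hi⟩ := h1
    have h2 := eq_zero_of_pow_eq_zero hi
    have h3 : X - C (w i) ∣ P := dvd_iff_isRoot.2 h2
    have h4 : P ∣ X - C (w i) :=
      ((irreducible_X_sub_C (w i)).associated_of_dvd hP.2 h3).symm.dvd
    exact h4.trans (Finset.dvd_prod_of_mem _ (mem_univ i))
  have hfib : ∀ φ : ZMod p → ℂ, ∑ x ∈ n.divisorsAntidiagonal, ∑ P ∈ kbI (ZMod p) x.1,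
      (x.1 : ℂ) * φ (kbrho w e P ^ x.2) = ∑ z, φ z * N z := by
    intro φ
    simp only [N]
    push_cast
    simp_rw [Finset.mul_sum]
    rw [Finset.sum_comm]
    apply Finset.sum_congr rfl
    intro x _
    rw [← Finset.sum_fiberwise (kbI (ZMod p) x.1) (fun P => kbrho w e P ^ x.2)]
    apply Finset.sum_congr rfl
    intro z _
    apply Finset.sum_congr rfl
    intro P hP
    simp only [mem_filter] at hP
    rw [hP.2, mul_comm]
  have htot : ∑ z, N z = R ^ 2 := by
    have h1 := hfib (fun _ => 1)
    have h2 := kb_total (F := ZMod p) n (by omega)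
    rw [kbL] at h2
    simp only [one_pow] at h2
    rw [h2, ZMod.card] at h1
    have h3 : ((∑ z, N z : ℕ) : ℂ) = ((R ^ 2 : ℕ) : ℂ) := by
      push_cast
      simp only [one_mul] at h1
      rw [← h1, hR, hn]; push_cast; rw [← pow_mul, mul_comm]
    exact_mod_cast h3
  have hL : kbL (fun g : (ZMod p)[X] => χ (kbrho w e g)) n = ∑ z, χ z * N z := by
    rw [← hfib χ, kbL]
    simp only [map_pow]
  set U : ℕ := E * R + (2 * D + 2) * R with hU
  have hshift : ∑ z, χ z * N z = - ∑ z ∈ univ.erase 0, χ z * ((U : ℂ) - N z) := by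
    have h1 : ∑ z, χ z * (U : ℂ) = 0 := by
      rw [← Finset.sum_mul, MulChar.sum_eq_zero_of_ne_one hχ, zero_mul]
    have h2 : ∑ z, χ z * ((U : ℂ) - N z) = ∑ z ∈ univ.erase 0, χ z * ((U : ℂ) - N z) := by
      rw [← Finset.add_sum_erase _ _ (mem_univ (0 : ZMod p)), MulChar.map_zero]; simp
    rw [← h2]
    simp only [mul_sub, Finset.sum_sub_distrib]
    rw [h1]; ring
  rw [hL, hshift, norm_neg]
  have hterm : ∀ z ∈ univ.erase (0 : ZMod p), ‖χ z * ((U : ℂ) - N z)‖ ≤ (U : ℝ) - N z := by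
    intro z hz
    rw [norm_mul]
    have h1 : ‖χ z‖ ≤ 1 := DirichletCharacter.norm_le_one χ z
    have h2 : (N z : ℝ) ≤ U := by exact_mod_cast hNz z (Finset.ne_of_mem_erase hz)
    have h3 : ‖(U : ℂ) - N z‖ = (U : ℝ) - N z := by
      have : (U : ℂ) - N z = (((U : ℝ) - N z : ℝ) : ℂ) := by push_cast; rfl
      rw [this, Complex.norm_real, Real.norm_eq_abs, abs_of_nonneg (by linarith)]
    rw [h3]
    nlinarith
  refine (norm_sum_le _ _).trans ((Finset.sum_le_sum hterm).trans ?_)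
  rw [Finset.sum_sub_distrib, Finset.sum_const, Finset.card_erase_of_mem (mem_univ _), card_univ,
    ZMod.card, nsmul_eq_mul]
  have htot' : ∑ z ∈ univ.erase (0 : ZMod p), (N z : ℝ) = (R:ℝ) ^ 2 - N 0 := by
    have : (∑ z, N z : ℝ) = (R : ℝ) ^ 2 := by exact_mod_cast htot
    rw [← Finset.add_sum_erase _ _ (mem_univ (0 : ZMod p))] at this
    linarith
  rw [htot', hU]
  have hdE' : ((p - 1 : ℕ) : ℝ) * E + 1 = R := by exact_mod_cast hdE
  have hRp : (p : ℝ) ^ k = R := by rw [hR]; push_cast; rfl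
  have hN0' : (N 0 : ℝ) ≤ Fintype.card ι := by exact_mod_cast hN0
  have hR1 : (1 : ℝ) ≤ R := by
    have : 1 ≤ R := by omega
    exact_mod_cast this
  rw [hRp]
  push_cast
  have hc : (Fintype.card ι : ℝ) ≤ Fintype.card ι * R := le_mul_of_one_le_right (by positivity) hR1
  have h6 : ((p - 1 : ℕ) : ℝ) * (E * R) = (R - 1) * R := by rw [← mul_assoc]; congr 1; linarith
  nlinarith

theorem kb_A_vanish {p : ℕ} [Fact p.Prime] (χ : MulChar (ZMod p) ℂ) (hχ : χ ≠ 1)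
    {ι : Type} [Fintype ι] [DecidableEq ι] (w : ι → ZMod p) (e : ι → ℕ) (i0 : ι)
    (hw0 : w i0 = 0) (he0 : e i0 = 1) (hw : ∀ i, i ≠ i0 → w i ≠ 0) (n : ℕ)
    (hn : Fintype.card ι ≤ n) :
    kbA (fun g : (ZMod p)[X] => χ (kbrho w e g)) n = 0 := by
  classical
  let b : (ZMod p)[X] := ∏ i ∈ univ.erase i0, (X - C (w i))
  have hm : ∀ i ∈ (univ.erase i0 : Finset ι), (X - C (w i)).Monic := fun i _ => monic_X_sub_C _
  have hbd : b.natDegree = Fintype.card ι - 1 := by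
    simp only [b]
    rw [natDegree_prod_of_monic _ _ hm]; simp
  have hcard : 0 < Fintype.card ι := Fintype.card_pos_iff.2 ⟨i0⟩
  have hb0 : b.eval 0 ≠ 0 := by
    simp only [b, eval_prod, Finset.prod_ne_zero_iff]
    intro i hi
    simpa using hw i (Finset.ne_of_mem_erase hi)
  have hbw : ∀ i, i ≠ i0 → b.eval (w i) = 0 := by
    intro i hi
    simp only [b, eval_prod]
    apply Finset.prod_eq_zero (i := i) (by simp [hi])
    simp
  have hshift : ∀ c : ZMod p, ∑ g ∈ kbM (ZMod p) n, χ (kbrho w e (g + C c * b))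
      = kbA (fun g : (ZMod p)[X] => χ (kbrho w e g)) n := by
    intro c
    have hmem : ∀ c : ZMod p, ∀ g ∈ kbM (ZMod p) n, g + C c * b ∈ kbM (ZMod p) n := by
      intro c g hg
      rw [kb_mem_M] at hg ⊢
      have hdeg : (C c * b).degree < g.degree := by
        rw [degree_eq_natDegree hg.1.ne_zero, hg.2]
        refine lt_of_le_of_lt degree_le_natDegree ?_
        have := natDegree_C_mul_le c b
        norm_cast
        omega
      refine ⟨hg.1.add_of_left hdeg, ?_⟩
      rw [natDegree_add_eq_left_of_degree_lt hdeg, hg.2]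
    rw [kbA]
    apply Finset.sum_bij' (fun g _ => g + C c * b) (fun g _ => g + C (-c) * b)
    · exact hmem c
    · exact hmem (-c)
    · intro g _; simp
    · intro g _; simp
    · intro g _; rfl
  have hsum : ∑ c : ZMod p, ∑ g ∈ kbM (ZMod p) n, χ (kbrho w e (g + C c * b)) = 0 := by
    rw [Finset.sum_comm]
    apply Finset.sum_eq_zero
    intro g _
    have h1 : ∀ c : ZMod p, kbrho w e (g + C c * b)
        = (g.eval 0 + c * b.eval 0) * ∏ i ∈ univ.erase i0, (g.eval (w i)) ^ e i := by
      intro c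
      rw [kbrho, ← Finset.mul_prod_erase _ _ (mem_univ i0), he0, hw0]
      congr 1
      · simp
      · apply Finset.prod_congr rfl
        intro i hi
        simp [hbw i (Finset.ne_of_mem_erase hi)]
    simp only [h1, map_mul]
    rw [← Finset.sum_mul]
    have h2 : ∑ c : ZMod p, χ (g.eval 0 + c * b.eval 0) = ∑ c, χ c := by
      apply Fintype.sum_equiv ((Equiv.mulRight₀ _ hb0).trans (Equiv.addLeft (g.eval 0)))
      intro c; simp
    rw [h2, MulChar.sum_eq_zero_of_ne_one hχ, zero_mul]
  simp only [hshift] at hsum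
  rw [Finset.sum_const, card_univ, ZMod.card, nsmul_eq_mul] at hsum
  rcases mul_eq_zero.1 hsum with h | h
  · exfalso
    have := (Fact.out : p.Prime).ne_zero
    exact this (by exact_mod_cast h)
  · exact h

theorem kb_weil0 {p : ℕ} [Fact p.Prime] (χ : MulChar (ZMod p) ℂ) (hχ : χ ≠ 1)
    {ι : Type} [Fintype ι] [DecidableEq ι] (w : ι → ZMod p) (e : ι → ℕ) (i0 : ι)
    (hw0 : w i0 = 0) (he0 : e i0 = 1) (hw : ∀ i, i ≠ i0 → w i ≠ 0) :
    ‖∑ x : ZMod p, ∏ i, χ (x + w i) ^ e i‖ ≤ Fintype.card ι * Real.sqrt p := by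
  classical
  obtain ⟨C0, k0, hL⟩ := kb_L_bound χ hχ w e i0 hw0 he0 hw
  have hmul : ∀ f g : (ZMod p)[X], χ (kbrho w e (f * g)) = χ (kbrho w e f) * χ (kbrho w e g) := by
    intro f g
    rw [← map_mul]; congr 1
    simp [kbrho, mul_pow, Finset.prod_mul_distrib]
  have h1 : χ (kbrho w e 1) = 1 := by simp [kbrho]
  have hA0 : kbA (fun g : (ZMod p)[X] => χ (kbrho w e g)) 0 = 1 := by
    have : kbM (ZMod p) 0 = {1} := by
      ext g; rw [kb_mem_M, mem_singleton]
      constructor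
      · rintro ⟨a, b⟩; exact a.natDegree_eq_zero.1 b
      · rintro rfl; simp
    rw [kbA, this, Finset.sum_singleton, h1]
  have key := kb_analytic (Fintype.card ι) (kbA (fun g : (ZMod p)[X] => χ (kbrho w e g)))
    (kbL (fun g : (ZMod p)[X] => χ (kbrho w e g))) hA0
    (fun n hn => kb_A_vanish χ hχ w e i0 hw0 he0 hw n hn)
    (kb_newton_poly _ hmul h1) p C0 (by exact_mod_cast (Fact.out : p.Prime).pos) k0 hL
  have hA1 : kbA (fun g : (ZMod p)[X] => χ (kbrho w e g)) 1 = ∑ x : ZMod p, ∏ i, χ (x + w i) ^ e i := by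
    rw [kbA]
    symm
    apply Finset.sum_bij (fun (x : ZMod p) _ => X + C x)
    · intro x _; rw [kb_mem_M]; exact ⟨monic_X_add_C x, natDegree_X_add_C x⟩
    · intro a _ b _ hab; simpa using hab
    · intro g hg
      rw [kb_mem_M] at hg
      exact ⟨g.coeff 0, mem_univ _, (hg.1.eq_X_add_C hg.2).symm⟩
    · intro x _
      simp [kbrho, map_prod, add_comm]
  rwa [hA1] at key

theorem kb_weil {p : ℕ} [Fact p.Prime] (χ : MulChar (ZMod p) ℂ) (hχ : χ ≠ 1)
    {ι : Type} [Fintype ι] [DecidableEq ι] (w : ι → ZMod p) (e : ι → ℕ) (i0 : ι)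
    (he0 : e i0 = 1) (hw : ∀ i, i ≠ i0 → w i ≠ w i0) :
    ‖∑ x : ZMod p, ∏ i, χ (x + w i) ^ e i‖ ≤ Fintype.card ι * Real.sqrt p := by
  have h := kb_weil0 χ hχ (fun i => w i - w i0) e i0 (by simp) he0
    (fun i hi => sub_ne_zero.2 (hw i hi))
  have h2 : ∑ x : ZMod p, ∏ i, χ (x + w i) ^ e i
      = ∑ x : ZMod p, ∏ i, χ (x + (w i - w i0)) ^ e i := by
    apply Fintype.sum_equiv (Equiv.addRight (w i0))
    intro x
    apply Finset.prod_congr rfl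
    intro i _
    congr 2
    simp
  rwa [h2]
end kbB3


theorem kb_inv_pow {p : ℕ} [Fact p.Prime] (hp : 3 ≤ p) (χ : MulChar (ZMod p) ℂ) (y : ZMod p) :
    χ⁻¹ y = χ y ^ (p - 2) := by
  rw [MulChar.inv_apply', ← map_pow]
  congr 1
  by_cases hy : y = 0
  · subst hy; rw [inv_zero, zero_pow (by omega)]
  · apply inv_eq_of_mul_eq_one_right
    rw [← pow_succ', show p - 2 + 1 = p - 1 by omega]
    exact ZMod.pow_card_sub_one_eq_one hy

theorem kb_tuple_bound {p : ℕ} [Fact p.Prime] (χ : MulChar (ZMod p) ℂ) (hχ : χ ≠ 1) (r : ℕ)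
    (w : Fin r ⊕ Fin r → ZMod p) (i0 : Fin r ⊕ Fin r) (hw : ∀ i, i ≠ i0 → w i ≠ w i0) :
    ‖∑ x : ZMod p, ∏ i, (Sum.elim (fun _ => χ) (fun _ => χ⁻¹) i : MulChar (ZMod p) ℂ) (x + w i)‖
      ≤ 2 * r * Real.sqrt p := by
  have hp3 := kb_p_ge χ hχ
  have hcard : (Fintype.card (Fin r ⊕ Fin r) : ℝ) = 2 * r := by
    simp; ring
  rw [← hcard]
  rcases i0 with i0 | i0
  · have := kb_weil χ hχ w (Sum.elim (fun _ => 1) (fun _ => p - 2)) (Sum.inl i0) (by simp) hw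
    refine le_trans (le_of_eq ?_) this
    congr 1
    apply Finset.sum_congr rfl
    intro x _
    apply Finset.prod_congr rfl
    rintro (i | i) _
    · simp
    · simp only [Sum.elim_inr]; rw [kb_inv_pow hp3]
  · have := kb_weil χ⁻¹ (inv_ne_one.2 hχ) w (Sum.elim (fun _ => p - 2) (fun _ => 1)) (Sum.inr i0) (by simp) hw
    refine le_trans (le_of_eq ?_) this
    congr 1
    apply Finset.sum_congr rfl
    intro x _
    apply Finset.prod_congr rfl
    rintro (i | i) _
    · simp only [Sum.elim_inl]; rw [← kb_inv_pow hp3, inv_inv]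
    · simp

theorem kb_count_tuples {F : Type} [DecidableEq F] (r : ℕ) (hr : 0 < r) (N : Finset F)  :
    ((Fintype.piFinset (fun _ : Fin r ⊕ Fin r => N)).filter
      (fun w => ∀ i, ∃ j, j ≠ i ∧ w j = w i)).card ≤ r ^ (2 * r) * N.card ^ r := by
  classical
  have hsub : (Fintype.piFinset (fun _ : Fin r ⊕ Fin r => N)).filter
      (fun w => ∀ i, ∃ j, j ≠ i ∧ w j = w i) ⊆
      ((univ : Finset (Fin r ⊕ Fin r → Fin r)) ×ˢ (Fintype.piFinset (fun _ : Fin r => N))).image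
        (fun x => x.2 ∘ x.1) := by
    intro w hw
    simp only [mem_filter, Fintype.mem_piFinset] at hw
    obtain ⟨hwN, hw2⟩ := hw
    have hcard : 2 * (univ.image w).card ≤ (univ : Finset (Fin r ⊕ Fin r)).card := by
      apply Finset.mul_card_image_le_card
      intro a ha
      simp only [mem_image, mem_univ, true_and] at ha
      obtain ⟨i, rfl⟩ := ha
      obtain ⟨j, hj, hji⟩ := hw2 i
      have : ({i, j} : Finset _) ⊆ univ.filter (fun x => w x = w i) := by
        intro x hx; simp at hx; rcases hx with rfl | rfl <;> simp [hji]
      calc 2 = ({i, j} : Finset (Fin r ⊕ Fin r)).card := by rw [Finset.card_pair hj.symm]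
        _ ≤ _ := Finset.card_le_card this
    have hle : Fintype.card (univ.image w) ≤ Fintype.card (Fin r) := by
      simp at hcard ⊢; omega
    obtain ⟨emb⟩ := Function.Embedding.nonempty_of_card_le hle
    haveI : Nonempty (univ.image w) := ⟨⟨w (Sum.inl ⟨0, hr⟩), by simp⟩⟩
    rw [mem_image]
    refine ⟨(fun i => emb ⟨w i, by simp⟩, fun j => (Function.invFun emb j : univ.image w).1), ?_, ?_⟩
    · simp only [mem_product, mem_univ, true_and, Fintype.mem_piFinset]
      intro j
      have := (Function.invFun emb j : univ.image w).2
      simp only [mem_image, mem_univ, true_and] at this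
      obtain ⟨i, hi⟩ := this
      rw [← hi]; exact hwN i
    · funext i
      simp only [Function.comp]
      rw [Function.leftInverse_invFun emb.injective]
  refine (Finset.card_le_card hsub).trans (Finset.card_image_le.trans ?_)
  rw [Finset.card_product, Fintype.card_piFinset]
  simp [two_mul]

theorem kb_moment {p : ℕ} [Fact p.Prime] (χ : MulChar (ZMod p) ℂ) (hχ : χ ≠ 1) (r : ℕ) (hr : 0 < r)
    (N : Finset (ZMod p)) (β : ZMod p → ℂ) (B : ℝ) (hB : 0 ≤ B) (hβ : ∀ n ∈ N, ‖β n‖ ≤ B) :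
    ∑ x : ZMod p, ‖∑ n ∈ N, β n * χ (x + n)‖ ^ (2 * r) ≤
      B ^ (2 * r) * ((N.card : ℝ) ^ (2 * r) * (2 * r * Real.sqrt p)
        + (r ^ (2 * r) * (N.card : ℝ) ^ r) * p) := by
  classical
  let ψ : Fin r ⊕ Fin r → MulChar (ZMod p) ℂ := Sum.elim (fun _ => χ) (fun _ => χ⁻¹)
  let b : Fin r ⊕ Fin r → ZMod p → ℂ := Sum.elim (fun _ n => β n) (fun _ n => star (β n))
  have hexp : ∀ x : ZMod p, ((‖∑ n ∈ N, β n * χ (x + n)‖ ^ (2 * r) : ℝ) : ℂ)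
      = ∑ w ∈ Fintype.piFinset (fun _ : Fin r ⊕ Fin r => N),
        (∏ i, b i (w i)) * ∏ i, ψ i (x + w i) := by
    intro x
    simp_rw [← Finset.prod_mul_distrib]
    rw [← Finset.prod_univ_sum (fun _ : Fin r ⊕ Fin r => N) (fun i n => b i n * ψ i (x + n))]
    rw [Fintype.prod_sum_type]
    simp only [b, ψ, Sum.elim_inl, Sum.elim_inr]
    have hstar : ∑ n ∈ N, star (β n) * χ⁻¹ (x + n) = star (∑ n ∈ N, β n * χ (x + n)) := by
      rw [star_sum]
      apply Finset.sum_congr rfl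
      intro n _
      rw [star_mul', MulChar.star_apply']
    rw [hstar, Finset.prod_const, Finset.prod_const, ← mul_pow, card_univ, Fintype.card_fin]
    rw [Complex.star_def, Complex.mul_conj, Complex.normSq_eq_norm_sq, pow_mul]
    push_cast; rfl
  have hsum : ((∑ x : ZMod p, ‖∑ n ∈ N, β n * χ (x + n)‖ ^ (2 * r) : ℝ) : ℂ)
      = ∑ w ∈ Fintype.piFinset (fun _ : Fin r ⊕ Fin r => N),
        (∏ i, b i (w i)) * ∑ x, ∏ i, ψ i (x + w i) := by
    rw [Complex.ofReal_sum, Finset.sum_congr rfl (fun x _ => hexp x), Finset.sum_comm]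
    simp_rw [Finset.mul_sum]
  have hnn : 0 ≤ ∑ x : ZMod p, ‖∑ n ∈ N, β n * χ (x + n)‖ ^ (2 * r) := by positivity
  have hnorm := congrArg norm hsum
  rw [Complex.norm_real, Real.norm_of_nonneg hnn] at hnorm
  rw [hnorm]
  have hb : ∀ w ∈ Fintype.piFinset (fun _ : Fin r ⊕ Fin r => N), ‖∏ i, b i (w i)‖ ≤ B ^ (2 * r) := by
    intro w hw
    rw [Fintype.mem_piFinset] at hw
    rw [norm_prod]
    calc ∏ i, ‖b i (w i)‖ ≤ ∏ i : Fin r ⊕ Fin r, B := by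
          apply Finset.prod_le_prod (fun i _ => norm_nonneg _)
          rintro (i | i) _
          · simpa [b] using hβ _ (hw _)
          · simpa [b] using hβ _ (hw _)
      _ = B ^ (2 * r) := by simp [two_mul]
  have htriv : ∀ w : Fin r ⊕ Fin r → ZMod p, ‖∑ x, ∏ i, ψ i (x + w i)‖ ≤ p := by
    intro w
    refine (norm_sum_le _ _).trans ?_
    calc ∑ x, ‖∏ i, ψ i (x + w i)‖ ≤ ∑ x : ZMod p, (1 : ℝ) := by
          apply Finset.sum_le_sum
          intro x _
          rw [norm_prod]
          exact Finset.prod_le_one (fun i _ => norm_nonneg _)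
            (fun i _ => DirichletCharacter.norm_le_one (ψ i) _)
      _ = p := by simp [ZMod.card]
  have hB2 : 0 ≤ B ^ (2 * r) := by positivity
  refine (norm_sum_le _ _).trans ?_
  have hstep : ∀ w ∈ Fintype.piFinset (fun _ : Fin r ⊕ Fin r => N),
      ‖(∏ i, b i (w i)) * ∑ x, ∏ i, ψ i (x + w i)‖ ≤
      B ^ (2 * r) * (2 * r * Real.sqrt p + if (∀ i, ∃ j, j ≠ i ∧ w j = w i) then (p : ℝ) else 0) := by
    intro w hw
    rw [norm_mul]
    apply mul_le_mul (hb w hw) _ (norm_nonneg _) hB2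
    split_ifs with h
    · have := htriv w
      have : 0 ≤ 2 * r * Real.sqrt p := by positivity
      linarith [htriv w]
    · push Not at h
      obtain ⟨i0, hi0⟩ := h
      rw [add_zero]
      exact kb_tuple_bound χ hχ r w i0 hi0
  refine (Finset.sum_le_sum hstep).trans ?_
  rw [← Finset.mul_sum, Finset.sum_add_distrib, Finset.sum_const, ← Finset.sum_filter,
    Finset.sum_const, nsmul_eq_mul, nsmul_eq_mul]
  apply mul_le_mul_of_nonneg_left _ hB2
  apply add_le_add
  · rw [Fintype.card_piFinset]; simp [two_mul]
  · apply mul_le_mul_of_nonneg_right _ (by positivity)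
    exact_mod_cast kb_count_tuples r hr N

/-- Theorem A.1 (Karatsuba bound for double character sums, explicit form). -/
theorem karatsuba_bilinear (r : ℕ) (hr : 0 < r) :
    ∃ C : ℝ, 0 < C ∧ ∀ (p : ℕ), p.Prime →
      ∀ (χ : MulChar (ZMod p) ℂ), χ ≠ 1 →
      ∀ (ℳ 𝒩 : Finset (ZMod p)) (α β : ZMod p → ℂ) (Bβ : ℝ), 0 ≤ Bβ →
        (∀ n ∈ 𝒩, ‖β n‖ ≤ Bβ) →
      ‖∑ m ∈ ℳ, ∑ n ∈ 𝒩, α m * β n * χ (m + n)‖ ≤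
        C * (∑ m ∈ ℳ, ‖α m‖) ^ (1 - 1 / (r : ℝ) : ℝ) *
          ((∑ m ∈ ℳ, ‖α m‖ ^ 2) ^ ((1 : ℝ) / 2)) ^ ((1 : ℝ) / (r : ℝ)) * Bβ *
          ((𝒩.card : ℝ) * (p : ℝ) ^ ((1 : ℝ) / (4 * (r : ℝ))) +
            (𝒩.card : ℝ) ^ ((1 : ℝ) / 2) * (p : ℝ) ^ ((1 : ℝ) / (2 * (r : ℝ)))) := by
  have hr1 : (1 : ℝ) ≤ r := by exact_mod_cast hr
  have hr0 : (0 : ℝ) < r := by linarith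
  set K : ℝ := 2 * r + r ^ (2 * r) with hK
  have hK2 : (0 : ℝ) ≤ (r : ℝ) ^ (2 * r) := by positivity
  have hK1 : 1 ≤ K := by linarith
  refine ⟨K, by linarith, ?_⟩
  intro p hp χ hχ M N α β B hB hβ
  haveI : Fact p.Prime := ⟨hp⟩
  have hmom := kb_moment χ hχ r hr N β B hB hβ
  set T : ZMod p → ℝ := fun x => ‖∑ n ∈ N, β n * χ (x + n)‖ with hT
  have hT0 : ∀ x, 0 ≤ T x := fun x => norm_nonneg _
  set X : ℝ := (N.card : ℝ) * (p : ℝ) ^ ((1 : ℝ) / (4 * (r : ℝ))) with hX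
  set Y : ℝ := (N.card : ℝ) ^ ((1 : ℝ) / 2) * (p : ℝ) ^ ((1 : ℝ) / (2 * (r : ℝ))) with hY
  have hX0 : 0 ≤ X := by positivity
  have hY0 : 0 ≤ Y := by positivity
  have hp0 : (0 : ℝ) ≤ p := by positivity
  have hX2 : X ^ (2 * r) = (N.card : ℝ) ^ (2 * r) * Real.sqrt p := by
    rw [hX, mul_pow]
    congr 1
    rw [← Real.rpow_natCast, ← Real.rpow_mul hp0, Real.sqrt_eq_rpow]
    congr 1
    push_cast; field_simp; norm_num
  have hY2 : Y ^ (2 * r) = (N.card : ℝ) ^ r * p := by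
    rw [hY, mul_pow]
    congr 1
    · rw [pow_mul, ← Real.sqrt_eq_rpow, Real.sq_sqrt (by positivity)]
    · rw [← Real.rpow_natCast, ← Real.rpow_mul hp0]
      conv_rhs => rw [← Real.rpow_one (p : ℝ)]
      congr 1
      push_cast; field_simp
  set Z : ℝ := K * B * (X + Y) with hZ
  have hZ0 : 0 ≤ Z := by positivity
  have hmomZ : ∑ m ∈ M, T m ^ (2 * r) ≤ Z ^ (2 * r) := by
    have h1 : ∑ m ∈ M, T m ^ (2 * r) ≤ ∑ x, T x ^ (2 * r) :=
      Finset.sum_le_sum_of_subset_of_nonneg (Finset.subset_univ _) (fun i _ _ => pow_nonneg (hT0 i) _)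
    refine h1.trans (hmom.trans ?_)
    have h2 : (N.card : ℝ) ^ (2 * r) * (2 * r * Real.sqrt p)
        + (r ^ (2 * r) * (N.card : ℝ) ^ r) * p = 2 * r * X ^ (2 * r) + r ^ (2 * r) * Y ^ (2 * r) := by
      rw [hX2, hY2]; ring
    rw [h2]
    have hXp : 0 ≤ X ^ (2 * r) := by positivity
    have hYp : 0 ≤ Y ^ (2 * r) := by positivity
    have h3 : X ^ (2 * r) + Y ^ (2 * r) ≤ (X + Y) ^ (2 * r) :=
      pow_add_pow_le hX0 hY0 (by omega)
    have h4 : K ≤ K ^ (2 * r) := le_self_pow₀ hK1 (by omega)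
    have h5 : 2 * r * X ^ (2 * r) + r ^ (2 * r) * Y ^ (2 * r) ≤ K ^ (2 * r) * (X + Y) ^ (2 * r) := by
      calc 2 * r * X ^ (2 * r) + r ^ (2 * r) * Y ^ (2 * r) ≤ K * (X ^ (2 * r) + Y ^ (2 * r)) := by
            rw [hK]; nlinarith
        _ ≤ _ := mul_le_mul h4 h3 (by positivity) (by positivity)
    calc B ^ (2 * r) * (2 * r * X ^ (2 * r) + r ^ (2 * r) * Y ^ (2 * r))
        ≤ B ^ (2 * r) * (K ^ (2 * r) * (X + Y) ^ (2 * r)) :=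
          mul_le_mul_of_nonneg_left h5 (by positivity)
      _ = Z ^ (2 * r) := by rw [hZ, mul_pow, mul_pow]; ring
  -- first step
  have hS1 : ‖∑ m ∈ M, ∑ n ∈ N, α m * β n * χ (m + n)‖ ≤ ∑ m ∈ M, ‖α m‖ * T m := by
    refine (norm_sum_le _ _).trans (Finset.sum_le_sum fun m _ => ?_)
    simp only [mul_assoc, ← Finset.mul_sum]
    rw [norm_mul]
  have hS2 := Real.inner_le_weight_mul_Lp_of_nonneg M hr1 (fun m => ‖α m‖) T
    (fun m => norm_nonneg _) hT0
  have hS3 : ∑ m ∈ M, ‖α m‖ * T m ^ (r : ℝ) ≤ (∑ m ∈ M, ‖α m‖ ^ 2) ^ ((1 : ℝ) / 2) * Z ^ r := by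
    have h1 := Real.sum_mul_le_sqrt_mul_sqrt M (fun m => ‖α m‖) (fun m => T m ^ r)
    simp only [Real.rpow_natCast]
    refine h1.trans ?_
    rw [Real.sqrt_eq_rpow]
    apply mul_le_mul_of_nonneg_left _ (by positivity)
    apply Real.sqrt_le_iff.2
    refine ⟨by positivity, ?_⟩
    simp only [← pow_mul]
    rw [mul_comm r 2]
    exact hmomZ
  have hA2 : 0 ≤ (∑ m ∈ M, ‖α m‖ ^ 2) ^ ((1 : ℝ) / 2) := by positivity
  have hS4 : (∑ m ∈ M, ‖α m‖ * T m ^ (r : ℝ)) ^ (r : ℝ)⁻¹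
      ≤ ((∑ m ∈ M, ‖α m‖ ^ 2) ^ ((1 : ℝ) / 2)) ^ ((1 : ℝ) / (r : ℝ)) * Z := by
    have h1 := Real.rpow_le_rpow (z := (r : ℝ)⁻¹)
      (Finset.sum_nonneg fun m _ => mul_nonneg (norm_nonneg _) (Real.rpow_nonneg (hT0 m) _)) hS3
      (by positivity)
    refine h1.trans (le_of_eq ?_)
    rw [Real.mul_rpow hA2 (by positivity), Real.pow_rpow_inv_natCast hZ0 (by omega), one_div, one_div]
  refine hS1.trans (hS2.trans ?_)
  rw [one_div (r : ℝ)] at *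
  calc (∑ m ∈ M, ‖α m‖) ^ (1 - (r : ℝ)⁻¹) * (∑ m ∈ M, ‖α m‖ * T m ^ (r : ℝ)) ^ (r : ℝ)⁻¹
      ≤ (∑ m ∈ M, ‖α m‖) ^ (1 - (r : ℝ)⁻¹) *
        (((∑ m ∈ M, ‖α m‖ ^ 2) ^ ((1 : ℝ) / 2)) ^ (r : ℝ)⁻¹ * Z) :=
        mul_le_mul_of_nonneg_left hS4 (by positivity)
    _ = _ := by rw [hZ]; ring
end
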